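/- Let G be a graph in the class 𝒞, let C be a minimal separator of G of size at least 2 that is an independent set, and let A and B be components of G∖C that are full to C. Then there exist two vertices x, y in C and chordless paths P_A from x to y with interior in A and P_B from x to y with interior in B such that every vertex of C∖{x,y} has neighbors in the interior of both P_A and P_B, V(P_A) ∪ V(P_B) induces a hole H, and (H, C∖{x,y}) is a (|C|−2)-span-wheel. -/

import Mathlib

open SimpleGraph

variable {V : Type} [Fintype V] [DecidableEq V]

/-- `p` is a chordless (induced) path in `G`: a path such that the only edges of `G`
between its vertices are the edges of the path. -/
def IsInducedPathW (G : SimpleGraph V) {a b : V} (p : G.Walk a b) : Prop :=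
  p.IsPath ∧ ∀ u v : V, u ∈ p.support → v ∈ p.support → G.Adj u v → p.toSubgraph.Adj u v

/-- A hole of length `n` in `G`: an induced (chordless) cycle of length `n ≥ 4`,
given by an injection of `ZMod n` into `G` whose adjacencies are exactly the consecutive ones. -/
def IsHoleEmb (G : SimpleGraph V) (n : ℕ) (f : ZMod n → V) : Prop :=
  4 ≤ n ∧ Function.Injective f ∧
    ∀ i j : ZMod n, G.Adj (f i) (f j) ↔ (j = i + 1 ∨ i = j + 1)

/-- `G` contains an even hole (induced even cycle of length at least 4). -/
def ContainsEvenHole (G : SimpleGraph V) : Prop :=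
  ∃ (n : ℕ) (f : ZMod n → V), IsHoleEmb G n f ∧ Even n

/-- `G` contains a square (hole of length 4). -/
def ContainsSquare (G : SimpleGraph V) : Prop :=
  ∃ f : ZMod 4 → V, IsHoleEmb G 4 f

/-- `G` contains a theta as an induced subgraph: three internally vertex-disjoint chordless
paths from `a` to `b`, each of length at least 2, with no edges between the paths other than
those incident to `a` or `b` specified by the paths. -/
def ContainsTheta (G : SimpleGraph V) : Prop :=
  ∃ (a b : V) (p₁ p₂ p₃ : G.Walk a b),
    (IsInducedPathW G p₁ ∧ IsInducedPathW G p₂ ∧ IsInducedPathW G p₃) ∧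
    (2 ≤ p₁.length ∧ 2 ≤ p₂.length ∧ 2 ≤ p₃.length) ∧
    (∀ w : V, ((w ∈ p₁.support ∧ w ∈ p₂.support) ∨ (w ∈ p₁.support ∧ w ∈ p₃.support) ∨
          (w ∈ p₂.support ∧ w ∈ p₃.support)) → (w = a ∨ w = b)) ∧
    (∀ u w : V, u ≠ a → u ≠ b → w ≠ a → w ≠ b →
      ((u ∈ p₁.support ∧ w ∈ p₂.support) ∨ (u ∈ p₁.support ∧ w ∈ p₃.support) ∨
       (u ∈ p₂.support ∧ w ∈ p₃.support)) → ¬G.Adj u w)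

/-- `G` contains a prism as an induced subgraph. -/
def ContainsPrism (G : SimpleGraph V) : Prop :=
  ∃ (a₁ b₁ a₂ b₂ a₃ b₃ : V) (p₁ : G.Walk a₁ b₁) (p₂ : G.Walk a₂ b₂) (p₃ : G.Walk a₃ b₃),
    (IsInducedPathW G p₁ ∧ IsInducedPathW G p₂ ∧ IsInducedPathW G p₃) ∧
    (1 ≤ p₁.length ∧ 1 ≤ p₂.length ∧ 1 ≤ p₃.length) ∧
    (G.Adj a₁ a₂ ∧ G.Adj a₂ a₃ ∧ G.Adj a₁ a₃) ∧
    (G.Adj b₁ b₂ ∧ G.Adj b₂ b₃ ∧ G.Adj b₁ b₃) ∧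
    (∀ w : V, ¬(w ∈ p₁.support ∧ w ∈ p₂.support) ∧ ¬(w ∈ p₁.support ∧ w ∈ p₃.support) ∧
          ¬(w ∈ p₂.support ∧ w ∈ p₃.support)) ∧
    (∀ u w : V, u ∈ p₁.support → w ∈ p₂.support → G.Adj u w →
      (u = a₁ ∧ w = a₂) ∨ (u = b₁ ∧ w = b₂)) ∧
    (∀ u w : V, u ∈ p₁.support → w ∈ p₃.support → G.Adj u w →
      (u = a₁ ∧ w = a₃) ∨ (u = b₁ ∧ w = b₃)) ∧
    (∀ u w : V, u ∈ p₂.support → w ∈ p₃.support → G.Adj u w →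
      (u = a₂ ∧ w = a₃) ∨ (u = b₂ ∧ w = b₃))

/-- `G` contains a pyramid as an induced subgraph. -/
def ContainsPyramid (G : SimpleGraph V) : Prop :=
  ∃ (a b₁ b₂ b₃ : V) (p₁ : G.Walk a b₁) (p₂ : G.Walk a b₂) (p₃ : G.Walk a b₃),
    (IsInducedPathW G p₁ ∧ IsInducedPathW G p₂ ∧ IsInducedPathW G p₃) ∧
    (1 ≤ p₁.length ∧ 1 ≤ p₂.length ∧ 1 ≤ p₃.length) ∧
    ((2 ≤ p₁.length ∧ 2 ≤ p₂.length) ∨ (2 ≤ p₁.length ∧ 2 ≤ p₃.length) ∨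
     (2 ≤ p₂.length ∧ 2 ≤ p₃.length)) ∧
    (G.Adj b₁ b₂ ∧ G.Adj b₂ b₃ ∧ G.Adj b₁ b₃) ∧
    (∀ w : V, ((w ∈ p₁.support ∧ w ∈ p₂.support) ∨ (w ∈ p₁.support ∧ w ∈ p₃.support) ∨
          (w ∈ p₂.support ∧ w ∈ p₃.support)) → w = a) ∧
    (∀ u w : V, u ∈ p₁.support → w ∈ p₂.support → u ≠ a → w ≠ a → G.Adj u w →
      u = b₁ ∧ w = b₂) ∧
    (∀ u w : V, u ∈ p₁.support → w ∈ p₃.support → u ≠ a → w ≠ a → G.Adj u w →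
      u = b₁ ∧ w = b₃) ∧
    (∀ u w : V, u ∈ p₂.support → w ∈ p₃.support → u ≠ a → w ≠ a → G.Adj u w →
      u = b₂ ∧ w = b₃)

/-- `G` contains the cube as an induced subgraph: a hole of length 6 together with
two non-adjacent vertices `u, v` outside it, `u` adjacent to the even positions and
`v` adjacent to the odd positions. -/
def ContainsCube (G : SimpleGraph V) : Prop :=
  ∃ (f : ZMod 6 → V) (u v : V), IsHoleEmb G 6 f ∧
    u ∉ Set.range f ∧ v ∉ Set.range f ∧ ¬G.Adj u v ∧
    (∀ m : ZMod 6, G.Adj u (f m) ↔ (m = 0 ∨ m = 2 ∨ m = 4)) ∧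
    (∀ m : ZMod 6, G.Adj v (f m) ↔ (m = 1 ∨ m = 3 ∨ m = 5))

/-- `G` contains an even wheel: a hole plus a vertex outside it having at least 3 and
an even number of neighbors on the hole. -/
def ContainsEvenWheel (G : SimpleGraph V) : Prop :=
  ∃ (n : ℕ) (f : ZMod n → V) (u : V), IsHoleEmb G n f ∧ u ∉ Set.range f ∧
    3 ≤ {m : ZMod n | G.Adj u (f m)}.ncard ∧ Even {m : ZMod n | G.Adj u (f m)}.ncard

/-- `G` contains a butterfly: a wheel `(H,v)` with `N_H(v) = {a,b,c,d}`,
`ab, cd ∈ E(G)` and `bc, da ∉ E(G)`. -/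
def ContainsButterfly (G : SimpleGraph V) : Prop :=
  ∃ (n : ℕ) (f : ZMod n → V) (u : V), IsHoleEmb G n f ∧ u ∉ Set.range f ∧
    ∃ i j : ZMod n, i ≠ j ∧ i ≠ j + 1 ∧ i + 1 ≠ j ∧ i + 1 ≠ j + 1 ∧
      ¬G.Adj (f (i + 1)) (f j) ∧ ¬G.Adj (f (j + 1)) (f i) ∧
      (∀ m : ZMod n, G.Adj u (f m) ↔ (m = i ∨ m = i + 1 ∨ m = j ∨ m = j + 1))

/-- A 2-wheel in `G`: a hole `f` together with two distinct centers `u, v` outside the hole,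
each having at least three neighbors on the hole. -/
def Is2WheelCfg (G : SimpleGraph V) (n : ℕ) (f : ZMod n → V) (u v : V) : Prop :=
  IsHoleEmb G n f ∧ u ≠ v ∧ u ∉ Set.range f ∧ v ∉ Set.range f ∧
  3 ≤ {m : ZMod n | G.Adj u (f m)}.ncard ∧ 3 ≤ {m : ZMod n | G.Adj v (f m)}.ncard

/-- The 2-wheel `(f, {u,v})` is nested: the hole splits at `f i` and `f (i+d)` into two arcs,
with all neighbors of `u` on one arc and all neighbors of `v` on the other. -/
def NestedCfg (G : SimpleGraph V) (n : ℕ) (f : ZMod n → V) (u v : V) : Prop :=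
  ∃ (i : ZMod n) (d : ℕ), 1 ≤ d ∧ d < n ∧
    (∀ m : ZMod n, G.Adj u (f m) → ∃ e : ℕ, e ≤ d ∧ m = i + (e : ZMod n)) ∧
    (∀ m : ZMod n, G.Adj v (f m) → ∃ e : ℕ, e ≤ n - d ∧ m = i + (d : ZMod n) + (e : ZMod n))

/-- The 2-wheel `(f, {u,v})` is the cube. -/
def CubeCfg (G : SimpleGraph V) (n : ℕ) (f : ZMod n → V) (u v : V) : Prop :=
  n = 6 ∧ ∃ i : ZMod n,
    (∀ m : ZMod n, G.Adj u (f m) ↔ (m = i ∨ m = i + 2 ∨ m = i + 4)) ∧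
    (∀ m : ZMod n, G.Adj v (f m) ↔ (m = i + 1 ∨ m = i + 3 ∨ m = i + 5))

/-- The 2-wheel `(f, {u,v})` is a cousin wheel: `N_H(u) = {h₁,h₂,h₃}` and
`N_H(v) = {h₂,h₃,h₄}` for four consecutive vertices of the hole (or with `u, v` swapped). -/
def CousinCfg (G : SimpleGraph V) (n : ℕ) (f : ZMod n → V) (u v : V) : Prop :=
  (∃ i : ZMod n,
    (∀ m : ZMod n, G.Adj u (f m) ↔ (m = i ∨ m = i + 1 ∨ m = i + 2)) ∧
    (∀ m : ZMod n, G.Adj v (f m) ↔ (m = i + 1 ∨ m = i + 2 ∨ m = i + 3))) ∨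
  (∃ i : ZMod n,
    (∀ m : ZMod n, G.Adj v (f m) ↔ (m = i ∨ m = i + 1 ∨ m = i + 2)) ∧
    (∀ m : ZMod n, G.Adj u (f m) ↔ (m = i + 1 ∨ m = i + 2 ∨ m = i + 3)))

/-- A `u`-sector of the hole `f`: a subpath from `f i` to `f (i+d)` (`1 ≤ d < n`)
whose two ends are adjacent to `u` and whose internal vertices are not. -/
def IsSector (G : SimpleGraph V) (n : ℕ) (f : ZMod n → V) (u : V) (i : ZMod n) (d : ℕ) : Prop :=
  1 ≤ d ∧ d < n ∧ G.Adj u (f i) ∧ G.Adj u (f (i + (d : ZMod n))) ∧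
    ∀ m : ℕ, 0 < m → m < d → ¬G.Adj u (f (i + (m : ZMod n)))

/-- The class 𝒞: (theta, prism, pyramid, butterfly)-free graphs in which every 2-wheel
with non-adjacent centers is a nested wheel or a cousin wheel. -/
def InClassC (G : SimpleGraph V) : Prop :=
  ¬ContainsTheta G ∧ ¬ContainsPrism G ∧ ¬ContainsPyramid G ∧ ¬ContainsButterfly G ∧
  ∀ (n : ℕ) (f : ZMod n → V) (u v : V), Is2WheelCfg G n f u v → ¬G.Adj u v →
    (NestedCfg G n f u v ∨ CousinCfg G n f u v)

/-- `G` contains `S_{k,k,k}` as an induced subgraph: a root `r` and three legs of `k` edges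
each, with no other adjacencies among these vertices. -/
def ContainsSpider (G : SimpleGraph V) (k : ℕ) : Prop :=
  ∃ (r : V) (f : Fin 3 → Fin k → V),
    (∀ (j : Fin 3) (m : Fin k), f j m ≠ r) ∧
    (∀ (j₁ : Fin 3) (m₁ : Fin k) (j₂ : Fin 3) (m₂ : Fin k),
      f j₁ m₁ = f j₂ m₂ → j₁ = j₂ ∧ m₁ = m₂) ∧
    (∀ (j : Fin 3) (m : Fin k), G.Adj r (f j m) ↔ (m : ℕ) = 0) ∧
    (∀ (j₁ : Fin 3) (m₁ : Fin k) (j₂ : Fin 3) (m₂ : Fin k),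
      G.Adj (f j₁ m₁) (f j₂ m₂) ↔
        (j₁ = j₂ ∧ ((m₁ : ℕ) + 1 = (m₂ : ℕ) ∨ (m₂ : ℕ) + 1 = (m₁ : ℕ))))

/-- A `k`-span-wheel in `G`: a hole `f` of length `n`, with `x = f 0` and `y = f p`
non-adjacent, the two paths `P_A = f 0, f 1, …, f p` and `P_B = f 0, f (n-1), …, f p`,
and centers `c 0, …, c (k-1)` outside the hole such that `{c i} ∪ {x,y}` is independent,
every center has at least three neighbors on the hole and neighbors in the interiors of
both `P_A` and `P_B`, and the neighbors of the centers appear along both `P_A` and `P_B`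
(from `x` to `y`) in the order of the centers. -/
def IsSpanWheel (G : SimpleGraph V) (k n p : ℕ) (f : ZMod n → V) (c : Fin k → V) : Prop :=
  IsHoleEmb G n f ∧
  2 ≤ p ∧ p ≤ n - 2 ∧
  ¬G.Adj (f 0) (f (p : ZMod n)) ∧
  Function.Injective c ∧
  (∀ i : Fin k, c i ∉ Set.range f) ∧
  (∀ i j : Fin k, i ≠ j → ¬G.Adj (c i) (c j)) ∧
  (∀ i : Fin k, ¬G.Adj (c i) (f 0)) ∧
  (∀ i : Fin k, ¬G.Adj (c i) (f (p : ZMod n))) ∧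
  (∀ i : Fin k, 3 ≤ {m : ZMod n | G.Adj (c i) (f m)}.ncard) ∧
  (∀ i : Fin k, ∃ a : ℕ, 0 < a ∧ a < p ∧ G.Adj (c i) (f (a : ZMod n))) ∧
  (∀ i : Fin k, ∃ b : ℕ, p < b ∧ b < n ∧ G.Adj (c i) (f (b : ZMod n))) ∧
  (∀ i j : Fin k, i < j → ∀ a₁ a₂ : ℕ, a₁ ≤ p → a₂ ≤ p →
    G.Adj (c i) (f (a₁ : ZMod n)) → G.Adj (c j) (f (a₂ : ZMod n)) → a₁ ≤ a₂) ∧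
  (∀ i j : Fin k, i < j → ∀ b₁ b₂ : ℕ, p ≤ b₁ → b₁ ≤ n → p ≤ b₂ → b₂ ≤ n →
    G.Adj (c i) (f (b₁ : ZMod n)) → G.Adj (c j) (f (b₂ : ZMod n)) → b₂ ≤ b₁)

/-- `X` separates `s` from `t` in `G`: neither is in `X` and every walk from `s` to `t`
meets `X`. -/
def Separates (G : SimpleGraph V) (X : Set V) (s t : V) : Prop :=
  s ∉ X ∧ t ∉ X ∧ ∀ p : G.Walk s t, ∃ w ∈ p.support, w ∈ X

/-- `X` is a minimal separator of `G`: for some pair `s, t` it is an inclusion-wise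
minimal `st`-separator. -/
def MinSeparator (G : SimpleGraph V) (X : Set V) : Prop :=
  ∃ s t : V, Separates G X s t ∧ ∀ Y ⊆ X, Separates G Y s t → Y = X

/-- `A` is a connected component of `G ∖ C` that is full to `C`. -/
def IsFullComponent (G : SimpleGraph V) (C A : Set V) : Prop :=
  A.Nonempty ∧ Disjoint A C ∧ (G.induce A).Connected ∧
  (∀ a ∈ A, ∀ w : V, G.Adj a w → w ∈ A ∪ C) ∧
  (∀ x ∈ C, ∃ a ∈ A, G.Adj x a)

/-- A tree decomposition of `G` with tree `T` and bags `B`. -/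
def IsTreeDecomp (G : SimpleGraph V) {ι : Type} (T : SimpleGraph ι) (B : ι → Finset V) : Prop :=
  T.IsTree ∧
  (∀ v : V, ∃ i, v ∈ B i) ∧
  (∀ u v : V, G.Adj u v → ∃ i, u ∈ B i ∧ v ∈ B i) ∧
  (∀ (v : V) (i j : ι), v ∈ B i → v ∈ B j →
    ∀ (p : T.Walk i j), p.IsPath → ∀ x ∈ p.support, v ∈ B x)

/-- The treewidth of a finite graph: the least `w` such that `G` has a tree decomposition
all of whose bags have size at most `w + 1`. -/
noncomputable def treewidth (G : SimpleGraph V) : ℕ :=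
  sInf {w : ℕ | ∃ (m : ℕ) (T : SimpleGraph (Fin m)) (B : Fin m → Finset V),
    IsTreeDecomp G T B ∧ ∀ i, (B i).card ≤ w + 1}

/-- A graph is chordal iff it has no hole. -/
def IsChordal (G : SimpleGraph V) : Prop :=
  ¬∃ (n : ℕ) (f : ZMod n → V), IsHoleEmb G n f

/-- `H` is obtained from `G` by a minimal fill-in (minimal chordal completion). -/
def IsMinimalChordalCompletion (G H : SimpleGraph V) : Prop :=
  G ≤ H ∧ IsChordal H ∧ ∀ H' : SimpleGraph V, G ≤ H' → H' ≤ H → IsChordal H' → H' = H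

/-- `Ω` is a potential maximal clique of `G`: a maximal clique of some minimal chordal
completion of `G`. -/
def IsPMC (G : SimpleGraph V) (Ω : Set V) : Prop :=
  ∃ H : SimpleGraph V, IsMinimalChordalCompletion G H ∧ H.IsClique Ω ∧
    ∀ Ω' : Set V, H.IsClique Ω' → Ω ⊆ Ω' → Ω' = Ω

/-- `n` satisfies the Ramsey property for `(t, k)`: every graph on `n` vertices has a
clique of size `t` or an independent set of size `k`. -/
def RamseyProp (n t k : ℕ) : Prop :=
  ∀ G : SimpleGraph (Fin n),
    (∃ S : Finset (Fin n), G.IsNClique t S) ∨ (∃ S : Finset (Fin n), Gᶜ.IsNClique k S)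

/-- The Ramsey number `R(t, k)`. -/
noncomputable def ramseyNumber (t k : ℕ) : ℕ := sInf {n : ℕ | RamseyProp n t k}

set_option linter.unusedSectionVars false
set_option linter.unusedSimpArgs false
set_option linter.unusedVariables false
namespace S10

/-- `p 0, …, p n` is an induced path. -/
def PF (G : SimpleGraph V) (n : ℕ) (p : ℕ → V) : Prop :=
  (∀ i ≤ n, ∀ j ≤ n, p i = p j → i = j) ∧
  (∀ i ≤ n, ∀ j ≤ n, G.Adj (p i) (p j) → (j = i + 1 ∨ i = j + 1)) ∧
  ∀ i < n, G.Adj (p i) (p (i + 1))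

/-- `S` is the vertex set of an induced path from `a` to `b`. -/
def IP (G : SimpleGraph V) (a b : V) (S : Set V) : Prop :=
  ∃ (n : ℕ) (p : ℕ → V), PF G n p ∧ p 0 = a ∧ p n = b ∧ ∀ v, v ∈ S ↔ ∃ i ≤ n, p i = v

variable {G : SimpleGraph V}

lemma IP.left_mem {a b : V} {S : Set V} (h : IP G a b S) : a ∈ S := by
  obtain ⟨n, p, -, h0, -, hS⟩ := h
  exact (hS _).2 ⟨0, by omega, h0⟩

lemma IP.right_mem {a b : V} {S : Set V} (h : IP G a b S) : b ∈ S := by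
  obtain ⟨n, p, -, -, h0, hS⟩ := h
  exact (hS _).2 ⟨n, le_rfl, h0⟩

lemma PF.sub {n : ℕ} {p : ℕ → V} (h : PF G n p) {i j : ℕ} (hij : i ≤ j) (hj : j ≤ n) :
    IP G (p i) (p j) (p '' Set.Icc i j) := by
  obtain ⟨h1, h2, h3⟩ := h
  refine ⟨j - i, fun k => p (i + k), ⟨?_, ?_, ?_⟩, by simp, by simp [Nat.add_sub_cancel' hij], ?_⟩
  · intro a ha b hb hab
    have := h1 (i + a) (by omega) (i + b) (by omega) hab
    omega
  · intro a ha b hb hab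
    have := h2 (i + a) (by omega) (i + b) (by omega) hab
    omega
  · intro a ha
    exact h3 (i + a) (by omega)
  · intro v
    constructor
    · rintro ⟨k, ⟨hk1, hk2⟩, rfl⟩
      exact ⟨k - i, by omega, by simp [Nat.add_sub_cancel' hk1]⟩
    · rintro ⟨k, hk, rfl⟩
      exact ⟨i + k, ⟨by omega, by omega⟩, rfl⟩

lemma PF.rev {n : ℕ} {p : ℕ → V} (h : PF G n p) : PF G n (fun k => p (n - k)) := by
  obtain ⟨h1, h2, h3⟩ := h
  refine ⟨?_, ?_, ?_⟩
  · intro a ha b hb hab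
    have := h1 (n - a) (by omega) (n - b) (by omega) hab
    omega
  · intro a ha b hb hab
    have := h2 (n - a) (by omega) (n - b) (by omega) hab
    omega
  · intro a ha
    have := h3 (n - (a + 1)) (by omega)
    rw [show n - (a + 1) + 1 = n - a by omega] at this
    exact this.symm

lemma IP.symm {a b : V} {S : Set V} (h : IP G a b S) : IP G b a S := by
  obtain ⟨n, p, hp, h0, hn, hS⟩ := h
  refine ⟨n, _, hp.rev, by simpa using hn, by simpa using h0, ?_⟩
  intro v
  rw [hS]
  constructor
  · rintro ⟨k, hk, rfl⟩
    exact ⟨n - k, by omega, by show p (n - (n - k)) = p k; congr 1; omega⟩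
  · rintro ⟨k, hk, rfl⟩
    exact ⟨n - k, by omega, rfl⟩

lemma IP.single (a : V) : IP G a a {a} := by
  refine ⟨0, fun _ => a, ⟨?_, ?_, ?_⟩, rfl, rfl, ?_⟩
  · intros; omega
  · intro i _ j _ h; exact absurd h (G.irrefl)
  · intro i hi; omega
  · intro v; simp only [Set.mem_singleton_iff]; constructor
    · rintro rfl; exact ⟨0, le_rfl, rfl⟩
    · rintro ⟨_, _, h⟩; exact h.symm

lemma IP.append {a b c : V} {S T : Set V} (hS : IP G a b S) (hT : IP G b c T)
    (hd : ∀ v ∈ S, v ∈ T → v = b)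
    (he : ∀ u ∈ S, ∀ v ∈ T, u ≠ b → v ≠ b → ¬ G.Adj u v) : IP G a c (S ∪ T) := by
  obtain ⟨n, p, ⟨p1, p2, p3⟩, p0, pn, hS⟩ := hS
  obtain ⟨m, q, ⟨q1, q2, q3⟩, q0, qm, hT⟩ := hT
  have key : ∀ i ≤ n, ∀ j ≤ m, p i = q j → i = n ∧ j = 0 := by
    intro i hi j hj h
    have hb := hd (p i) ((hS _).2 ⟨i, hi, rfl⟩) ((hT _).2 ⟨j, hj, h.symm⟩)
    exact ⟨p1 i hi n le_rfl (hb.trans pn.symm), q1 j hj 0 (by omega) ((h.symm.trans hb).trans q0.symm)⟩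
  have key2 : ∀ i ≤ n, ∀ j ≤ m, G.Adj (p i) (q j) → i = n ∨ j = 0 := by
    intro i hi j hj h
    by_contra hc
    push Not at hc
    refine he (p i) ((hS _).2 ⟨i, hi, rfl⟩) (q j) ((hT _).2 ⟨j, hj, rfl⟩) ?_ ?_ h
    · intro h'; exact hc.1 (p1 i hi n le_rfl (h'.trans pn.symm))
    · intro h'; exact hc.2 (q1 j hj 0 (by omega) (h'.trans q0.symm))
  have hpq : p n = q 0 := pn.trans q0.symm
  refine ⟨n + m, fun k => if k ≤ n then p k else q (k - n), ⟨?_, ?_, ?_⟩, by simpa using p0, ?_, ?_⟩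
  · intro i hi j hj h
    simp only [] at h
    split_ifs at h with h1 h2 h2
    · exact p1 i h1 j h2 h
    · have := key i h1 (j - n) (by omega) h; omega
    · have := key j h2 (i - n) (by omega) h.symm; omega
    · have := q1 (i - n) (by omega) (j - n) (by omega) h; omega
  · intro i hi j hj h
    simp only [] at h
    split_ifs at h with h1 h2 h2
    · exact p2 i h1 j h2 h
    · rcases key2 i h1 (j - n) (by omega) h with h' | h'
      · subst h'; rw [hpq] at h
        have := q2 0 (by omega) (j - i) (by omega) h; omega
      · omega
    · rcases key2 j h2 (i - n) (by omega) h.symm with h' | h'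
      · subst h'; rw [hpq] at h
        have := q2 (i - j) (by omega) 0 (by omega) h; omega
      · omega
    · have := q2 (i - n) (by omega) (j - n) (by omega) h; omega
  · intro i hi
    simp only []
    split_ifs with h1 h2 h2
    · exact p3 i (by omega)
    · have : i = n := by omega
      subst this
      rw [hpq, show i + 1 - i = 0 + 1 by omega]
      exact q3 0 (by omega)
    · omega
    · rw [show i + 1 - n = (i - n) + 1 by omega]; exact q3 _ (by omega)
  · simp only []
    split_ifs with h
    · have : m = 0 := by omega
      subst this; simpa [hpq] using qm
    · simpa using qm
  · intro v
    constructor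
    · rintro (h | h)
      · obtain ⟨i, hi, rfl⟩ := (hS _).1 h
        exact ⟨i, by omega, by simp [hi]⟩
      · obtain ⟨i, hi, rfl⟩ := (hT _).1 h
        by_cases h0 : i = 0
        · subst h0; exact ⟨n, by omega, by simp [hpq]⟩
        · exact ⟨n + i, by omega, by simp [h0]⟩
    · rintro ⟨i, hi, rfl⟩
      simp only []
      split_ifs with h
      · exact Or.inl ((hS _).2 ⟨i, h, rfl⟩)
      · exact Or.inr ((hT _).2 ⟨i - n, by omega, rfl⟩)

lemma IP.edge {a b : V} (h : G.Adj a b) : IP G a b {a, b} := by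
  refine ⟨1, fun k => if k = 0 then a else b, ⟨?_, ?_, ?_⟩, rfl, rfl, ?_⟩
  · intro i hi j hj h'
    have := h.ne; have := h.ne'
    simp only [] at h'
    split_ifs at h' <;> first | omega | contradiction
  · intro i hi j hj h'
    simp only [] at h'
    split_ifs at h' <;> first | omega | exact absurd h' G.irrefl
  · intro i hi
    have : i = 0 := by omega
    subst this; simpa using h
  · intro v
    constructor
    · rintro (rfl | rfl)
      · exact ⟨0, by omega, rfl⟩
      · exact ⟨1, by omega, rfl⟩
    · rintro ⟨i, hi, rfl⟩
      simp only []
      split_ifs <;> simp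

/-- Extending an induced path by one edge at its left end. -/
lemma IP.cons {a b c : V} {S : Set V} (h : IP G b c S) (hab : G.Adj a b) (ha : a ∉ S)
    (he : ∀ v ∈ S, v ≠ b → ¬ G.Adj a v) : IP G a c (insert a S) := by
  have := (IP.edge hab).append h (by
    rintro v (rfl | rfl) hv
    · exact absurd hv ha
    · rfl) (by
    rintro u (rfl | rfl) v hv h1 h2
    · exact he v hv h2
    · exact absurd rfl h1)
  convert this using 1
  ext v; simp only [Set.mem_insert_iff, Set.mem_union, Set.mem_singleton_iff]
  constructor
  · tauto
  · rintro ((h1 | h1) | h1)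
    · tauto
    · subst h1; right; exact h.left_mem
    · tauto

lemma PF.walk {n : ℕ} : ∀ {p : ℕ → V}, PF G n p → ∃ w : G.Walk (p 0) (p n),
    w.IsPath ∧ (∀ v, v ∈ w.support ↔ ∃ i ≤ n, p i = v) ∧
    ∀ i < n, w.toSubgraph.Adj (p i) (p (i + 1)) := by
  induction n with
  | zero =>
    intro p hp
    refine ⟨Walk.nil, Walk.IsPath.nil, ?_, by intros; omega⟩
    intro v
    simp only [Walk.support_nil, List.mem_singleton]
    constructor
    · rintro rfl; exact ⟨0, le_rfl, rfl⟩
    · rintro ⟨i, hi, rfl⟩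
      rw [show i = 0 by omega]
  | succ n ih =>
    intro p hp
    obtain ⟨h1, h2, h3⟩ := hp
    obtain ⟨w, w1, w2, w3⟩ := ih (p := fun k => p (k + 1)) ⟨by
      intro a ha b hb hab
      have := h1 (a + 1) (by omega) (b + 1) (by omega) hab
      omega, by
      intro a ha b hb hab
      have := h2 (a + 1) (by omega) (b + 1) (by omega) hab
      omega, by
      intro a ha
      exact h3 (a + 1) (by omega)⟩
    refine ⟨Walk.cons (h3 0 (by omega)) w, ?_, ?_, ?_⟩
    · rw [Walk.cons_isPath_iff]
      refine ⟨w1, ?_⟩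
      rw [w2]
      rintro ⟨i, hi, h⟩
      have := h1 (i + 1) (by omega) 0 (by omega) h
      omega
    · intro v
      rw [Walk.support_cons, List.mem_cons, w2]
      constructor
      · rintro (rfl | ⟨i, hi, rfl⟩)
        · exact ⟨0, by omega, rfl⟩
        · exact ⟨i + 1, by omega, rfl⟩
      · rintro ⟨i, hi, rfl⟩
        rcases i with _ | i
        · left; rfl
        · right; exact ⟨i, by omega, rfl⟩
    · intro i hi
      rw [Walk.toSubgraph, Subgraph.sup_adj]
      rcases i with _ | i
      · left; simp
      · right; exact w3 i (by omega)

lemma IP.walk {a b : V} {S : Set V} (h : IP G a b S) : ∃ w : G.Walk a b,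
    IsInducedPathW G w ∧ ∀ v, v ∈ w.support ↔ v ∈ S := by
  obtain ⟨n, p, hp, rfl, rfl, hS⟩ := h
  obtain ⟨w, w1, w2, w3⟩ := hp.walk
  refine ⟨w, ⟨w1, ?_⟩, fun v => by rw [w2, hS]⟩
  intro u v hu hv huv
  obtain ⟨i, hi, rfl⟩ := (w2 _).1 hu
  obtain ⟨j, hj, rfl⟩ := (w2 _).1 hv
  rcases hp.2.1 i hi j hj huv with h | h
  · subst h; exact w3 i (by omega)
  · subst h; exact (w3 j (by omega)).symm

lemma len1 {a b : V} (w : G.Walk a b) (h : a ≠ b) : 1 ≤ w.length := by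
  rcases w with _ | ⟨h', w⟩
  · exact absurd rfl h
  · simp

lemma len2 {a b : V} (w : G.Walk a b) (h : a ≠ b) (h2 : ¬ G.Adj a b) : 2 ≤ w.length := by
  rcases w with _ | ⟨h', _ | ⟨h'', w⟩⟩
  · exact absurd rfl h
  · exact absurd h' h2
  · simp

lemma theta_of {a b : V} {X Y Z : Set V} (hab : a ≠ b) (hnab : ¬ G.Adj a b)
    (hX : IP G a b X) (hY : IP G a b Y) (hZ : IP G a b Z)
    (dXY : ∀ v ∈ X, v ∈ Y → v = a ∨ v = b) (dXZ : ∀ v ∈ X, v ∈ Z → v = a ∨ v = b)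
    (dYZ : ∀ v ∈ Y, v ∈ Z → v = a ∨ v = b)
    (eXY : ∀ u ∈ X, ∀ v ∈ Y, u ≠ a → u ≠ b → v ≠ a → v ≠ b → ¬ G.Adj u v)
    (eXZ : ∀ u ∈ X, ∀ v ∈ Z, u ≠ a → u ≠ b → v ≠ a → v ≠ b → ¬ G.Adj u v)
    (eYZ : ∀ u ∈ Y, ∀ v ∈ Z, u ≠ a → u ≠ b → v ≠ a → v ≠ b → ¬ G.Adj u v) :
    ContainsTheta G := by
  obtain ⟨w1, i1, s1⟩ := hX.walk
  obtain ⟨w2, i2, s2⟩ := hY.walk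
  obtain ⟨w3, i3, s3⟩ := hZ.walk
  refine ⟨a, b, w1, w2, w3, ⟨i1, i2, i3⟩, ⟨len2 _ hab hnab, len2 _ hab hnab, len2 _ hab hnab⟩, ?_, ?_⟩
  · intro w
    simp only [s1, s2, s3]
    rintro (⟨h, h'⟩ | ⟨h, h'⟩ | ⟨h, h'⟩)
    exacts [dXY _ h h', dXZ _ h h', dYZ _ h h']
  · intro u w h1 h2 h3 h4
    simp only [s1, s2, s3]
    rintro (⟨h, h'⟩ | ⟨h, h'⟩ | ⟨h, h'⟩)
    exacts [eXY _ h _ h' h1 h2 h3 h4, eXZ _ h _ h' h1 h2 h3 h4, eYZ _ h _ h' h1 h2 h3 h4]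

lemma pyramid_of {a b c d : V} {X Y Z : Set V}
    (hb : a ≠ b) (hc : a ≠ c) (hd : a ≠ d)
    (hn : (¬ G.Adj a b ∧ ¬ G.Adj a c) ∨ (¬ G.Adj a b ∧ ¬ G.Adj a d) ∨ (¬ G.Adj a c ∧ ¬ G.Adj a d))
    (hX : IP G a b X) (hY : IP G a c Y) (hZ : IP G a d Z)
    (hbc : G.Adj b c) (hcd : G.Adj c d) (hbd : G.Adj b d)
    (dXY : ∀ v ∈ X, v ∈ Y → v = a) (dXZ : ∀ v ∈ X, v ∈ Z → v = a)
    (dYZ : ∀ v ∈ Y, v ∈ Z → v = a)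
    (eXY : ∀ u ∈ X, ∀ v ∈ Y, u ≠ a → v ≠ a → G.Adj u v → u = b ∧ v = c)
    (eXZ : ∀ u ∈ X, ∀ v ∈ Z, u ≠ a → v ≠ a → G.Adj u v → u = b ∧ v = d)
    (eYZ : ∀ u ∈ Y, ∀ v ∈ Z, u ≠ a → v ≠ a → G.Adj u v → u = c ∧ v = d) :
    ContainsPyramid G := by
  obtain ⟨w1, i1, s1⟩ := hX.walk
  obtain ⟨w2, i2, s2⟩ := hY.walk
  obtain ⟨w3, i3, s3⟩ := hZ.walk
  refine ⟨a, b, c, d, w1, w2, w3, ⟨i1, i2, i3⟩, ⟨len1 _ hb, len1 _ hc, len1 _ hd⟩, ?_,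
    ⟨hbc, hcd, hbd⟩, ?_, ?_, ?_, ?_⟩
  · rcases hn with ⟨h, h'⟩ | ⟨h, h'⟩ | ⟨h, h'⟩
    · exact Or.inl ⟨len2 _ hb h, len2 _ hc h'⟩
    · exact Or.inr (Or.inl ⟨len2 _ hb h, len2 _ hd h'⟩)
    · exact Or.inr (Or.inr ⟨len2 _ hc h, len2 _ hd h'⟩)
  · intro w
    simp only [s1, s2, s3]
    rintro (⟨h, h'⟩ | ⟨h, h'⟩ | ⟨h, h'⟩)
    exacts [dXY _ h h', dXZ _ h h', dYZ _ h h']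
  · intro u w; simp only [s1, s2, s3]; exact fun h h' => eXY u h w h'
  · intro u w; simp only [s1, s2, s3]; exact fun h h' => eXZ u h w h'
  · intro u w; simp only [s1, s2, s3]; exact fun h h' => eYZ u h w h'

lemma prism_of {a b c a' b' c' : V} {X Y Z : Set V}
    (ha : a ≠ a') (hb : b ≠ b') (hc : c ≠ c')
    (hX : IP G a a' X) (hY : IP G b b' Y) (hZ : IP G c c' Z)
    (hab : G.Adj a b) (hbc : G.Adj b c) (hac : G.Adj a c)
    (hab' : G.Adj a' b') (hbc' : G.Adj b' c') (hac' : G.Adj a' c')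
    (dXY : ∀ v ∈ X, v ∉ Y) (dXZ : ∀ v ∈ X, v ∉ Z) (dYZ : ∀ v ∈ Y, v ∉ Z)
    (eXY : ∀ u ∈ X, ∀ v ∈ Y, G.Adj u v → (u = a ∧ v = b) ∨ (u = a' ∧ v = b'))
    (eXZ : ∀ u ∈ X, ∀ v ∈ Z, G.Adj u v → (u = a ∧ v = c) ∨ (u = a' ∧ v = c'))
    (eYZ : ∀ u ∈ Y, ∀ v ∈ Z, G.Adj u v → (u = b ∧ v = c) ∨ (u = b' ∧ v = c')) :
    ContainsPrism G := by
  obtain ⟨w1, i1, s1⟩ := hX.walk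
  obtain ⟨w2, i2, s2⟩ := hY.walk
  obtain ⟨w3, i3, s3⟩ := hZ.walk
  refine ⟨a, a', b, b', c, c', w1, w2, w3, ⟨i1, i2, i3⟩, ⟨len1 _ ha, len1 _ hb, len1 _ hc⟩,
    ⟨hab, hbc, hac⟩, ⟨hab', hbc', hac'⟩, ?_, ?_, ?_, ?_⟩
  · intro w
    simp only [s1, s2, s3]
    exact ⟨fun h => dXY w h.1 h.2, fun h => dXZ w h.1 h.2, fun h => dYZ w h.1 h.2⟩
  · intro u w; simp only [s1, s2, s3]; exact fun h h' => eXY u h w h'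
  · intro u w; simp only [s1, s2, s3]; exact fun h h' => eXZ u h w h'
  · intro u w; simp only [s1, s2, s3]; exact fun h h' => eYZ u h w h'

end S10

namespace S10
variable {G : SimpleGraph V}

structure Ctx (G : SimpleGraph V) (C A B : Set V) : Prop where
  hT : ¬ ContainsTheta G
  hP : ¬ ContainsPrism G
  hY : ¬ ContainsPyramid G
  hW : ∀ (n : ℕ) (f : ZMod n → V) (u v : V), Is2WheelCfg G n f u v → ¬G.Adj u v →
    (NestedCfg G n f u v ∨ CousinCfg G n f u v)
  ind : ∀ x ∈ C, ∀ y ∈ C, ¬ G.Adj x y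
  AC : ∀ v ∈ A, v ∉ C
  BC : ∀ v ∈ B, v ∉ C
  AB : ∀ v ∈ A, v ∉ B
  nAB : ∀ u ∈ A, ∀ v ∈ B, ¬ G.Adj u v

lemma Ctx.symm {C A B : Set V} (h : Ctx G C A B) : Ctx G C B A :=
  ⟨h.hT, h.hP, h.hY, h.hW, h.ind, h.BC, h.AC, fun v hv hv' => h.AB v hv' hv,
    fun u hu v hv huv => h.nAB v hv u hu huv.symm⟩

lemma Ctx.mono {C A B A' B' : Set V} (h : Ctx G C A B) (hA : A' ⊆ A) (hB : B' ⊆ B) :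
    Ctx G C A' B' :=
  ⟨h.hT, h.hP, h.hY, h.hW, h.ind, fun v hv => h.AC v (hA hv), fun v hv => h.BC v (hB hv),
    fun v hv hv' => h.AB v (hA hv) (hB hv'), fun u hu v hv => h.nAB u (hA hu) v (hB hv)⟩

def SP (G : SimpleGraph V) (a : V) (X Y : Set V) : Prop :=
  (∀ v ∈ X, v ∈ Y → v = a) ∧ ∀ u ∈ X, ∀ v ∈ Y, u ≠ a → v ≠ a → ¬ G.Adj u v

def TP (G : SimpleGraph V) (a b : V) (X Y : Set V) : Prop :=
  (∀ v ∈ X, v ∉ Y) ∧ ∀ u ∈ X, ∀ v ∈ Y, G.Adj u v → u = a ∧ v = b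

lemma SP.symm {a : V} {X Y : Set V} (h : SP G a X Y) : SP G a Y X :=
  ⟨fun v h1 h2 => h.1 v h2 h1, fun u hu v hv h1 h2 h3 => h.2 v hv u hu h2 h1 h3.symm⟩

lemma TP.symm {a b : V} {X Y : Set V} (h : TP G a b X Y) : TP G b a Y X :=
  ⟨fun v h1 h2 => h.1 v h2 h1, fun u hu v hv h3 => (h.2 v hv u hu h3.symm).symm⟩

def Spider (G : SimpleGraph V) (D : Set V) (a x y z : V) : Prop :=
  ∃ X Y Z : Set V, IP G a x X ∧ IP G a y Y ∧ IP G a z Z ∧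
    (∀ v ∈ X, v = a ∨ v ∈ D ∨ v = x) ∧ (∀ v ∈ Y, v = a ∨ v ∈ D ∨ v = y) ∧
    (∀ v ∈ Z, v = a ∨ v ∈ D ∨ v = z) ∧ (a ∈ D ∨ a = x ∨ a = y ∨ a = z) ∧
    SP G a X Y ∧ SP G a X Z ∧ SP G a Y Z

def Tri (G : SimpleGraph V) (D : Set V) (a b c x y z : V) : Prop :=
  ∃ X Y Z : Set V, IP G a x X ∧ IP G b y Y ∧ IP G c z Z ∧
    (G.Adj a b ∧ G.Adj b c ∧ G.Adj a c) ∧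
    (∀ v ∈ X, v ∈ D ∨ v = x) ∧ (∀ v ∈ Y, v ∈ D ∨ v = y) ∧ (∀ v ∈ Z, v ∈ D ∨ v = z) ∧
    TP G a b X Y ∧ TP G a c X Z ∧ TP G b c Y Z

lemma Spider.swap12 {D : Set V} {a x y z : V} (h : Spider G D a x y z) : Spider G D a y x z := by
  obtain ⟨X, Y, Z, h1, h2, h3, h4, h5, h6, h7, h8, h9, h10⟩ := h
  exact ⟨Y, X, Z, h2, h1, h3, h5, h4, h6, by tauto, h8.symm, h10, h9⟩

lemma Spider.swap23 {D : Set V} {a x y z : V} (h : Spider G D a x y z) : Spider G D a x z y := by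
  obtain ⟨X, Y, Z, h1, h2, h3, h4, h5, h6, h7, h8, h9, h10⟩ := h
  exact ⟨X, Z, Y, h1, h3, h2, h4, h6, h5, by tauto, h9, h8, h10.symm⟩

lemma Tri.swap12 {D : Set V} {a b c x y z : V} (h : Tri G D a b c x y z) :
    Tri G D b a c y x z := by
  obtain ⟨X, Y, Z, h1, h2, h3, ⟨e1, e2, e3⟩, h4, h5, h6, h8, h9, h10⟩ := h
  exact ⟨Y, X, Z, h2, h1, h3, ⟨e1.symm, e3, e2⟩, h5, h4, h6, h8.symm, h10, h9⟩

lemma Tri.swap23 {D : Set V} {a b c x y z : V} (h : Tri G D a b c x y z) :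
    Tri G D a c b x z y := by
  obtain ⟨X, Y, Z, h1, h2, h3, ⟨e1, e2, e3⟩, h4, h5, h6, h8, h9, h10⟩ := h
  exact ⟨X, Z, Y, h1, h3, h2, ⟨e3, e2.symm, e1⟩, h4, h6, h5, h9, h8, h10.symm⟩

lemma Spider.mono {D D' : Set V} {a x y z : V} (h : Spider G D a x y z) (hD : D ⊆ D') :
    Spider G D' a x y z := by
  obtain ⟨X, Y, Z, h1, h2, h3, h4, h5, h6, h7, h8, h9, h10⟩ := h
  exact ⟨X, Y, Z, h1, h2, h3, fun v hv => (h4 v hv).imp_right (Or.imp_left (@hD v)),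
    fun v hv => (h5 v hv).imp_right (Or.imp_left (@hD v)),
    fun v hv => (h6 v hv).imp_right (Or.imp_left (@hD v)), h7.imp_left (@hD a), h8, h9, h10⟩

section comp
variable {C A B : Set V}

lemma SS_app (h : Ctx G C A B) {a b x y z : V} (hx : x ∈ C) (hy : y ∈ C) (hz : z ∈ C)
    (hab : a ≠ b) (nab : ¬ G.Adj a b)
    {X Y Z X' Y' Z' : Set V} (i : IP G a x X) (i' : IP G b x X')
    (j : IP G a y Y) (j' : IP G b y Y') (k : IP G a z Z) (k' : IP G b z Z')
    (m : ∀ v ∈ X, v = a ∨ v ∈ A ∨ v = x) (m' : ∀ v ∈ X', v = b ∨ v ∈ B ∨ v = x)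
    (ha : a ∈ A ∨ a = x ∨ a = y ∨ a = z) (hb : b ∈ B ∨ b = x ∨ b = y ∨ b = z)
    (s1 : SP G a X Y) (s2 : SP G a X Z) (s1' : SP G b X' Y') (s2' : SP G b X' Z') :
    IP G a b (X ∪ X') := by
  have := h.AC; have := h.BC; have := h.AB; have := h.nAB; have := h.ind
  have := i.right_mem; have := i'.right_mem; have := j.right_mem; have := j'.right_mem
  have := k.right_mem; have := k'.right_mem
  refine i.append i'.symm ?_ ?_
  · intro v hv hv'
    have := m v hv; have := m' v hv'
    grind
  · intro u hu v hv hux hvx huv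
    have h1 := m u hu; have h2 := m' v hv
    have e1 := s1.2 u hu; have e2 := s2.2 u hu
    have e1' := s1'.2 v hv; have e2' := s2'.2 v hv
    have := huv.symm
    grind

lemma SS_pair (h : Ctx G C A B) {a b x y : V} (hx : x ∈ C) (hy : y ∈ C) (hxy : x ≠ y)
    {X Y X' Y' : Set V} (i : IP G a x X) (i' : IP G b x X')
    (j : IP G a y Y) (j' : IP G b y Y')
    (m : ∀ v ∈ X, v = a ∨ v ∈ A ∨ v = x) (m' : ∀ v ∈ X', v = b ∨ v ∈ B ∨ v = x)
    (l : ∀ v ∈ Y, v = a ∨ v ∈ A ∨ v = y) (l' : ∀ v ∈ Y', v = b ∨ v ∈ B ∨ v = y)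
    (s : SP G a X Y) (s' : SP G b X' Y') :
    (∀ v ∈ X ∪ X', v ∈ Y ∪ Y' → v = a ∨ v = b) ∧
    ∀ u ∈ X ∪ X', ∀ v ∈ Y ∪ Y', u ≠ a → u ≠ b → v ≠ a → v ≠ b → ¬ G.Adj u v := by
  have := h.AC; have := h.BC; have := h.AB; have := h.nAB; have := h.ind
  have := i.right_mem; have := i'.right_mem; have := j.right_mem; have := j'.right_mem
  obtain ⟨s1, s2⟩ := s
  obtain ⟨s1', s2'⟩ := s'
  constructor
  · rintro v (hv | hv) (hv' | hv')
    · exact Or.inl (s1 v hv hv')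
    · have := m v hv; have := l' v hv'; grind
    · have := m' v hv; have := l v hv'; grind
    · exact Or.inr (s1' v hv hv')
  · rintro u (hu | hu) v (hv | hv) h1 h2 h3 h4 huv
    · exact s2 u hu v hv h1 h3 huv
    · have := m u hu; have := l' v hv
      have := s2 u hu y; have := s2' x (by assumption) v hv
      grind
    · have := m' u hu; have := l v hv
      have := s2' u hu y; have := s2 x (by assumption) v hv
      have := huv.symm
      grind
    · exact s2' u hu v hv h2 h4 huv

lemma SS (h : Ctx G C A B) {a b x y z : V} (hx : x ∈ C) (hy : y ∈ C) (hz : z ∈ C)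
    (hxy : x ≠ y) (hxz : x ≠ z) (hyz : y ≠ z)
    (s : Spider G A a x y z) (t : Spider G B b x y z) : a = b ∨ G.Adj a b := by
  by_contra hc
  push Not at hc
  obtain ⟨hab, nab⟩ := hc
  obtain ⟨X, Y, Z, i, j, k, mx, my, mz, ha, s1, s2, s3⟩ := s
  obtain ⟨X', Y', Z', i', j', k', mx', my', mz', hb, s1', s2', s3'⟩ := t
  have p1 := SS_pair h hx hy hxy i i' j j' mx mx' my my' s1 s1'
  have p2 := SS_pair h hx hz hxz i i' k k' mx mx' mz mz' s2 s2'
  have p3 := SS_pair h hy hz hyz j j' k k' my my' mz mz' s3 s3'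
  have a1 := SS_app h hx hy hz hab nab i i' j j' k k' mx mx' ha hb s1 s2 s1' s2'
  have a2 := SS_app h hy hx hz hab nab j j' i i' k k' my my' (by tauto) (by tauto)
    s1.symm s3 s1'.symm s3'
  have a3 := SS_app h hz hx hy hab nab k k' i i' j j' mz mz' (by tauto) (by tauto)
    s2.symm s3.symm s2'.symm s3'.symm
  exact h.hT (theta_of hab nab a1 a2 a3 p1.1 p2.1 p3.1 p1.2 p2.2 p3.2)

lemma ST_app (h : Ctx G C A B) {a b c d x y z : V} (hx : x ∈ C) (hy : y ∈ C) (hz : z ∈ C)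
    (hab : a ≠ b) (hac : a ≠ c) (had : a ≠ d)
    {X Y Z X' Y' Z' : Set V} (i : IP G a x X) (i' : IP G b x X')
    (j : IP G a y Y) (j' : IP G c y Y') (k : IP G a z Z) (k' : IP G d z Z')
    (m : ∀ v ∈ X, v = a ∨ v ∈ A ∨ v = x) (m' : ∀ v ∈ X', v ∈ B ∨ v = x)
    (ha : a ∈ A ∨ a = x ∨ a = y ∨ a = z)
    (s1' : TP G b c X' Y') (s2' : TP G b d X' Z') :
    IP G a b (X ∪ X') := by
  have := h.AC; have := h.BC; have := h.AB; have := h.nAB; have := h.ind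
  have := i.right_mem; have := i'.right_mem; have := j.right_mem; have := j'.right_mem
  have := k.right_mem; have := k'.right_mem
  refine i.append i'.symm ?_ ?_
  · intro v hv hv'
    have := m v hv; have := m' v hv'
    grind
  · intro u hu v hv hux hvx huv
    have h1 := m u hu; have h2 := m' v hv
    have e1' := s1'.2 v hv; have e2' := s2'.2 v hv
    have := huv.symm
    grind

lemma ST_pair (h : Ctx G C A B) {a b c x y : V} (hx : x ∈ C) (hy : y ∈ C) (hxy : x ≠ y)
    {X Y X' Y' : Set V} (i : IP G a x X) (i' : IP G b x X')
    (j : IP G a y Y) (j' : IP G c y Y')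
    (m : ∀ v ∈ X, v = a ∨ v ∈ A ∨ v = x) (m' : ∀ v ∈ X', v ∈ B ∨ v = x)
    (l : ∀ v ∈ Y, v = a ∨ v ∈ A ∨ v = y) (l' : ∀ v ∈ Y', v ∈ B ∨ v = y)
    (s : SP G a X Y) (s' : TP G b c X' Y') :
    (∀ v ∈ X ∪ X', v ∈ Y ∪ Y' → v = a) ∧
    ∀ u ∈ X ∪ X', ∀ v ∈ Y ∪ Y', u ≠ a → v ≠ a → G.Adj u v → u = b ∧ v = c := by
  have := h.AC; have := h.BC; have := h.AB; have := h.nAB; have := h.ind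
  have := i.right_mem; have := i'.right_mem; have := j.right_mem; have := j'.right_mem
  obtain ⟨s1, s2⟩ := s
  obtain ⟨s1', s2'⟩ := s'
  constructor
  · rintro v (hv | hv) (hv' | hv')
    · exact (s1 v hv hv')
    · have := m v hv; have := l' v hv'; grind
    · have := m' v hv; have := l v hv'; grind
    · exact absurd hv' (s1' v hv)
  · rintro u (hu | hu) v (hv | hv) h1 h3 huv
    · exact absurd huv (s2 u hu v hv h1 h3)
    · have := m u hu; have := l' v hv
      have := s2 u hu y; have := s2' x (by assumption) v hv
      grind
    · have := m' u hu; have := l v hv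
      have := s2' u hu y; have := s2 x (by assumption) v hv
      have := huv.symm
      grind
    · exact s2' u hu v hv huv

lemma ST (h : Ctx G C A B) {a b c d x y z : V} (hx : x ∈ C) (hy : y ∈ C) (hz : z ∈ C)
    (hxy : x ≠ y) (hxz : x ≠ z) (hyz : y ≠ z)
    (s : Spider G A a x y z) (t : Tri G B b c d x y z) : a = b ∨ a = c ∨ a = d := by
  by_contra hc
  push Not at hc
  obtain ⟨hab, hac, had⟩ := hc
  obtain ⟨X, Y, Z, i, j, k, mx, my, mz, ha, s1, s2, s3⟩ := s
  obtain ⟨X', Y', Z', i', j', k', ⟨e1, e2, e3⟩, mx', my', mz', s1', s2', s3'⟩ := t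
  have p1 := ST_pair h hx hy hxy i i' j j' mx mx' my my' s1 s1'
  have p2 := ST_pair h hx hz hxz i i' k k' mx mx' mz mz' s2 s2'
  have p3 := ST_pair h hy hz hyz j j' k k' my my' mz mz' s3 s3'
  have a1 := ST_app h hx hy hz hab hac had i i' j j' k k' mx mx' ha s1' s2'
  have a2 := ST_app h hy hx hz hac hab had j j' i i' k k' my my' (by tauto) 
    s1'.symm s3'
  have a3 := ST_app h hz hx hy had hab hac k k' i i' j j' mz mz' (by tauto) 
    s2'.symm s3'.symm
  refine h.hY (pyramid_of hab hac had ?_ a1 a2 a3 e1 e2 e3 p1.1 p2.1 p3.1 p1.2 p2.2 p3.2)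
  have := i'.left_mem; have := j'.left_mem; have := k'.left_mem
  have := i'.right_mem; have := j'.right_mem; have := k'.right_mem
  have := h.nAB; have hi := h.ind
  have f1 := mx' b i'.left_mem
  have f2 := my' c j'.left_mem
  have f3 := mz' d k'.left_mem
  rcases ha with ha | rfl | rfl | rfl
  · have g1 := hi b; have g2 := hi c
    grind
  · right; right
    exact ⟨fun hh => hab (s1'.2 _ i'.right_mem _ j'.left_mem hh).1,
      fun hh => hab (s2'.2 _ i'.right_mem _ k'.left_mem hh).1⟩
  · right; left
    exact ⟨fun hh => hac (s1'.symm.2 _ j'.right_mem _ i'.left_mem hh).1,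
      fun hh => hac (s3'.2 _ j'.right_mem _ k'.left_mem hh).1⟩
  · left
    exact ⟨fun hh => had (s2'.symm.2 _ k'.right_mem _ i'.left_mem hh).1,
      fun hh => had (s3'.symm.2 _ k'.right_mem _ j'.left_mem hh).1⟩

lemma TT_app (h : Ctx G C A B) {a b x : V} (hx : x ∈ C)
    {X X' : Set V} (i : IP G a x X) (i' : IP G b x X')
    (m : ∀ v ∈ X, v ∈ A ∨ v = x) (m' : ∀ v ∈ X', v ∈ B ∨ v = x) :
    IP G a b (X ∪ X') := by
  have := h.AC; have := h.BC; have := h.AB; have := h.nAB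
  refine i.append i'.symm ?_ ?_
  · intro v hv hv'
    have := m v hv; have := m' v hv'
    grind
  · intro u hu v hv hux hvx huv
    have h1 := m u hu; have h2 := m' v hv
    grind

lemma TT_pair (h : Ctx G C A B) {a b a' b' x y : V} (hx : x ∈ C) (hy : y ∈ C) (hxy : x ≠ y)
    {X Y X' Y' : Set V} (i : IP G a x X) (i' : IP G a' x X')
    (j : IP G b y Y) (j' : IP G b' y Y')
    (m : ∀ v ∈ X, v ∈ A ∨ v = x) (m' : ∀ v ∈ X', v ∈ B ∨ v = x)
    (l : ∀ v ∈ Y, v ∈ A ∨ v = y) (l' : ∀ v ∈ Y', v ∈ B ∨ v = y)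
    (s : TP G a b X Y) (s' : TP G a' b' X' Y') :
    (∀ v ∈ X ∪ X', v ∉ Y ∪ Y') ∧
    ∀ u ∈ X ∪ X', ∀ v ∈ Y ∪ Y', G.Adj u v → (u = a ∧ v = b) ∨ (u = a' ∧ v = b') := by
  have := h.AC; have := h.BC; have := h.AB; have := h.nAB; have := h.ind
  have := i.right_mem; have := i'.right_mem; have := j.right_mem; have := j'.right_mem
  obtain ⟨s1, s2⟩ := s
  obtain ⟨s1', s2'⟩ := s'
  constructor
  · rintro v (hv | hv) (hv' | hv')
    · exact (s1 v hv hv')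
    · have := m v hv; have := l' v hv'; grind
    · have := m' v hv; have := l v hv'; grind
    · exact absurd hv' (s1' v hv)
  · rintro u (hu | hu) v (hv | hv) huv
    · exact Or.inl (s2 u hu v hv huv)
    · have := m u hu; have := l' v hv
      have := s2 u hu y; have := s2' x (by assumption) v hv
      grind
    · have := m' u hu; have := l v hv
      have := s2' u hu y; have := s2 x (by assumption) v hv
      have := huv.symm
      grind
    · exact Or.inr (s2' u hu v hv huv)

lemma TT (h : Ctx G C A B) {a b c a' b' c' x y z : V} (hx : x ∈ C) (hy : y ∈ C) (hz : z ∈ C)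
    (hxy : x ≠ y) (hxz : x ≠ z) (hyz : y ≠ z)
    (s : Tri G A a b c x y z) (t : Tri G B a' b' c' x y z) : a = a' ∨ b = b' ∨ c = c' := by
  by_contra hc
  push Not at hc
  obtain ⟨ha, hb, hc⟩ := hc
  obtain ⟨X, Y, Z, i, j, k, ⟨e1, e2, e3⟩, mx, my, mz, s1, s2, s3⟩ := s
  obtain ⟨X', Y', Z', i', j', k', ⟨e1', e2', e3'⟩, mx', my', mz', s1', s2', s3'⟩ := t
  have p1 := TT_pair h hx hy hxy i i' j j' mx mx' my my' s1 s1'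
  have p2 := TT_pair h hx hz hxz i i' k k' mx mx' mz mz' s2 s2'
  have p3 := TT_pair h hy hz hyz j j' k k' my my' mz mz' s3 s3'
  exact h.hP (prism_of ha hb hc (TT_app h hx i i' mx mx') (TT_app h hy j j' my my')
    (TT_app h hz k k' mz mz') e1 e2 e3 e1' e2' e3' p1.1 p2.1 p3.1 p1.2 p2.2 p3.2)

end comp

end S10

namespace S10
variable {G : SimpleGraph V}

def Rl (G : SimpleGraph V) (D : Set V) (u v : V) : Prop := G.Adj u v ∧ u ∈ D ∧ v ∈ D

def Conn (G : SimpleGraph V) (D : Set V) : Prop :=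
  ∀ a ∈ D, ∀ b ∈ D, Relation.ReflTransGen (Rl G D) a b

lemma Rl.symm {D : Set V} {u v : V} (h : Rl G D u v) : Rl G D v u := ⟨h.1.symm, h.2.2, h.2.1⟩

lemma RT.symm {D : Set V} {u v : V} (h : Relation.ReflTransGen (Rl G D) u v) :
    Relation.ReflTransGen (Rl G D) v u :=
  by
  induction h with
  | refl => exact Relation.ReflTransGen.refl
  | tail _ h2 ih => exact Relation.ReflTransGen.head h2.symm ih

lemma RT.mono {D E : Set V} (hDE : D ⊆ E) {u v : V} (h : Relation.ReflTransGen (Rl G D) u v) :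
    Relation.ReflTransGen (Rl G E) u v :=
  by
  induction h with
  | refl => exact Relation.ReflTransGen.refl
  | tail _ h2 ih => exact Relation.ReflTransGen.tail ih ⟨h2.1, hDE h2.2.1, hDE h2.2.2⟩

lemma Conn.of_connected {D : Set V} (h : (G.induce D).Connected) : Conn G D := by
  intro a ha b hb
  obtain ⟨w⟩ := h.preconnected ⟨a, ha⟩ ⟨b, hb⟩
  have : ∀ (u v : D) (w : (G.induce D).Walk u v), Relation.ReflTransGen (Rl G D) u.1 v.1 := by
    intro u v w
    induction w with
    | nil => exact Relation.ReflTransGen.refl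
    | cons h w ih => exact Relation.ReflTransGen.head ⟨h, Subtype.property _, Subtype.property _⟩ ih
  exact this _ _ w

lemma Conn.insert {D : Set V} (h : Conn G D) {x a : V} (ha : a ∈ D) (hx : G.Adj x a) :
    Conn G (insert x D) := by
  have e : Relation.ReflTransGen (Rl G (Insert.insert x D)) x a :=
    Relation.ReflTransGen.single ⟨hx, by simp, by simp [ha]⟩
  have hs : D ⊆ Insert.insert x D := Set.subset_insert _ _
  have key : ∀ u ∈ Insert.insert x D, Relation.ReflTransGen (Rl G (Insert.insert x D)) u a := by
    rintro u (rfl | hu)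
    · exact e
    · exact RT.mono hs (h u hu a ha)
  intro u hu v hv
  exact (key u hu).trans (RT.symm (key v hv))

lemma RT.ip {D : Set V} {a b : V} (h : Relation.ReflTransGen (Rl G D) a b) (hb : b ∈ D) :
    ∃ S ⊆ D, IP G a b S := by
  induction h using Relation.ReflTransGen.head_induction_on with
  | refl => exact ⟨{b}, by simpa using hb, IP.single b⟩
  | @head a c hac hcb ih =>
    obtain ⟨S, hSD, n, p, hp, p0, pn, hS⟩ := ih
    by_cases haS : a ∈ S
    · obtain ⟨i, hi, rfl⟩ := (hS _).1 haS
      refine ⟨_, ?_, pn ▸ hp.sub hi le_rfl⟩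
      rintro _ ⟨k, hk, rfl⟩
      exact hSD ((hS _).2 ⟨k, hk.2, rfl⟩)
    · classical
      let P : ℕ → Prop := fun k => G.Adj a (p k)
      have h0 : P 0 := by show G.Adj a (p 0); rw [p0]; exact hac.1
      set k := Nat.findGreatest P n with hk
      have hkn : k ≤ n := Nat.findGreatest_le n
      have hPk : P k := Nat.findGreatest_spec (Nat.zero_le n) h0
      have hgt : ∀ j, k < j → j ≤ n → ¬ P j := fun j h1 h2 => Nat.findGreatest_is_greatest h1 h2
      refine ⟨_, ?_, IP.cons (pn ▸ hp.sub hkn le_rfl) hPk ?_ ?_⟩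
      · rintro v (rfl | ⟨j, hj, rfl⟩)
        · exact hac.2.1
        · exact hSD ((hS _).2 ⟨j, hj.2, rfl⟩)
      · rintro ⟨j, hj, rfl⟩
        exact haS ((hS _).2 ⟨j, hj.2, rfl⟩)
      · rintro _ ⟨j, hj, rfl⟩ hne
        exact hgt j (lt_of_le_of_ne hj.1 (by rintro h; exact hne (by rw [← h]))) hj.2

lemma Conn.ip {D : Set V} (h : Conn G D) {a b : V} (ha : a ∈ D) (hb : b ∈ D) :
    ∃ S ⊆ D, IP G a b S := RT.ip (h a ha b hb) hb

lemma reach {z w : V} {T S : Set V} (h : IP G z w T) (hz : z ∉ S) (hw : w ∈ S) :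
    ∃ t R, IP G z t R ∧ R ⊆ T ∧ (∀ v ∈ R, v ∉ S) ∧ (∃ s ∈ S, G.Adj t s) ∧
      ∀ v ∈ R, v ≠ t → ∀ s ∈ S, ¬ G.Adj v s := by
  classical
  obtain ⟨n, p, hp, rfl, rfl, hT⟩ := h
  have hn : 0 < n := by
    rcases Nat.eq_zero_or_pos n with h | h
    · subst h; exact absurd hw hz
    · exact h
  have hex : ∃ k, k < n ∧ ∃ s ∈ S, G.Adj (p k) s := by
    refine ⟨n - 1, by omega, p n, hw, ?_⟩
    have := hp.2.2 (n - 1) (by omega)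
    rwa [show n - 1 + 1 = n by omega] at this
  obtain ⟨h1, h2⟩ := Nat.find_spec hex
  have hmin : ∀ i < Nat.find hex, ∀ s ∈ S, ¬ G.Adj (p i) s := by
    intro i hi s hs hadj
    exact Nat.find_min hex hi ⟨by omega, s, hs, hadj⟩
  set k := Nat.find hex
  refine ⟨p k, p '' Set.Icc 0 k, hp.sub (by omega) (by omega), ?_, ?_, h2, ?_⟩
  · rintro _ ⟨i, hi, rfl⟩
    exact (hT _).2 ⟨i, by have := hi.2; omega, rfl⟩
  · rintro _ ⟨i, hi, rfl⟩ hS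
    have := hi.2
    rcases i with _ | i
    · exact hz hS
    · exact hmin i (by omega) _ hS (hp.2.2 i (by omega))
  · rintro _ ⟨i, hi, rfl⟩ hne s hs
    have := hi.2
    exact hmin i (lt_of_le_of_ne this (by rintro rfl; exact hne rfl)) s hs

lemma pathStruct {n : ℕ} {p : ℕ → V} (hp : PF G n p) {D R : Set V} {s z : V} (hn : 0 < n)
    (hpD : ∀ i, 0 < i → i < n → p i ∈ D)
    (hR : IP G s z R) (hRD : ∀ v ∈ R, v ∈ D ∨ v = z)
    (hRp : ∀ v ∈ R, ∀ i ≤ n, v ≠ p i) (hRe : ∀ v ∈ R, v ≠ s → ∀ i ≤ n, ¬ G.Adj v (p i))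
    (hs : ∃ i ≤ n, G.Adj s (p i)) :
    (∃ i ≤ n, G.Adj s (p i) ∧ (∀ k ≤ n, G.Adj s (p k) → k = i) ∧ Spider G D (p i) (p 0) (p n) z) ∨
    (∃ i, i + 1 ≤ n ∧ G.Adj s (p i) ∧ G.Adj s (p (i + 1)) ∧
      (∀ k ≤ n, G.Adj s (p k) → k = i ∨ k = i + 1) ∧
      Tri G D (p i) (p (i + 1)) s (p 0) (p n) z) ∨
    (∃ i j, i + 2 ≤ j ∧ j ≤ n ∧ G.Adj s (p i) ∧ G.Adj s (p j) ∧
      (∀ k ≤ n, G.Adj s (p k) → i ≤ k ∧ k ≤ j) ∧ Spider G D s (p 0) (p n) z) := by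
  classical
  obtain ⟨i0, hi0, hsi0⟩ := hs
  have hex : ∃ i, G.Adj s (p i) := ⟨i0, hsi0⟩
  have hi1 : G.Adj s (p (Nat.find hex)) := Nat.find_spec hex
  have hi2 : ∀ k, G.Adj s (p k) → Nat.find hex ≤ k := fun k hk => Nat.find_min' hex hk
  set i := Nat.find hex
  let P : ℕ → Prop := fun k => G.Adj s (p k)
  set j := Nat.findGreatest P n with hj
  have hjn : j ≤ n := Nat.findGreatest_le n
  have hPj : G.Adj s (p j) := Nat.findGreatest_spec (P := P) hi0 hsi0
  have hgt : ∀ k ≤ n, G.Adj s (p k) → k ≤ j := fun k h1 h2 => Nat.le_findGreatest (P := P) h1 h2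
  have hij : i ≤ j := hi2 j hPj
  have inj := hp.1
  have adj := hp.2.1
  have X := (hp.sub (Nat.zero_le i) (by omega)).symm
  have Y := hp.sub hjn le_rfl
  have sR := hR.left_mem
  have zR := hR.right_mem
  have sp : ∀ k ≤ n, s ≠ p k := hRp s sR
  rcases (by omega : i = j ∨ j = i + 1 ∨ i + 2 ≤ j) with h | h | h
  · left
    refine ⟨i, by omega, hi1, fun k hk hk' => by have := hi2 k hk'; have := hgt k hk hk'; omega, ?_⟩
    rw [← h] at Y
    have Z := IP.cons hR hi1.symm (fun hh => hRp _ hh i (by omega) rfl)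
      (fun v hv hne hadj => hRe v hv hne i (by omega) hadj.symm)
    refine ⟨_, _, _, X, Y, Z, ?_, ?_, ?_, ?_, ⟨?_, ?_⟩, ⟨?_, ?_⟩, ⟨?_, ?_⟩⟩
    · rintro _ ⟨k, ⟨-, hk⟩, rfl⟩
      have := hpD k
      rcases Nat.eq_zero_or_pos k with rfl | h'
      · simp
      · rcases (by omega : k = i ∨ k < i) with rfl | h'' 
        · simp
        · right; left; exact this h' (by omega)
    · rintro _ ⟨k, ⟨hk, hk'⟩, rfl⟩
      have := hpD k
      rcases (by omega : k = n ∨ k < n) with rfl | h'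
      · simp
      · rcases (by omega : k = i ∨ i < k) with rfl | h'' 
        · simp
        · right; left; exact this (by omega) (by omega)
    · rintro v (rfl | hv)
      · simp
      · right; exact hRD v hv
    · rcases (by omega : i = 0 ∨ i = n ∨ (0 < i ∧ i < n)) with h' | h' | h'
      · right; left; rw [h']
      · right; right; left; rw [h']
      · left; exact hpD i h'.1 h'.2
    · rintro _ ⟨k, hk, rfl⟩ ⟨l, hl, hlk⟩
      have := inj l (by have := hl.2; omega) k (by have := hk.2; omega) hlk
      have := hk.2; have := hl.1
      congr 1; omega
    · rintro _ ⟨k, hk, rfl⟩ _ ⟨l, hl, rfl⟩ h1 h2 h3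
      have := adj _ (by have := hk.2; omega) _ (by have := hl.2; omega) h3
      have : k ≠ i := by rintro rfl; exact h1 rfl
      have : l ≠ i := by rintro rfl; exact h2 rfl
      have := hk.2; have := hl.1
      omega
    · rintro _ ⟨k, hk, rfl⟩ (h' | h')
      · exact h'
      · exact absurd rfl (hRp _ h' k (by have := hk.2; omega))
    · rintro _ ⟨k, hk, rfl⟩ v (rfl | hv) h1 h2 h3
      · exact h2 rfl
      · by_cases hvs : v = s
        · subst hvs
          have := hi2 k h3.symm; have := hk.2
          exact h1 (by congr 1; omega)
        · exact hRe v hv hvs k (by have := hk.2; omega) h3.symm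
    · rintro _ ⟨k, hk, rfl⟩ (h' | h')
      · exact h'
      · exact absurd rfl (hRp _ h' k (by have := hk.2; omega))
    · rintro _ ⟨k, hk, rfl⟩ v (rfl | hv) h1 h2 h3
      · exact h2 rfl
      · by_cases hvs : v = s
        · subst hvs
          have := hgt k hk.2 h3.symm; have := hk.1
          exact h1 (by congr 1; omega)
        · exact hRe v hv hvs k hk.2 h3.symm
  · right; left
    rw [h] at Y hPj
    refine ⟨i, by omega, hi1, hPj, fun k hk hk' => by have := hi2 k hk'; have := hgt k hk hk'; omega, ?_⟩
    refine ⟨_, _, _, X, Y, hR, ⟨hp.2.2 i (by omega), hPj.symm, hi1.symm⟩, ?_, ?_, ?_,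
      ⟨?_, ?_⟩, ⟨?_, ?_⟩, ⟨?_, ?_⟩⟩
    · rintro _ ⟨k, ⟨-, hk⟩, rfl⟩
      have := hpD k
      rcases Nat.eq_zero_or_pos k with rfl | h'
      · simp
      · left; exact this h' (by omega)
    · rintro _ ⟨k, ⟨hk, hk'⟩, rfl⟩
      have := hpD k
      rcases (by omega : k = n ∨ k < n) with rfl | h'
      · simp
      · left; exact this (by omega) (by omega)
    · exact hRD
    · rintro _ ⟨k, hk, rfl⟩ ⟨l, hl, hlk⟩
      have := inj l (by have := hl.2; omega) k (by have := hk.2; omega) hlk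
      have := hk.2; have := hl.1
      omega
    · rintro _ ⟨k, hk, rfl⟩ _ ⟨l, hl, rfl⟩ h3
      have := adj _ (by have := hk.2; omega) _ (by have := hl.2; omega) h3
      have := hk.2; have := hl.1
      constructor <;> congr 1 <;> omega
    · rintro _ ⟨k, hk, rfl⟩ h'
      exact absurd rfl (hRp _ h' k (by have := hk.2; omega))
    · rintro _ ⟨k, hk, rfl⟩ v hv h3
      by_cases hvs : v = s
      · subst hvs
        have := hi2 k h3.symm; have := hk.2
        exact ⟨by congr 1; omega, rfl⟩
      · exact absurd h3.symm (hRe v hv hvs k (by have := hk.2; omega))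
    · rintro _ ⟨k, hk, rfl⟩ h'
      exact absurd rfl (hRp _ h' k (by have := hk.2; omega))
    · rintro _ ⟨k, hk, rfl⟩ v hv h3
      by_cases hvs : v = s
      · subst hvs
        have := hgt k hk.2 h3.symm; have := hk.1
        exact ⟨by congr 1; omega, rfl⟩
      · exact absurd h3.symm (hRe v hv hvs k (by have := hk.2; omega))
  · right; right
    refine ⟨i, j, h, hjn, hi1, hPj, fun k hk hk' => ⟨hi2 k hk', hgt k hk hk'⟩, ?_⟩
    have X' := IP.cons X hi1 (by rintro ⟨k, hk, hh⟩; exact sp k (by have := hk.2; omega) hh.symm)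
      (by rintro _ ⟨k, hk, rfl⟩ hne hadj
          have := hi2 k hadj; have := hk.2
          exact hne (by congr 1; omega))
    have Y' := IP.cons Y hPj (by rintro ⟨k, hk, hh⟩; exact sp k (by have := hk.2; omega) hh.symm)
      (by rintro _ ⟨k, hk, rfl⟩ hne hadj
          have := hgt k hk.2 hadj; have := hk.1
          exact hne (by congr 1; omega))
    refine ⟨_, _, _, X', Y', hR, ?_, ?_, fun v hv => Or.inr (hRD v hv), ?_, ⟨?_, ?_⟩, ⟨?_, ?_⟩, ⟨?_, ?_⟩⟩
    · rintro _ (rfl | ⟨k, ⟨-, hk⟩, rfl⟩)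
      · simp
      have := hpD k
      rcases Nat.eq_zero_or_pos k with rfl | h'
      · simp
      · right; left; exact this h' (by omega)
    · rintro _ (rfl | ⟨k, ⟨hk, hk'⟩, rfl⟩)
      · simp
      have := hpD k
      rcases (by omega : k = n ∨ k < n) with rfl | h'
      · simp
      · right; left; exact this (by omega) (by omega)
    · have := hRD s sR; tauto
    · rintro _ (rfl | ⟨k, hk, rfl⟩) (h' | ⟨l, hl, hlk⟩)
      · rfl
      · rfl
      · exact h'
      have := inj l (by have := hl.2; omega) k (by have := hk.2; omega) hlk
      have := hk.2; have := hl.1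
      omega
    · rintro _ (rfl | ⟨k, hk, rfl⟩) _ (rfl | ⟨l, hl, rfl⟩) h1 h2 h3
      · exact h1 rfl
      · exact h1 rfl
      · exact h2 rfl
      have := adj _ (by have := hk.2; omega) _ (by have := hl.2; omega) h3
      have := hk.2; have := hl.1
      omega
    · rintro _ (rfl | ⟨k, hk, rfl⟩) h'
      · rfl
      · exact absurd rfl (hRp _ h' k (by have := hk.2; omega))
    · rintro _ (rfl | ⟨k, hk, rfl⟩) v hv h1 h2 h3
      · exact h1 rfl
      · exact hRe v hv h2 k (by have := hk.2; omega) h3.symm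
    · rintro _ (rfl | ⟨k, hk, rfl⟩) h'
      · rfl
      · exact absurd rfl (hRp _ h' k (by have := hk.2; omega))
    · rintro _ (rfl | ⟨k, hk, rfl⟩) v hv h1 h2 h3
      · exact h1 rfl
      · exact hRe v hv h2 k (by have := hk.2; omega) h3.symm

lemma conn_path {D : Set V} (h : Conn G D) {x y : V} (hxy : x ≠ y) (nxy : ¬ G.Adj x y)
    (ax : ∃ a ∈ D, G.Adj x a) (ay : ∃ a ∈ D, G.Adj y a) :
    ∃ n p, PF G n p ∧ p 0 = x ∧ p n = y ∧ 2 ≤ n ∧ ∀ i, 0 < i → i < n → p i ∈ D := by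
  obtain ⟨a, ha, hxa⟩ := ax
  obtain ⟨b, hb, hyb⟩ := ay
  have h2 : Conn G (insert x (insert y D)) := (h.insert hb hyb).insert (a := a) (by simp [ha]) hxa
  obtain ⟨S, hS, n, p, hp, p0, pn, hSm⟩ := h2.ip (a := x) (b := y) (by simp) (by simp)
  refine ⟨n, p, hp, p0, pn, ?_, ?_⟩
  · rcases (by omega : n = 0 ∨ n = 1 ∨ 2 ≤ n) with h | h | h
    · subst h; exact absurd (p0.symm.trans pn) hxy
    · subst h; have := hp.2.2 0 (by omega); rw [p0, pn] at this; exact absurd this nxy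
    · exact h
  · intro i h0 h1
    have := hS ((hSm (p i)).2 ⟨i, by omega, rfl⟩)
    rcases this with h' | h' | h'
    · have := hp.1 i (by omega) 0 (by omega) (h'.trans p0.symm); omega
    · have := hp.1 i (by omega) n (by omega) (h'.trans pn.symm); omega
    · exact h'

lemma exist3 {D : Set V} (h : Conn G D) {x y z : V} (hxy : x ≠ y) (hxz : x ≠ z) (hyz : y ≠ z)
    (nxy : ¬ G.Adj x y) (hz : z ∉ D)
    (ax : ∃ a ∈ D, G.Adj x a) (ay : ∃ a ∈ D, G.Adj y a) (az : ∃ a ∈ D, G.Adj z a) :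
    (∃ a, Spider G D a x y z) ∨ ∃ a b c, Tri G D a b c x y z := by
  obtain ⟨n, p, hp, p0, pn, hn, hpD⟩ := conn_path h hxy nxy ax ay
  obtain ⟨b, hb, hzb⟩ := az
  have h2 := h.insert hb hzb
  obtain ⟨T, hT, hTi⟩ := h2.ip (a := z) (b := p 1) (by simp)
    (Set.mem_insert_of_mem _ (hpD 1 (by omega) (by omega)))
  obtain ⟨t, R, hR, hRT, hRS, ⟨_, ⟨i, hi, rfl⟩, hti⟩, hRe⟩ := reach (S := p '' Set.Icc 0 n) hTi (by
    rintro ⟨i, hi, h'⟩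
    have := hi.2
    rcases (by omega : i = 0 ∨ i = n ∨ (0 < i ∧ i < n)) with h | h | h
    · subst h; exact hxz (p0.symm.trans h')
    · subst h; exact hyz (pn.symm.trans h')
    · exact hz (h' ▸ hpD i h.1 h.2)) ⟨1, ⟨by omega, by omega⟩, rfl⟩
  have := pathStruct hp (D := D) (by omega) hpD hR.symm (fun v hv => by
    have := hT (hRT hv)
    rcases this with h | h
    · exact Or.inr h
    · exact Or.inl h) (fun v hv i hi h => hRS v hv ⟨i, ⟨by omega, hi⟩, h.symm⟩)
    (fun v hv hne i hi => hRe v hv hne _ ⟨i, ⟨by omega, hi⟩, rfl⟩) ⟨i, hi.2, hti⟩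
  rw [p0, pn] at this
  rcases this with ⟨i, _, _, _, h⟩ | ⟨i, _, _, _, _, h⟩ | ⟨_, _, _, _, _, _, _, h⟩
  · exact Or.inl ⟨_, h⟩
  · exact Or.inr ⟨_, _, _, h⟩
  · exact Or.inl ⟨_, h⟩

lemma theta2 {n : ℕ} {p : ℕ → V} (hp : PF G n p) {T : Set V} (hT : IP G (p 0) (p n) T)
    (hd : ∀ k, 0 < k → k < n → p k ∉ T)
    (he : ∀ k, 0 < k → k < n → ∀ w ∈ T, w ≠ p 0 → w ≠ p n → ¬ G.Adj (p k) w)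
    {v : V} (hv : ∀ k ≤ n, v ≠ p k) (hvT : v ∉ T) (nvT : ∀ w ∈ T, ¬ G.Adj v w)
    {i j : ℕ} (hi : 0 < i) (hij : i + 2 ≤ j) (hj : j < n)
    (vi : G.Adj v (p i)) (vj : G.Adj v (p j))
    (only : ∀ k ≤ n, G.Adj v (p k) → k = i ∨ k = j) : ContainsTheta G := by
  have inj := hp.1
  have adj := hp.2.1
  have S1 := hp.sub (i := i) (j := j) (by omega) (by omega)
  have S2 : IP G (p i) (p j) _ := IP.cons (IP.edge vj) vi.symm (by
    rintro (h | h)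
    · exact hv i (by omega) h.symm
    · have := inj i (by omega) j (by omega) h; omega) (by
    rintro w (rfl | h) hne hadj
    · exact hne rfl
    · rw [Set.mem_singleton_iff.1 h] at hadj
      have := adj i (by omega) j (by omega) hadj; omega)
  have L := (hp.sub (i := 0) (j := i) (by omega) (by omega)).symm
  have M := (hp.sub (i := j) (j := n) (by omega) (by omega)).symm
  have LT := L.append hT (by
    rintro _ ⟨k, hk, rfl⟩ hk'
    rcases Nat.eq_zero_or_pos k with rfl | h
    · rfl
    · exact absurd hk' (hd k h (by have := hk.2; omega))) (by
    rintro _ ⟨k, hk, rfl⟩ w hw h1 h2 h3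
    have hk2 := hk.2
    have k0 : k ≠ 0 := by rintro rfl; exact h1 rfl
    by_cases hw' : w = p n
    · subst hw'; have := adj k (by omega) n (by omega) h3; omega
    · exact he k (by omega) (by omega) w hw h2 hw' h3)
  have S3 := LT.append M (by
    rintro w (⟨l, hl, rfl⟩ | hw) ⟨k, hk, hh⟩
    · have := hk.1; have := hk.2; have := hl.2
      have := inj k (by omega) l (by omega) hh; omega
    · subst hh
      by_contra hne
      have := hk.1
      exact hd k (by omega) (lt_of_le_of_ne hk.2 (by rintro rfl; exact hne rfl)) hw) (by
    rintro w (⟨l, hl, rfl⟩ | hw) _ ⟨k, hk, rfl⟩ h1 h2 h3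
    · have := hk.1; have := hk.2; have := hl.2
      have := adj l (by omega) k (by omega) h3; omega
    · have := hk.1
      have hkn : k < n := lt_of_le_of_ne hk.2 (by rintro rfl; exact h2 rfl)
      by_cases hw' : w = p 0
      · subst hw'; have := adj 0 (by omega) k (by omega) h3; omega
      · exact he k (by omega) hkn w hw hw' h1 h3.symm)
  refine theta_of (a := p i) (b := p j) ?_ ?_ S1 S2 S3 ?_ ?_ ?_ ?_ ?_ ?_
  · intro h; have := inj i (by omega) j (by omega) h; omega
  · intro h; have := adj i (by omega) j (by omega) h; omega
  · rintro _ ⟨k, hk, rfl⟩ (h | h | h)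
    · exact Or.inl h
    · exact absurd h.symm (hv k (by have := hk.2; omega))
    · exact Or.inr h
  · rintro _ ⟨k, hk, rfl⟩ ((⟨l, hl, h⟩ | h) | ⟨l, hl, h⟩)
    · have := hk.1; have := hk.2; have := hl.2
      have := inj l (by omega) k (by omega) h
      left; congr 1; omega
    · have := hk.1; have := hk.2
      exact absurd h (hd k (by omega) (by omega))
    · have := hk.1; have := hk.2; have := hl.1; have := hl.2
      have := inj l (by omega) k (by omega) h
      right; congr 1; omega
  · rintro w (rfl | rfl | rfl) hw
    · exact Or.inl rfl
    · exfalso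
      rcases hw with (⟨l, hl, h⟩ | h) | ⟨l, hl, h⟩
      · have := hl.2; exact hv l (by omega) h.symm
      · exact hvT h
      · have := hl.2; exact hv l (by omega) h.symm
    · exact Or.inr rfl
  · rintro _ ⟨k, hk, rfl⟩ w hw h1 h2 h3 h4 h5
    have := hk.2
    rcases hw with rfl | rfl | rfl
    · exact h3 rfl
    · rcases only k (by omega) h5.symm with rfl | rfl
      · exact h1 rfl
      · exact h2 rfl
    · exact h4 rfl
  · rintro _ ⟨k, hk, rfl⟩ w hw h1 h2 h3 h4 h5
    have hk1 := hk.1; have hk2 := hk.2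
    have : k ≠ i := by rintro rfl; exact h1 rfl
    have : k ≠ j := by rintro rfl; exact h2 rfl
    rcases hw with (⟨l, hl, rfl⟩ | hw) | ⟨l, hl, rfl⟩
    · have := hl.2
      have := adj k (by omega) l (by omega) h5
      have : l ≠ i := by rintro rfl; exact h3 rfl
      omega
    · by_cases e0 : w = p 0
      · subst e0; have := adj k (by omega) 0 (by omega) h5; omega
      by_cases en : w = p n
      · subst en; have := adj k (by omega) n (by omega) h5; omega
      exact he k (by omega) (by omega) w hw e0 en h5
    · have := hl.1; have := hl.2
      have := adj k (by omega) l (by omega) h5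
      have : l ≠ j := by rintro rfl; exact h4 rfl
      omega
  · rintro w' (rfl | rfl | rfl) w hw h1 h2 h3 h4 h5
    · exact h1 rfl
    · rcases hw with (⟨l, hl, rfl⟩ | hw) | ⟨l, hl, rfl⟩
      · have := hl.2
        rcases only l (by omega) h5 with rfl | rfl
        · exact h3 rfl
        · exact h4 rfl
      · exact nvT w hw h5
      · have := hl.2
        rcases only l (by omega) h5 with rfl | rfl
        · exact h3 rfl
        · exact h4 rfl
    · exact h2 rfl

lemma IP.first {a b : V} {S : Set V} (h : IP G a b S) (hab : a ≠ b) :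
    ∃ u ∈ S, G.Adj a u := by
  obtain ⟨n, p, hp, rfl, rfl, hS⟩ := h
  have : n ≠ 0 := by rintro rfl; exact hab rfl
  exact ⟨p 1, (hS _).2 ⟨1, by omega, rfl⟩, hp.2.2 0 (by omega)⟩

lemma Spider.two {D : Set V} {x y z : V} (h : Spider G D z x y z) (hx : z ≠ x) (hy : z ≠ y)
    (nx : ¬ G.Adj z x) (ny : ¬ G.Adj z y) :
    ∃ u ∈ D, ∃ v ∈ D, u ≠ v ∧ G.Adj z u ∧ G.Adj z v := by
  obtain ⟨X, Y, Z, i, j, k, mx, my, mz, ha, s1, s2, s3⟩ := h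
  obtain ⟨u, hu, hzu⟩ := i.first hx
  obtain ⟨v, hv, hzv⟩ := j.first hy
  have h1 := mx u hu; have h2 := my v hv
  have := hzu.ne; have := hzv.ne
  have := s1.1 u hu
  grind

lemma Tri.two {D : Set V} {a b x y z : V} (h : Tri G D a b z x y z) 
    (nx : ¬ G.Adj z x) (ny : ¬ G.Adj z y) :
    ∃ u ∈ D, ∃ v ∈ D, u ≠ v ∧ G.Adj z u ∧ G.Adj z v := by
  obtain ⟨X, Y, Z, i, j, k, ⟨e1, e2, e3⟩, mx, my, mz, s1, s2, s3⟩ := h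
  have h1 := mx a i.left_mem; have h2 := my b j.left_mem
  have := e3.symm; have := e2.symm; have := e1.ne
  grind

/-- A spider contains a path between two of its ends through its center. -/
lemma Spider.path {D : Set V} {a x y z : V} (h : Spider G D a x y z) (ha : a ∈ D) :
    ∃ T, IP G x y T ∧ a ∈ T ∧ ∀ v ∈ T, v ∈ D ∨ v = x ∨ v = y := by
  obtain ⟨X, Y, Z, i, j, k, mx, my, mz, -, s1, s2, s3⟩ := h
  refine ⟨X ∪ Y, i.symm.append j s1.1 s1.2, Or.inl i.left_mem, ?_⟩
  rintro v (hv | hv)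
  · have := mx v hv; grind
  · have := my v hv; grind

end S10

namespace S10
variable {G : SimpleGraph V}

def Att (G : SimpleGraph V) (C D : Set V) : Prop := ∀ c ∈ C, ∃ a ∈ D, G.Adj c a

def Priv (G : SimpleGraph V) (A : Set V) (c v : V) : Prop :=
  v ∈ A ∧ G.Adj c v ∧ ∀ a ∈ A, G.Adj c a → a = v

def NCut (G : SimpleGraph V) (A : Set V) (v : V) : Prop :=
  v ∈ A ∧ Conn G (A \ {v}) ∧ (A \ {v}).Nonempty

structure MinA (G : SimpleGraph V) (C A : Set V) : Prop where
  ne : A.Nonempty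
  conn : Conn G A
  att : Att G C A
  min : ∀ A' ⊆ A, A'.Nonempty → Conn G A' → Att G C A' → A' = A

lemma exists_minA {C A : Set V} (ne : A.Nonempty) (conn : Conn G A) (att : Att G C A) :
    ∃ A' ⊆ A, MinA G C A' := by
  obtain ⟨A', hA', hm⟩ := Set.Finite.exists_le_minimal
    (s := {A' : Set V | A'.Nonempty ∧ Conn G A' ∧ Att G C A'}) (Set.toFinite _)
    (a := A) ⟨ne, conn, att⟩
  refine ⟨A', hA', hm.prop.1, hm.prop.2.1, hm.prop.2.2, ?_⟩
  intro A'' h1 h2 h3 h4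
  exact Set.Subset.antisymm h1 (hm.le_of_le (⟨h2, h3, h4⟩ : A'' ∈ {A' : Set V | A'.Nonempty ∧ Conn G A' ∧ Att G C A'}) h1)

lemma MinA.priv {C A : Set V} (h : MinA G C A) {v : V} (hv : NCut G A v) :
    ∃ c ∈ C, Priv G A c v := by
  by_contra hc
  push Not at hc
  have := h.min (A \ {v}) Set.sdiff_subset hv.2.2 hv.2.1 (by
    intro c hcC
    obtain ⟨a, ha, hca⟩ := h.att c hcC
    by_contra hno
    push Not at hno
    have key : ∀ b ∈ A, G.Adj c b → b = v := by
      intro b hb hcb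
      by_contra hbv
      exact hno b ⟨hb, hbv⟩ hcb
    have := key a ha hca
    subst this
    exact hc c hcC ⟨ha, hca, key⟩)
  have h1 := hv.1
  rw [← this] at h1
  exact h1.2 rfl

lemma RT.cross {D Q : Set V} {a b : V} (h : Relation.ReflTransGen (Rl G D) a b) (ha : a ∈ Q)
    (hb : b ∉ Q) : ∃ u ∈ Q, ∃ v, v ∉ Q ∧ Rl G D u v := by
  induction h with
  | refl => exact absurd ha hb
  | @tail c d _ h2 ih =>
    by_cases hc : c ∈ Q
    · exact ⟨c, hc, d, hb, h2⟩
    · exact ih hc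

lemma exNC {A P : Set V} (hA : Conn G A) (hP : P.Nonempty) (hPA : P ⊆ A) (hne : P ≠ A)
    (hPc : Conn G P) : ∃ q, q ∉ P ∧ NCut G A q := by
  obtain ⟨Q, hPQ, hm⟩ := Set.Finite.exists_le_maximal
    (s := {Q : Set V | Q ⊆ A ∧ Q ≠ A ∧ Conn G Q}) (Set.toFinite _)
    (a := P) ⟨hPA, hne, hPc⟩
  obtain ⟨hQA, hQne, hQc⟩ := hm.prop
  obtain ⟨a0, ha0⟩ := hP
  have ha0Q : a0 ∈ Q := hPQ ha0
  obtain ⟨b, hb, hbQ⟩ : ∃ b ∈ A, b ∉ Q := by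
    by_contra hc; push Not at hc
    exact hQne (Set.Subset.antisymm hQA hc)
  obtain ⟨u, hu, v, hv, huv⟩ := RT.cross (hA a0 (hQA ha0Q) b hb) ha0Q hbQ
  have hc2 := hQc.insert hu huv.1.symm
  have hsub : insert v Q ⊆ A := Set.insert_subset huv.2.2 hQA
  have heq : insert v Q = A := by
    by_contra hne'
    have := hm.le_of_ge (⟨hsub, hne', hc2⟩ : insert v Q ∈ {Q : Set V | Q ⊆ A ∧ Q ≠ A ∧ Conn G Q})
      (Set.subset_insert _ _)
    exact hv (this (Set.mem_insert _ _))
  have hd : A \ {v} = Q := by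
    rw [← heq]; ext w; simp only [Set.mem_sdiff, Set.mem_insert_iff, Set.mem_singleton_iff]
    constructor
    · tauto
    · intro hw; exact ⟨Or.inr hw, fun h => hv (h ▸ hw)⟩
  refine ⟨v, fun h => hv (hPQ h), huv.2.2, ?_, ?_⟩
  · rw [hd]; exact hQc
  · rw [hd]; exact ⟨a0, ha0Q⟩

section K
variable {C A B : Set V}

lemma Spider.not_priv {D : Set V} {x y z p : V} (hs : Spider G D z x y z)
    (hx : z ≠ x) (hy : z ≠ y) (nx : ¬ G.Adj z x) (ny : ¬ G.Adj z y) (hp : Priv G D z p) : False := by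
  obtain ⟨u, hu, v, hv, huv, h1, h2⟩ := hs.two hx hy nx ny
  exact huv ((hp.2.2 u hu h1).trans (hp.2.2 v hv h2).symm)

lemma Tri.not_priv {D : Set V} {a b x y z p : V} (hs : Tri G D a b z x y z)
    (nx : ¬ G.Adj z x) (ny : ¬ G.Adj z y) (hp : Priv G D z p) : False := by
  obtain ⟨u, hu, v, hv, huv, h1, h2⟩ := hs.two nx ny
  exact huv ((hp.2.2 u hu h1).trans (hp.2.2 v hv h2).symm)

lemma Spider.center_mem (h : Ctx G C A B) {a x y z p q r : V} (hx : x ∈ C) (hy : y ∈ C) (hz : z ∈ C)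
    (hxy : x ≠ y) (hxz : x ≠ z) (hyz : y ≠ z) (px : Priv G A x p) (py : Priv G A y q)
    (pz : Priv G A z r) (s : Spider G A a x y z) : a ∈ A := by
  have hi := h.ind
  have h' := s
  obtain ⟨X, Y, Z, i, j, k, mx, my, mz, ha, s1, s2, s3⟩ := s
  rcases ha with ha | rfl | rfl | rfl
  · exact ha
  · exact (h'.swap12.swap23.not_priv hxy hxz (hi _ hx _ hy) (hi _ hx _ hz) px).elim
  · exact (h'.swap23.not_priv hxy.symm hyz (hi _ hy _ hx) (hi _ hy _ hz) py).elim
  · exact (h'.not_priv hxz.symm hyz.symm (hi _ hz _ hx) (hi _ hz _ hy) pz).elim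

lemma Tri.mem (h : Ctx G C A B) {a b c x y z p q r : V} (hx : x ∈ C) (hy : y ∈ C) (hz : z ∈ C)
    (px : Priv G A x p) (py : Priv G A y q)
    (pz : Priv G A z r) (s : Tri G A a b c x y z) : a ∈ A ∧ b ∈ A ∧ c ∈ A := by
  have hi := h.ind
  have h' := s
  obtain ⟨X, Y, Z, i, j, k, -, mx, my, mz, s1, s2, s3⟩ := s
  refine ⟨?_, ?_, ?_⟩
  · rcases mx a i.left_mem with h1 | rfl
    · exact h1
    · exact (h'.swap12.swap23.not_priv (hi _ hx _ hy) (hi _ hx _ hz) px).elim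
  · rcases my b j.left_mem with h1 | rfl
    · exact h1
    · exact (h'.swap23.not_priv (hi _ hy _ hx) (hi _ hy _ hz) py).elim
  · rcases mz c k.left_mem with h1 | rfl
    · exact h1
    · exact (h'.not_priv (hi _ hz _ hx) (hi _ hz _ hy) pz).elim

lemma Tri.mem' {D : Set V} {a b c x y z : V} (s : Tri G D a b c x y z) :
    (a ∈ D ∨ a = x) ∧ (b ∈ D ∨ b = y) ∧ (c ∈ D ∨ c = z) := by
  obtain ⟨X, Y, Z, i, j, k, -, mx, my, mz, s1, s2, s3⟩ := s
  exact ⟨mx a i.left_mem, my b j.left_mem, mz c k.left_mem⟩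

lemma Spider.mem' {D : Set V} {a x y z : V} (s : Spider G D a x y z) :
    a ∈ D ∨ a = x ∨ a = y ∨ a = z := by
  obtain ⟨X, Y, Z, i, j, k, mx, my, mz, ha, s1, s2, s3⟩ := s
  exact ha

lemma K1 (h : Ctx G C A B) (cB : Conn G B) (aB : Att G C B)
    {a b c x y z p q r : V} (hx : x ∈ C) (hy : y ∈ C) (hz : z ∈ C)
    (hxy : x ≠ y) (hxz : x ≠ z) (hyz : y ≠ z) (px : Priv G A x p) (py : Priv G A y q)
    (pz : Priv G A z r) : ¬ Tri G A a b c x y z := by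
  intro s
  obtain ⟨m1, m2, m3⟩ := s.mem h hx hy hz px py pz
  have := h.AC; have := h.AB
  rcases exist3 cB hxy hxz hyz (h.ind _ hx _ hy) (fun hh => h.BC _ hh hz) (aB _ hx) (aB _ hy) (aB _ hz)
    with ⟨b', t⟩ | ⟨a', b', c', t⟩
  · have := ST h.symm hx hy hz hxy hxz hyz t s
    have := t.mem'
    grind
  · have := TT h hx hy hz hxy hxz hyz s t
    have := t.mem'
    grind

lemma K2 (h : Ctx G C A B) (cB : Conn G B) (aB : Att G C B)
    {x y z p q r : V} (hx : x ∈ C) (hy : y ∈ C) (hz : z ∈ C)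
    (hxy : x ≠ y) (hxz : x ≠ z) (hyz : y ≠ z) (px : Priv G A x p) (py : Priv G A y q)
    (pz : Priv G A z r) : ∃ w, (w = p ∨ w = q ∨ w = r) ∧ ∀ a, Spider G A a x y z → a = w := by
  have hAC := h.AC; have hAB := h.AB
  rcases exist3 cB hxy hxz hyz (h.ind _ hx _ hy) (fun hh => h.BC _ hh hz) (aB _ hx) (aB _ hy) (aB _ hz)
    with ⟨b', t⟩ | ⟨a', b', c', t⟩
  · have tm := t.mem'
    have key : ∀ a, Spider G A a x y z → G.Adj a b' ∧ a ∈ A := by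
      intro a s
      have hm := s.center_mem h hx hy hz hxy hxz hyz px py pz
      rcases SS h hx hy hz hxy hxz hyz s t with h1 | h1
      · exfalso; grind
      · exact ⟨h1, hm⟩
    rcases tm with tm | rfl | rfl | rfl
    · exact ⟨p, Or.inl rfl, fun a s => absurd (key a s).1 (h.nAB _ (key a s).2 _ tm)⟩
    · exact ⟨p, Or.inl rfl, fun a s => px.2.2 _ (key a s).2 (key a s).1.symm⟩
    · exact ⟨q, Or.inr (Or.inl rfl), fun a s => py.2.2 _ (key a s).2 (key a s).1.symm⟩
    · exact ⟨r, Or.inr (Or.inr rfl), fun a s => pz.2.2 _ (key a s).2 (key a s).1.symm⟩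
  · refine ⟨p, Or.inl rfl, fun a s => ?_⟩
    have hm := s.center_mem h hx hy hz hxy hxz hyz px py pz
    have := ST h hx hy hz hxy hxz hyz s t
    have := t.mem'
    exfalso; grind

lemma ext {u v c d : V} {S : Set V} (hS : IP G u v S) (hc : c ∉ S) (hd : d ∉ S) (hcd : c ≠ d)
    (ncd : ¬ G.Adj c d) (cu : G.Adj c u) (cS : ∀ a ∈ S, G.Adj c a → a = u)
    (dv : G.Adj d v) (dS : ∀ a ∈ S, G.Adj d a → a = v) :
    ∃ N p, PF G N p ∧ 2 ≤ N ∧ p 0 = c ∧ p N = d ∧ p 1 = u ∧ p (N - 1) = v ∧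
      (∀ i, 0 < i → i < N → p i ∈ S) ∧ ∀ w ∈ S, ∃ i, 0 < i ∧ i < N ∧ p i = w := by
  have h1 := (IP.cons hS cu hc (fun w hw hne hadj => hne (cS w hw hadj))).symm
  have h2 := (IP.cons h1 dv (by simp [hd, hcd.symm]) (by
    rintro w (rfl | hw) hne hadj
    · exact ncd hadj.symm
    · exact hne (dS w hw hadj))).symm
  obtain ⟨N, p, hp, p0, pN, hm⟩ := h2
  have hN : 2 ≤ N := by
    rcases (by omega : N = 0 ∨ N = 1 ∨ 2 ≤ N) with h | h | h
    · subst h; exact absurd (p0.symm.trans pN) hcd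
    · subst h; have := hp.2.2 0 (by omega); rw [p0, pN] at this; exact absurd this ncd
    · exact h
  have hint : ∀ i, 0 < i → i < N → p i ∈ S := by
    intro i h0 h1
    rcases (hm (p i)).2 ⟨i, by omega, rfl⟩ with h' | h' | h'
    · have := hp.1 i (by omega) N (by omega) (h'.trans pN.symm); omega
    · have := hp.1 i (by omega) 0 (by omega) (h'.trans p0.symm); omega
    · exact h'
  refine ⟨N, p, hp, hN, p0, pN, ?_, ?_, hint, ?_⟩
  · refine cS _ (hint 1 (by omega) (by omega)) ?_
    rw [← p0]; exact hp.2.2 0 (by omega)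
  · refine dS _ (hint (N - 1) (by omega) (by omega)) ?_
    have := hp.2.2 (N - 1) (by omega)
    rw [show N - 1 + 1 = N by omega, pN] at this
    exact this.symm
  · intro w hw
    obtain ⟨i, hi, rfl⟩ := (hm w).1 (Or.inr (Or.inr hw))
    refine ⟨i, ?_, ?_, rfl⟩
    · rcases Nat.eq_zero_or_pos i with rfl | h
      · rw [p0] at hw; exact absurd hw hc
      · exact h
    · refine lt_of_le_of_ne hi ?_
      rintro rfl; rw [pN] at hw; exact hd hw

lemma PF.rt {n : ℕ} {p : ℕ → V} (hp : PF G n p) {D : Set V} {a : ℕ} (b : ℕ) (hab : a ≤ b) (hb : b ≤ n)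
    (hD : ∀ k, a ≤ k → k ≤ b → p k ∈ D) : Relation.ReflTransGen (Rl G D) (p a) (p b) := by
  induction b, hab using Nat.le_induction with
  | base => exact Relation.ReflTransGen.refl
  | succ b hab ih =>
    exact (ih (by omega) (fun k h1 h2 => hD k h1 (by omega))).tail
      ⟨hp.2.2 b (by omega), hD b hab (by omega), hD (b + 1) (by omega) le_rfl⟩

end K
end S10

namespace S10
variable {G : SimpleGraph V}

structure PD (G : SimpleGraph V) (C A S : Set V) (u v c d : V) (N : ℕ) (p : ℕ → V) : Prop where
  cC : c ∈ C
  dC : d ∈ C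
  pc : Priv G A c u
  pd : Priv G A d v
  uv : u ≠ v
  SA : S ⊆ A
  ip : IP G u v S
  pf : PF G N p
  N2 : 2 ≤ N
  p0 : p 0 = c
  pN : p N = d
  p1 : p 1 = u
  pN1 : p (N - 1) = v
  mem : ∀ i, 0 < i → i < N → p i ∈ S
  sur : ∀ w ∈ S, ∃ i, 0 < i ∧ i < N ∧ p i = w

lemma PD.cd {C A S : Set V} {u v c d : V} {N : ℕ} {p : ℕ → V} (P : PD G C A S u v c d N p) :
    c ≠ d := by
  rintro rfl
  exact P.uv ((P.pd.2.2 u P.pc.1 P.pc.2.1))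

lemma exists_PD {C A S : Set V} (hi : ∀ x ∈ C, ∀ y ∈ C, ¬ G.Adj x y) (hAC : ∀ v ∈ A, v ∉ C)
    {u v c d : V} (hc : c ∈ C) (hd : d ∈ C)
    (pc : Priv G A c u) (pd : Priv G A d v) (uv : u ≠ v) (SA : S ⊆ A) (ip : IP G u v S) :
    ∃ N p, PD G C A S u v c d N p := by
  have hcd : c ≠ d := by
    rintro rfl
    exact uv ((pd.2.2 u pc.1 pc.2.1))
  obtain ⟨N, p, h1, h2, h3, h4, h5, h6, h7, h8⟩ := ext ip (fun h => hAC _ (SA h) hc)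
    (fun h => hAC _ (SA h) hd) hcd (hi _ hc _ hd) pc.2.1 (fun a ha => pc.2.2 a (SA ha)) pd.2.1
    (fun a ha => pd.2.2 a (SA ha))
  exact ⟨N, p, hc, hd, pc, pd, uv, SA, ip, h1, h2, h3, h4, h5, h6, h7, h8⟩

section
variable {C A B S : Set V} {u v c d : V} {N : ℕ} {p : ℕ → V}

lemma Priv.ne {x y a b : V} (h1 : Priv G A x a) (h2 : Priv G A y b) (hab : a ≠ b) : x ≠ y := by
  rintro rfl
  exact hab (h2.2.2 a h1.1 h1.2.1)

lemma claimQ (h : Ctx G C A B) (cA : Conn G A) (cB : Conn G B) (aB : Att G C B)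
    (P : PD G C A S u v c d N p) (nu : NCut G A u) (nv : NCut G A v)
    (hmax : ∀ u v S', NCut G A u → NCut G A v → u ≠ v → S' ⊆ A → IP G u v S' → S ⊆ S' → S' ⊆ S)
    {q cq : V} (nq : NCut G A q) (hqS : q ∉ S) (hcq : cq ∈ C) (pq : Priv G A cq q) :
    ∃ i j, 0 < i ∧ i + 2 ≤ j ∧ j < N ∧ G.Adj q (p i) ∧ G.Adj q (p j) ∧
      ∀ k ≤ N, G.Adj q (p k) → i ≤ k ∧ k ≤ j := by
  have uS : u ∈ S := P.ip.left_mem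
  have vS : v ∈ S := P.ip.right_mem
  have qu : q ≠ u := fun hh => hqS (hh ▸ uS)
  have qv : q ≠ v := fun hh => hqS (hh ▸ vS)
  have N2 := P.N2
  have ci : ∀ i ≤ N, p i ∈ S ∨ p i = c ∨ p i = d := by
    intro i hi
    rcases (by omega : i = 0 ∨ i = N ∨ (0 < i ∧ i < N)) with h | h | h
    · right; left; rw [h]; exact P.p0
    · right; right; rw [h]; exact P.pN
    · left; exact P.mem i h.1 h.2
  obtain ⟨T, hTA, hT⟩ := cA.ip nq.1 (P.SA uS)
  obtain ⟨t, R, hR, hRT, hRS, ⟨s, hsS, hts⟩, hRe⟩ := reach (S := S) hT hqS uS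
  have hRA : R ⊆ A := hRT.trans hTA
  have cqA : cq ∉ A := fun hh => h.AC _ hh hcq
  have hR' := (IP.cons hR pq.2.1 (fun hh => cqA (hRA hh))
    (fun w hw hne hadj => hne (pq.2.2 w (hRA hw) hadj))).symm
  have cqc : cq ≠ c := pq.ne P.pc qu
  have cqd : cq ≠ d := pq.ne P.pd qv
  have tR := hR.right_mem
  have tS := hRS t tR
  have nRc : ∀ w ∈ R, ¬ G.Adj w c := fun w hw hadj => by
    have := P.pc.2.2 w (hRA hw) hadj.symm
    subst this; exact hRS _ hw uS
  have nRd : ∀ w ∈ R, ¬ G.Adj w d := fun w hw hadj => by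
    have := P.pd.2.2 w (hRA hw) hadj.symm
    subst this; exact hRS _ hw vS
  have hAC := h.AC
  have st := pathStruct P.pf (D := A) (s := t) (z := cq) (by omega) (fun i h1 h2 => P.SA (P.mem i h1 h2))
    hR' (by
      rintro w (rfl | hw)
      · exact Or.inr rfl
      · exact Or.inl (hRA hw)) (by
      rintro w hw i hi rfl
      have := P.cC; have := P.dC
      have := P.SA
      rcases hw with hw | hw <;> rcases ci i hi with h1 | h1 | h1
      · exact cqA (hw ▸ P.SA h1)
      · exact cqc (hw.symm.trans h1)
      · exact cqd (hw.symm.trans h1)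
      · exact hRS _ hw h1
      · exact hAC _ (hRA hw) (h1 ▸ P.cC)
      · exact hAC _ (hRA hw) (h1 ▸ P.dC)) (by
      rintro w (rfl | hw) hne i hi hadj
      · rcases ci i hi with h1 | h1 | h1
        · exact hqS (pq.2.2 _ (P.SA h1) hadj ▸ h1)
        · rw [h1] at hadj; exact h.ind _ hcq _ P.cC hadj
        · rw [h1] at hadj; exact h.ind _ hcq _ P.dC hadj
      · rcases ci i hi with h1 | h1 | h1
        · exact hRe w hw hne _ h1 hadj
        · rw [h1] at hadj; exact nRc w hw hadj
        · rw [h1] at hadj; exact nRd w hw hadj) (by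
      obtain ⟨i, h1, h2, rfl⟩ := P.sur s hsS
      exact ⟨i, by omega, hts⟩)
  rw [P.p0, P.pN] at st
  have pos : ∀ k ≤ N, G.Adj t (p k) → 0 < k ∧ k < N := by
    intro k hk hadj
    constructor
    · rcases Nat.eq_zero_or_pos k with rfl | h'
      · rw [P.p0] at hadj; exact absurd hadj (nRc t tR)
      · exact h'
    · refine lt_of_le_of_ne hk ?_
      rintro rfl; rw [P.pN] at hadj; exact nRd t tR hadj
  obtain ⟨w, hw, hK⟩ := K2 h cB aB P.cC P.dC hcq P.cd cqc.symm cqd.symm P.pc P.pd pq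
  rcases st with ⟨i, hi, hti, hun, hs⟩ | ⟨i, hi, _, _, _, ht⟩ | ⟨i, j, hij, hj, hti, htj, hb, hs⟩
  · exfalso
    obtain ⟨i0, iN⟩ := pos i hi hti
    have piS := P.mem i i0 iN
    have := hK _ hs
    subst this
    have hun' : ∀ a ∈ S, G.Adj t a → a = p i := by
      intro a ha hadj
      obtain ⟨k, h1, h2, rfl⟩ := P.sur a ha
      rw [hun k (by omega) hadj]
    have fin : ∀ u' v', IP G u' v' S → NCut G A v' → p i = u' → False := by
      intro u' v' ip nv' hpu
      subst hpu
      have e1 := IP.cons ip hti tS (fun w hw hne hadj => hne (hun' w hw hadj))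
      have e2 := hR.append e1 (by
        rintro w hw (rfl | hw')
        · rfl
        · exact absurd hw' (hRS w hw)) (by
        rintro w hw x (rfl | hx) h1 h2
        · exact absurd rfl h2
        · exact hRe w hw h1 x hx)
      have := hmax q v' _ nq nv' (fun hh => hqS (hh ▸ ip.right_mem)) (by
        rintro x (hx | rfl | hx)
        · exact hRA hx
        · exact hRA tR
        · exact P.SA hx) e2 (fun x hx => Or.inr (Or.inr hx)) (Or.inl tR)
      exact tS this
    rcases hw with hw | hw | hw
    · exact fin u v P.ip nv hw
    · exact fin v u P.ip.symm nu hw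
    · exact hqS (hw ▸ piS)
  · exact absurd ht (K1 h cB aB P.cC P.dC hcq P.cd cqc.symm cqd.symm P.pc P.pd pq)
  · have := hK _ hs
    subst this
    have htq : t = q := by
      rcases hw with hw | hw | hw
      · exact absurd (hw ▸ uS) tS
      · exact absurd (hw ▸ vS) tS
      · exact hw
    subst htq
    exact ⟨i, j, (pos i (by omega) hti).1, hij, (pos j hj htj).2, hti, htj, hb⟩

/-- The triangle case. -/
lemma caseT (h : Ctx G C A B) (cB : Conn G B) (aB : Att G C B)
    (pf : PF G N p) (cC : c ∈ C) (p0 : p 0 = c) (pc : Priv G A c u)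
    (mem : ∀ i, 0 < i → i < N → p i ∈ A)
    {q cq cg : V} {i : ℕ} (hqp : ∀ k < N, q ≠ p k) (hi : 0 < i) (hg : i + 1 < N)
    (qi : G.Adj q (p i)) (qg : G.Adj q (p (i + 1))) (qk : ∀ k < i, ¬ G.Adj q (p k))
    (uq : u ≠ q) (ug : u ≠ p (i + 1))
    (hcq : cq ∈ C) (pq : Priv G A cq q) (hcg : cg ∈ C) (pg : Priv G A cg (p (i + 1))) : False := by
  have hAC := h.AC
  have hqg : q ≠ p (i + 1) := hqp _ hg
  have c1 : c ≠ cg := pc.ne pg ug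
  have c2 : c ≠ cq := pc.ne pq uq
  have c3 : cg ≠ cq := pg.ne pq hqg.symm
  have ncg : ∀ k, k ≤ i + 1 → G.Adj cg (p k) → k = i + 1 := by
    intro k hk hadj
    rcases Nat.eq_zero_or_pos k with rfl | h'
    · rw [p0] at hadj; exact absurd hadj (h.ind _ hcg _ cC)
    · exact pf.1 _ (by omega) _ (by omega) (pg.2.2 _ (mem k h' (by omega)) hadj)
  have ncq : ∀ k, k ≤ i + 1 → ¬ G.Adj cq (p k) := by
    intro k hk hadj
    rcases Nat.eq_zero_or_pos k with rfl | h'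
    · rw [p0] at hadj; exact absurd hadj (h.ind _ hcq _ cC)
    · exact hqp k (by omega) (pq.2.2 _ (mem k h' (by omega)) hadj).symm
  have nkg : ∀ k, k ≤ i + 1 → p k ≠ cg := by
    rintro k hk rfl
    rcases Nat.eq_zero_or_pos k with rfl | h'
    · exact c1 p0.symm
    · exact hAC _ (mem k h' (by omega)) hcg
  have nkq : ∀ k, k ≤ i + 1 → p k ≠ cq := by
    rintro k hk rfl
    rcases Nat.eq_zero_or_pos k with rfl | h'
    · exact c2 p0.symm
    · exact hAC _ (mem k h' (by omega)) hcq
  have e1 := (pf.sub (i := 0) (j := i + 1) (by omega) (by omega)).symm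
  have e2 := (IP.cons e1 pg.2.1 (by
    rintro ⟨k, hk, hh⟩; exact nkg k hk.2 hh) (by
    rintro _ ⟨k, hk, rfl⟩ hne hadj
    exact hne (by rw [ncg k hk.2 hadj]))).symm
  obtain ⟨M, r, hr, r0, rM, hm⟩ := e2
  have rm : ∀ l ≤ M, r l = cg ∨ ∃ k ≤ i + 1, p k = r l := by
    intro l hl
    rcases (hm (r l)).2 ⟨l, hl, rfl⟩ with h' | ⟨k, hk, h'⟩
    · exact Or.inl h'
    · exact Or.inr ⟨k, hk.2, h'⟩
  have qA := pq.1
  have nqcg : ¬ G.Adj q cg := fun hadj => hqg (pg.2.2 q qA hadj.symm)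
  have qr : ∀ l ≤ M, G.Adj q (r l) → r l = p i ∨ r l = p (i + 1) := by
    intro l hl hadj
    rcases rm l hl with h' | ⟨k, hk, h'⟩
    · rw [h'] at hadj; exact absurd hadj nqcg
    · rw [← h'] at hadj ⊢
      have : ¬ k < i := fun hh => qk k hh hadj
      rcases (by omega : k = i ∨ k = i + 1) with rfl | rfl
      · exact Or.inl rfl
      · exact Or.inr rfl
  obtain ⟨l1, hl1, hl1'⟩ := (hm (p i)).1 (Or.inr ⟨i, ⟨by omega, by omega⟩, rfl⟩)
  obtain ⟨l2, hl2, hl2'⟩ := (hm (p (i + 1))).1 (Or.inr ⟨i + 1, ⟨by omega, by omega⟩, rfl⟩)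
  have M0 : 0 < M := by
    rcases Nat.eq_zero_or_pos M with rfl | h'
    · exact absurd ((p0.symm.trans r0.symm).trans rM) c1
    · exact h'
  have hpi : p i ≠ p (i + 1) := (pf.2.2 i (by omega)).ne
  have st := pathStruct hr (D := A) (s := q) (z := cq) M0 (by
      intro l h1 h2
      rcases rm l (by omega) with h' | ⟨k, hk, h'⟩
      · have := hr.1 l (by omega) M (by omega) (h'.trans rM.symm); omega
      · rw [← h']
        refine mem k ?_ (by omega)
        rcases Nat.eq_zero_or_pos k with rfl | h''
        · have := hr.1 l (by omega) 0 (by omega) (h'.symm.trans r0.symm); omega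
        · exact h'') (IP.edge pq.2.1.symm) (by
      rintro w (rfl | rfl)
      · exact Or.inl qA
      · exact Or.inr rfl) (by
      rintro w hw l hl rfl
      rcases rm l hl with h' | ⟨k, hk, h'⟩
      · rcases hw with hw | hw
        · exact hAC _ qA (hw ▸ h' ▸ hcg)
        · exact c3 (h'.symm.trans hw)
      · rcases hw with hw | hw
        · exact hqp k (by omega) (hw.symm.trans h'.symm)
        · exact nkq k hk (h'.trans hw)) (by
      rintro w (rfl | rfl) hne l hl hadj
      · exact hne rfl
      · rcases rm l hl with h' | ⟨k, hk, h'⟩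
        · rw [h'] at hadj; exact h.ind _ hcq _ hcg hadj
        · rw [← h'] at hadj; exact ncq k hk hadj) ⟨l1, hl1, hl1' ▸ qi⟩
  rw [r0, p0, rM] at st
  rcases st with ⟨l, hl, _, hun, _⟩ | ⟨_, _, _, _, _, ht⟩ | ⟨l, l', h1, h2, h3, h4, _, _⟩
  · have f1 := hun l1 hl1 (hl1' ▸ qi)
    have f2 := hun l2 hl2 (hl2' ▸ qg)
    subst f1; subst f2
    exact hpi (hl1'.symm.trans hl2')
  · exact K1 h cB aB cC hcg hcq c1 c2 c3 pc pg pq ht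
  · have f : G.Adj (r l) (r l') ∨ r l = r l' := by
      have a0 := pf.2.2 i (by omega)
      rcases qr l (by omega) h3 with f1 | f1 <;> rcases qr l' (by omega) h4 with f2 | f2 <;> rw [f1, f2]
      · exact Or.inr rfl
      · exact Or.inl a0
      · exact Or.inl a0.symm
      · exact Or.inr rfl
    rcases f with f | f
    · have := hr.2.1 l (by omega) l' (by omega) f; omega
    · have := hr.1 l (by omega) l' (by omega) f; omega

end
end S10

namespace S10
variable {G : SimpleGraph V}

section
variable {C A B S : Set V} {u v c d : V} {N : ℕ} {p : ℕ → V}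

lemma PD.memA (P : PD G C A S u v c d N p) {i : ℕ} (h0 : 0 < i) (h1 : i < N) : p i ∈ A :=
  P.SA (P.mem i h0 h1)

lemma caseS (h : Ctx G C A B) (cB : Conn G B) (aB : Att G C B) (P : PD G C A S u v c d N p)
    {q cg : V} {i j g : ℕ} (hqA : q ∈ A) (hqS : q ∉ S) (hi : 0 < i) (hig : i + 2 ≤ g) (hgj : g + 2 ≤ j)
    (hj : j < N) (qi : G.Adj q (p i)) (qj : G.Adj q (p j)) (qg : G.Adj q (p g))
    (qk : ∀ k ≤ N, G.Adj q (p k) → i ≤ k ∧ k ≤ j) (hcg : cg ∈ C) (pg : Priv G A cg (p g)) : False := by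
  have inj := P.pf.1
  have adj := P.pf.2.1
  have ug : u ≠ p g := by
    rw [← P.p1]; intro hh; have := inj _ (by omega) _ (by omega) hh; omega
  have vg : v ≠ p g := by
    rw [← P.pN1]; intro hh; have := inj _ (by omega) _ (by omega) hh; omega
  have c1 : c ≠ cg := P.pc.ne pg ug
  have c2 : d ≠ cg := P.pd.ne pg vg
  obtain ⟨w, hw, hK⟩ := K2 h cB aB P.cC P.dC hcg P.cd c1 c2 P.pc P.pd pg
  have ncg : ∀ k ≤ N, G.Adj cg (p k) → k = g := by
    intro k hk hadj
    rcases (by omega : k = 0 ∨ k = N ∨ (0 < k ∧ k < N)) with h' | h' | h'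
    · subst h'; rw [P.p0] at hadj; exact absurd hadj (h.ind _ hcg _ P.cC)
    · subst h'; rw [P.pN] at hadj; exact absurd hadj (h.ind _ hcg _ P.dC)
    · exact inj _ (by omega) _ (by omega) (pg.2.2 _ (P.memA h'.1 h'.2) hadj)
  have nkg : ∀ k ≤ N, cg ≠ p k := by
    intro k hk hh
    rcases (by omega : k = 0 ∨ k = N ∨ (0 < k ∧ k < N)) with h' | h' | h'
    · subst h'; exact c1 (P.p0.symm.trans hh.symm)
    · subst h'; exact c2 (P.pN.symm.trans hh.symm)
    · exact h.AC _ (P.memA h'.1 h'.2) (hh ▸ hcg)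
  have nq : ∀ k ≤ N, q ≠ p k := by
    intro k hk hh
    rcases (by omega : k = 0 ∨ k = N ∨ (0 < k ∧ k < N)) with h' | h' | h'
    · subst h'; exact h.AC _ hqA (hh ▸ P.p0 ▸ P.cC)
    · subst h'; exact h.AC _ hqA (hh ▸ P.pN ▸ P.dC)
    · exact hqS (hh ▸ P.mem k h'.1 h'.2)
  have nqcg : ¬ G.Adj q cg := fun hadj => nq g (by omega) (pg.2.2 q hqA hadj.symm)
  have qcg : q ≠ cg := fun hh => h.AC _ hqA (hh ▸ hcg)
  have s1 : Spider G A (p g) c d cg := by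
    have st := pathStruct P.pf (D := A) (s := cg) (z := cg) (by omega) (fun i h1 h2 => P.memA h1 h2)
      (IP.single cg) (by rintro w rfl; exact Or.inr rfl) (by rintro w rfl; exact nkg)
      (by rintro w rfl hne; exact absurd rfl hne) ⟨g, by omega, pg.2.1⟩
    rw [P.p0, P.pN] at st
    rcases st with ⟨l, hl, hh, hun, hs⟩ | ⟨l, hl, h1, h2, _, ht⟩ | ⟨l, l', h1, h2, h3, h4, _, _⟩
    · rwa [ncg l hl hh] at hs
    · have := ncg _ (by omega) h1; have := ncg _ (by omega) h2; omega
    · have := ncg _ (by omega) h3; have := ncg _ (by omega) h4; omega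
  have s2 : Spider G A q c d cg := by
    have L := (P.pf.sub (i := 0) (j := i) (by omega) (by omega)).symm
    have M := P.pf.sub (i := j) (j := N) (by omega) (by omega)
    rw [P.p0] at L
    rw [P.pN] at M
    have X := IP.cons L qi (by
      rintro ⟨k, hk, hh⟩; exact nq k (by have := hk.2; omega) hh.symm) (by
      rintro _ ⟨k, hk, rfl⟩ hne hadj
      have := hk.2
      have := qk k (by omega) hadj
      exact hne (by congr 1; omega))
    have Y := IP.cons M qj (by
      rintro ⟨k, hk, hh⟩; exact nq k (by have := hk.2; omega) hh.symm) (by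
      rintro _ ⟨k, hk, rfl⟩ hne hadj
      have := hk.1
      have := qk k hk.2 hadj
      exact hne (by congr 1; omega))
    have Z := IP.cons (IP.edge pg.2.1.symm) qg (by
      rintro (hh | hh)
      · exact nq g (by omega) hh
      · exact qcg hh) (by
      rintro w (rfl | rfl) hne
      · exact absurd rfl hne
      · exact nqcg)
    refine ⟨_, _, _, X, Y, Z, ?_, ?_, ?_, Or.inl hqA, ⟨?_, ?_⟩, ⟨?_, ?_⟩, ⟨?_, ?_⟩⟩
    · rintro w (rfl | ⟨k, hk, rfl⟩)
      · exact Or.inl rfl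
      · rcases Nat.eq_zero_or_pos k with rfl | h'
        · right; right; exact P.p0
        · right; left; exact P.memA h' (by have := hk.2; omega)
    · rintro w (rfl | ⟨k, hk, rfl⟩)
      · exact Or.inl rfl
      · have := hk.1
        rcases (by have := hk.2; omega : k = N ∨ k < N) with rfl | h'
        · right; right; exact P.pN
        · right; left; exact P.memA (by omega) h'
    · rintro w (rfl | rfl | rfl)
      · exact Or.inl rfl
      · right; left; exact pg.1
      · right; right; rfl
    · rintro w (rfl | ⟨k, hk, rfl⟩) (hh | ⟨l, hl, hh⟩)
      · rfl
      · rfl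
      · exact hh
      · have := hk.2; have := hl.1; have := hl.2
        have := inj l (by omega) k (by omega) hh; omega
    · rintro w (rfl | ⟨k, hk, rfl⟩) w' (rfl | ⟨l, hl, rfl⟩) h1 h2 h3
      · exact h1 rfl
      · exact h1 rfl
      · exact h2 rfl
      · have := hk.2; have := hl.1; have := hl.2
        have := adj k (by omega) l (by omega) h3; omega
    · rintro w (rfl | ⟨k, hk, rfl⟩) (hh | hh | hh)
      · rfl
      · rfl
      · rfl
      · exact hh
      · have := hk.2
        have := inj k (by omega) g (by omega) hh; omega
      · exact absurd hh.symm (nkg k (by have := hk.2; omega))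
    · rintro w (rfl | ⟨k, hk, rfl⟩) w' (rfl | rfl | rfl) h1 h2 h3
      · exact h1 rfl
      · exact h1 rfl
      · exact h1 rfl
      · exact h2 rfl
      · have := hk.2
        have := adj k (by omega) g (by omega) h3; omega
      · have := hk.2
        have := ncg k (by omega) h3.symm; omega
    · rintro w (rfl | ⟨k, hk, rfl⟩) (hh | hh | hh)
      · rfl
      · rfl
      · rfl
      · exact hh
      · have := hk.1; have := hk.2
        have := inj k (by omega) g (by omega) hh; omega
      · exact absurd hh.symm (nkg k (by have := hk.2; omega))
    · rintro w (rfl | ⟨k, hk, rfl⟩) w' (rfl | rfl | rfl) h1 h2 h3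
      · exact h1 rfl
      · exact h1 rfl
      · exact h1 rfl
      · exact h2 rfl
      · have := hk.1; have := hk.2
        have := adj k (by omega) g (by omega) h3; omega
      · have := hk.1; have := hk.2
        have := ncg k (by omega) h3.symm; omega
  exact nq g (by omega) ((hK _ s2).trans (hK _ s1).symm)

lemma apath (h : Ctx G C A B) (mA : MinA G C A) (cB : Conn G B) (aB : Att G C B) :
    (∃ v, A = {v}) ∨ ∃ u v c d N p, PD G C A A u v c d N p := by
  by_cases hsing : ∃ v, A = {v}
  · exact Or.inl hsing
  right
  have cA := mA.conn
  obtain ⟨v0, hv0⟩ := mA.ne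
  have csing : ∀ w : V, Conn G {w} := by
    rintro w a rfl b rfl; exact Relation.ReflTransGen.refl
  have one : ∀ w ∈ A, ∃ q, q ≠ w ∧ NCut G A q := by
    intro w hw
    obtain ⟨q, h1, h2⟩ := exNC cA (P := {w}) ⟨w, rfl⟩ (by simpa using hw)
      (fun hh => hsing ⟨w, hh.symm⟩) (csing w)
    exact ⟨q, h1, h2⟩
  obtain ⟨q1, -, n1⟩ := one v0 hv0
  obtain ⟨q3, h31, n3⟩ := one q1 n1.1
  obtain ⟨S0, hS0, ip0⟩ := cA.ip n3.1 n1.1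
  obtain ⟨S, -, hm⟩ := Set.Finite.exists_le_maximal
    (s := {S : Set V | ∃ u v, NCut G A u ∧ NCut G A v ∧ u ≠ v ∧ S ⊆ A ∧ IP G u v S}) (Set.toFinite _)
    (a := S0) ⟨q3, q1, n3, n1, h31, hS0, ip0⟩
  obtain ⟨u, v, nu, nv, huv, hSA, ip⟩ := hm.prop
  have hmax : ∀ u v S', NCut G A u → NCut G A v → u ≠ v → S' ⊆ A → IP G u v S' → S ⊆ S' → S' ⊆ S := by
    intro u v S' h1 h2 h3 h4 h5 h6
    exact hm.le_of_ge ⟨u, v, h1, h2, h3, h4, h5⟩ h6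
  obtain ⟨c, hc, pc⟩ := mA.priv nu
  obtain ⟨d, hd, pd⟩ := mA.priv nv
  obtain ⟨N, p, P⟩ := exists_PD h.ind h.AC hc hd pc pd huv hSA ip
  by_cases hSe : S = A
  · subst hSe
    exact ⟨u, v, c, d, N, p, P⟩
  exfalso
  have N2 := P.N2
  have inj := P.pf.1
  have cS : Conn G S := by
    have key : ∀ w ∈ S, Relation.ReflTransGen (Rl G S) (p 1) w := by
      intro w hw
      obtain ⟨k, h1, h2, rfl⟩ := P.sur w hw
      exact P.pf.rt k (by omega) (by omega) (fun l hl hl' => P.mem l (by omega) (by omega))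
    intro a ha b hb
    exact (RT.symm (key a ha)).trans (key b hb)
  obtain ⟨q, hqS, nq⟩ := exNC cA ⟨u, ip.left_mem⟩ hSA hSe cS
  obtain ⟨cq, hcq, pq⟩ := mA.priv nq
  obtain ⟨i, j, hi, hij, hj, qi, qj, qk⟩ := claimQ h cA cB aB P nu nv hmax nq hqS hcq pq
  have nqp : ∀ k ≤ N, q ≠ p k := by
    intro k hk hh
    rcases (by omega : k = 0 ∨ k = N ∨ (0 < k ∧ k < N)) with h' | h' | h'
    · subst h'; exact h.AC _ nq.1 (hh ▸ P.p0 ▸ P.cC)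
    · subst h'; exact h.AC _ nq.1 (hh ▸ P.pN ▸ P.dC)
    · exact hqS (hh ▸ P.mem k h'.1 h'.2)
  -- third neighbour
  obtain ⟨g, hig, hgj, qg⟩ : ∃ g, i < g ∧ g < j ∧ G.Adj q (p g) := by
    by_contra hno
    push Not at hno
    obtain ⟨m, r, hr, r0, rm, hm2, hrB⟩ := conn_path cB P.cd (h.ind _ hc _ hd) (aB _ hc) (aB _ hd)
    have hT := hr.sub (i := 0) (j := m) (by omega) le_rfl
    have rmem : ∀ w ∈ r '' Set.Icc 0 m, w ∈ B ∨ w = c ∨ w = d := by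
      rintro _ ⟨k, hk, rfl⟩
      rcases (by have := hk.2; omega : k = 0 ∨ k = m ∨ (0 < k ∧ k < m)) with h' | h' | h'
      · right; left; rw [h']; exact r0
      · right; right; rw [h']; exact rm
      · left; exact hrB k h'.1 h'.2
    rw [r0, rm, ← P.p0, ← P.pN] at hT
    refine h.hT (theta2 P.pf hT ?_ ?_ nqp ?_ ?_ hi hij hj qi qj ?_)
    · intro k h0 h1 hh
      have := P.memA h0 h1
      rcases rmem _ hh with h' | h' | h'
      · exact h.AB _ this h'
      · exact h.AC _ this (h' ▸ hc)
      · exact h.AC _ this (h' ▸ hd)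
    · intro k h0 h1 w hw hw0 hwN
      rcases rmem _ hw with h' | h' | h'
      · exact h.nAB _ (P.memA h0 h1) _ h'
      · exact absurd (h'.trans P.p0.symm) hw0
      · exact absurd (h'.trans P.pN.symm) hwN
    · intro hh
      rcases rmem _ hh with h' | h' | h'
      · exact h.AB _ nq.1 h'
      · exact h.AC _ nq.1 (h' ▸ hc)
      · exact h.AC _ nq.1 (h' ▸ hd)
    · intro w hw hadj
      rcases rmem _ hw with h' | h' | h'
      · exact h.nAB _ nq.1 _ h' hadj
      · subst h'
        have := pc.2.2 q nq.1 hadj.symm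
        exact hqS (this ▸ ip.left_mem)
      · subst h'
        have := pd.2.2 q nq.1 hadj.symm
        exact hqS (this ▸ ip.right_mem)
    · intro k hk hadj
      have := qk k hk hadj
      by_contra hne
      push Not at hne
      exact hno k (by omega) (by omega) hadj
  by_cases ng : NCut G A (p g)
  · obtain ⟨cg, hcg, pg⟩ := mA.priv ng
    by_cases h1 : g = i + 1
    · subst h1
      refine caseT h cB aB P.pf hc P.p0 pc (fun i h1 h2 => P.memA h1 h2) (fun k hk => nqp k (by omega))
        hi (by omega) qi qg (fun k hk hadj => by have := qk k (by omega) hadj; omega) ?_ ?_ hcq pq hcg pg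
      · intro hh; exact hqS (hh ▸ ip.left_mem)
      · rw [← P.p1]; intro hh; have := inj _ (by omega) _ (by omega) hh; omega
    by_cases h2 : g + 1 = j
    · have e1 : N - (N - j) = j := by omega
      have e2 : N - (N - j + 1) = g := by omega
      refine caseT h cB aB P.pf.rev hd (by simpa using P.pN) pd (fun i h1 h2 => P.memA (by omega) (by omega))
        (i := N - j) (q := q) (cq := cq) (cg := cg)
        (fun k hk => nqp _ (by omega))
        (by omega) (by omega) (by simpa only [e1] using qj) (by simpa only [e2] using qg)
        (fun k hk hadj => by have := qk _ (by omega) hadj; omega) ?_ ?_ hcq pq hcg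
        (by simpa only [e2] using pg)
      · intro hh; exact hqS (hh ▸ ip.right_mem)
      · simp only [e2]
        rw [← P.pN1]; intro hh; have := inj _ (by omega) _ (by omega) hh; omega
    exact caseS h cB aB P nq.1 hqS hi (by omega) (by omega) hj qi qj qg qk hcg pg
  · -- cut vertex
    have pgA : p g ∈ A := P.memA (by omega) (by omega)
    set E : Set V := A \ {p g} with hE
    have qE : q ∈ E := ⟨nq.1, fun hh => nqp g (by omega) hh⟩
    have pkE : ∀ k, 0 < k → k < N → k ≠ g → p k ∈ E := by
      intro k h0 h1 hne
      refine ⟨P.memA h0 h1, fun hh => hne (inj k (by omega) g (by omega) hh)⟩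
    set W0 : Set V := {w | Relation.ReflTransGen (Rl G E) q w} with hW0
    have W0E : ∀ w ∈ W0, w ∈ E := by
      intro w hw
      rcases Relation.ReflTransGen.cases_tail hw with h' | ⟨x, _, h'⟩
      · exact h' ▸ qE
      · exact h'.2.2
    have pkW : ∀ k, 0 < k → k < N → k ≠ g → p k ∈ W0 := by
      intro k h0 h1 hne
      rcases (by omega : k < g ∨ g < k) with hlt | hlt
      · have s1 : Relation.ReflTransGen (Rl G E) q (p i) :=
          Relation.ReflTransGen.single ⟨qi, qE, pkE i (by omega) (by omega) (by omega)⟩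
        refine s1.trans ?_
        rcases le_total i k with hik | hik
        · exact P.pf.rt k hik (by omega) (fun l _ _ => pkE l (by omega) (by omega) (by omega))
        · exact RT.symm (P.pf.rt i hik (by omega) (fun l _ _ => pkE l (by omega) (by omega) (by omega)))
      · have s1 : Relation.ReflTransGen (Rl G E) q (p j) :=
          Relation.ReflTransGen.single ⟨qj, qE, pkE j (by omega) (by omega) (by omega)⟩
        refine s1.trans ?_
        rcases le_total j k with hik | hik
        · exact P.pf.rt k hik (by omega) (fun l _ _ => pkE l (by omega) (by omega) (by omega))
        · exact RT.symm (P.pf.rt j hik (by omega) (fun l _ _ => pkE l (by omega) (by omega) (by omega)))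
    have cW0 : Conn G W0 := by
      have key : ∀ w, Relation.ReflTransGen (Rl G E) q w → Relation.ReflTransGen (Rl G W0) q w := by
        intro w hw
        induction hw with
        | refl => exact Relation.ReflTransGen.refl
        | tail h1 h2 ih => exact ih.tail ⟨h2.1, h1, h1.tail h2⟩
      intro a ha b hb
      exact (RT.symm (key a ha)).trans (key b hb)
    have qW0 : q ∈ W0 := Relation.ReflTransGen.refl
    have cW := cW0.insert qW0 qg.symm
    have WA : insert (p g) W0 ⊆ A := by
      rintro w (rfl | hw)
      · exact pgA
      · exact (W0E w hw).1
    have Wne : insert (p g) W0 ≠ A := by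
      intro hh
      refine ng ⟨pgA, ?_, ⟨q, qE⟩⟩
      have : ∀ w ∈ E, Relation.ReflTransGen (Rl G E) q w := by
        intro w hw
        have hwA := hw.1
        rw [← hh] at hwA
        rcases hwA with h' | h'
        · exact absurd h' hw.2
        · exact h'
      intro a ha b hb
      exact (RT.symm (this a ha)).trans (this b hb)
    obtain ⟨q', hq'W, nq'⟩ := exNC cA ⟨p g, Set.mem_insert _ _⟩ WA Wne cW
    have hq'S : q' ∉ S := by
      intro hh
      obtain ⟨k, h1, h2, rfl⟩ := P.sur q' hh
      by_cases hk : k = g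
      · subst hk; exact hq'W (Set.mem_insert _ _)
      · exact hq'W (Or.inr (pkW k h1 h2 hk))
    obtain ⟨cq', hcq', pq'⟩ := mA.priv nq'
    obtain ⟨i', j', hi', hij', hj', qi', qj', -⟩ := claimQ h cA cB aB P nu nv hmax nq' hq'S hcq' pq'
    have q'E : q' ∈ E := ⟨nq'.1, fun hh => hq'W (Or.inl hh)⟩
    have fin : ∀ k, 0 < k → k < N → k ≠ g → ¬ G.Adj q' (p k) := by
      intro k h1 h2 h3 hadj
      exact hq'W (Or.inr ((pkW k h1 h2 h3).tail ⟨hadj.symm, pkE k h1 h2 h3, q'E⟩))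
    by_cases hig' : i' = g
    · exact fin j' (by omega) hj' (by omega) qj'
    · exact fin i' hi' (by omega) hig' qi'

end
end S10

namespace S10
variable {G : SimpleGraph V}

structure HD (G : SimpleGraph V) (n m : ℕ) (p q : ℕ → V) : Prop where
  pf : PF G n p
  qf : PF G m q
  n2 : 2 ≤ n
  m2 : 2 ≤ m
  e0 : p 0 = q 0
  e1 : p n = q m
  dis : ∀ i j, 0 < i → i < n → 0 < j → j < m → p i ≠ q j
  ant : ∀ i j, 0 < i → i < n → 0 < j → j < m → ¬ G.Adj (p i) (q j)

def hl (n m : ℕ) (p q : ℕ → V) (i : ℕ) : V := if i ≤ n then p i else q (n + m - i)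

def hf (n m : ℕ) (p q : ℕ → V) (z : ZMod (n + m)) : V := hl n m p q z.val

section
variable {n m : ℕ} {p q : ℕ → V}

lemma hl_p {i : ℕ} (hi : i ≤ n) : hl n m p q i = p i := by simp [hl, hi]

lemma HD.hl_q (h : HD G n m p q) {i : ℕ} (hi : n ≤ i) : hl n m p q i = q (n + m - i) := by
  by_cases h1 : i ≤ n
  · have : i = n := by omega
    subst this
    simp [hl, h.e1]
  · simp [hl, h1]

lemma HD.hl_q2 (h : HD G n m p q) {i : ℕ} (hi : i ≤ m) : hl n m p q (n + m - i) = q i := by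
  rw [h.hl_q (by omega)]; congr 1; omega

lemma HD.hf_nat (h : HD G n m p q) {i : ℕ} (hi : i ≤ n + m) :
    hf n m p q (i : ZMod (n + m)) = hl n m p q i := by
  have := h.n2
  rcases hi.lt_or_eq with h1 | rfl
  · simp only [hf, ZMod.val_natCast, Nat.mod_eq_of_lt h1]
  · rw [h.hl_q (by omega)]
    have h0 : hl n m p q 0 = p 0 := hl_p (by omega)
    simp [hf, ZMod.val_natCast, h0, h.e0]

lemma HD.inj (h : HD G n m p q) {i j : ℕ} (hi : i < n + m) (hj : j < n + m)
    (e : hl n m p q i = hl n m p q j) : i = j := by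
  have key : ∀ i j, i < n + m → j < n + m → i ≤ n → n < j → hl n m p q i = hl n m p q j → False := by
    intro i j hi hj h1 h2 e
    rw [hl_p h1, h.hl_q h2.le] at e
    by_cases i0 : i = 0
    · subst i0
      rw [h.e0] at e
      have := h.qf.1 _ (by omega) _ (by omega) e
      omega
    by_cases i1 : i = n
    · subst i1
      rw [h.e1] at e
      have := h.qf.1 _ (by omega) _ (by omega) e
      omega
    exact h.dis _ _ (by omega) (by omega) (by omega) (by omega) e
  rcases le_or_gt i n with h1 | h1 <;> rcases le_or_gt j n with h2 | h2
  · rw [hl_p h1, hl_p h2] at e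
    exact h.pf.1 _ h1 _ h2 e
  · exact (key i j hi hj h1 h2 e).elim
  · exact (key j i hj hi h2 h1 e.symm).elim
  · rw [h.hl_q h1.le, h.hl_q h2.le] at e
    have := h.qf.1 _ (by omega) _ (by omega) e
    omega

lemma HD.step (h : HD G n m p q) {i : ℕ} (hi : i < n + m) :
    G.Adj (hl n m p q i) (hl n m p q (i + 1)) := by
  rcases lt_or_ge i n with h1 | h1
  · rw [hl_p h1.le, hl_p h1]; exact h.pf.2.2 i h1
  · rw [h.hl_q h1, h.hl_q (by omega : n ≤ i + 1)]
    have := h.qf.2.2 (n + m - (i + 1)) (by omega)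
    rw [show n + m - (i + 1) + 1 = n + m - i by omega] at this
    exact this.symm

lemma HD.adj (h : HD G n m p q) {i j : ℕ} (hi : i < n + m) (hj : j < n + m)
    (e : G.Adj (hl n m p q i) (hl n m p q j)) :
    j = i + 1 ∨ i = j + 1 ∨ (i = 0 ∧ j + 1 = n + m) ∨ (j = 0 ∧ i + 1 = n + m) := by
  have key : ∀ i j, i < n + m → j < n + m → i ≤ n → n < j →
      G.Adj (hl n m p q i) (hl n m p q j) → j = i + 1 ∨ (i = 0 ∧ j + 1 = n + m) := by
    intro i j hi hj h1 h2 e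
    rw [hl_p h1, h.hl_q h2.le] at e
    by_cases i0 : i = 0
    · subst i0
      rw [h.e0] at e
      have := h.qf.2.1 _ (by omega) _ (by omega) e
      omega
    by_cases i1 : i = n
    · subst i1
      rw [h.e1] at e
      have := h.qf.2.1 _ (by omega) _ (by omega) e
      omega
    exact (h.ant _ _ (by omega) (by omega) (by omega) (by omega) e).elim
  rcases le_or_gt i n with h1 | h1 <;> rcases le_or_gt j n with h2 | h2
  · rw [hl_p h1, hl_p h2] at e
    have := h.pf.2.1 _ h1 _ h2 e
    omega
  · have := key i j hi hj h1 h2 e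
    omega
  · have := key j i hj hi h2 h1 e.symm
    omega
  · rw [h.hl_q h1.le, h.hl_q h2.le] at e
    have := h.qf.2.1 _ (by omega) _ (by omega) e
    omega

lemma zcast {N a k : ℕ} (ha : a < N) (hk : k < 2 * N) (e : (a : ZMod N) = (k : ZMod N)) :
    k = a ∨ k = a + N := by
  rw [ZMod.natCast_eq_natCast_iff'] at e
  rw [Nat.mod_eq_of_lt ha] at e
  rcases lt_or_ge k N with h1 | h1
  · rw [Nat.mod_eq_of_lt h1] at e; omega
  · rw [Nat.mod_eq_sub_mod h1, Nat.mod_eq_of_lt (by omega)] at e; omega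

lemma zex {N : ℕ} (hN : 0 < N) (z : ZMod N) : ∃ a < N, z = (a : ZMod N) := by
  have : NeZero N := ⟨by omega⟩
  exact ⟨z.val, ZMod.val_lt z, (ZMod.natCast_zmod_val z).symm⟩

lemma HD.hole (h : HD G n m p q) : IsHoleEmb G (n + m) (hf n m p q) := by
  have n2 := h.n2
  have m2 := h.m2
  refine ⟨by omega, ?_, ?_⟩
  · intro z w e
    obtain ⟨a, ha, rfl⟩ := zex (by omega) z
    obtain ⟨b, hb, rfl⟩ := zex (by omega) w
    rw [h.hf_nat ha.le, h.hf_nat hb.le] at e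
    rw [h.inj ha hb e]
  · intro z w
    obtain ⟨a, ha, rfl⟩ := zex (by omega) z
    obtain ⟨b, hb, rfl⟩ := zex (by omega) w
    rw [h.hf_nat ha.le, h.hf_nat hb.le]
    constructor
    · intro e
      have hz : ((n + m : ℕ) : ZMod (n + m)) = 0 := ZMod.natCast_self _
      rcases h.adj ha hb e with r | r | ⟨r, r'⟩ | ⟨r, r'⟩
      · left; rw [r]; push_cast; rfl
      · right; rw [r]; push_cast; rfl
      · right
        have : ((b + 1 : ℕ) : ZMod (n + m)) = 0 := by rw [r']; exact hz
        rw [r]; push_cast at this ⊢; exact this.symm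
      · left
        have : ((a + 1 : ℕ) : ZMod (n + m)) = 0 := by rw [r']; exact hz
        rw [r]; push_cast at this ⊢; exact this.symm
    · have key : ∀ a b : ℕ, a < n + m → b < n + m → (b : ZMod (n + m)) = a + 1 →
          G.Adj (hl n m p q a) (hl n m p q b) := by
        intro a b ha hb e
        have := h.step ha
        rw [← h.hf_nat (show a + 1 ≤ n + m by omega)] at this
        push_cast at this
        rw [← e, h.hf_nat hb.le] at this
        exact this
      rintro (e | e)
      · exact key a b ha hb e
      · exact (key b a hb ha e).symm

lemma HD.range (h : HD G n m p q) (v : V) :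
    v ∈ Set.range (hf n m p q) ↔ (∃ i ≤ n, p i = v) ∨ ∃ i ≤ m, q i = v := by
  have n2 := h.n2
  constructor
  · rintro ⟨z, rfl⟩
    obtain ⟨a, ha, rfl⟩ := zex (by omega) z
    rw [h.hf_nat ha.le]
    rcases le_total a n with h1 | h1
    · exact Or.inl ⟨a, h1, (hl_p h1).symm⟩
    · exact Or.inr ⟨n + m - a, by omega, (h.hl_q h1).symm⟩
  · rintro (⟨i, hi, rfl⟩ | ⟨i, hi, rfl⟩)
    · exact ⟨(i : ℕ), by rw [h.hf_nat (by omega), hl_p hi]⟩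
    · exact ⟨((n + m - i : ℕ) : ZMod (n + m)), by rw [h.hf_nat (by omega), h.hl_q2 hi]⟩

def Three (G : SimpleGraph V) (n m : ℕ) (p q : ℕ → V) (u : V) : Prop :=
  ∃ i j k, i < j ∧ j < k ∧ k < n + m ∧ G.Adj u (hl n m p q i) ∧ G.Adj u (hl n m p q j) ∧
    G.Adj u (hl n m p q k)

lemma HD.three (h : HD G n m p q) {u : V} (t : Three G n m p q u) :
    3 ≤ {z : ZMod (n + m) | G.Adj u (hf n m p q z)}.ncard := by
  have n2 := h.n2
  have : NeZero (n + m) := ⟨by omega⟩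
  obtain ⟨i, j, k, h1, h2, h3, a1, a2, a3⟩ := t
  have ne : ∀ a b : ℕ, a < b → b < n + m → (a : ZMod (n + m)) ≠ (b : ZMod (n + m)) := by
    intro a b h1 h2 e
    have := zcast (h1.trans h2) (by omega) e
    omega
  have : 2 < {z : ZMod (n + m) | G.Adj u (hf n m p q z)}.ncard := by
    rw [Set.two_lt_ncard_iff (Set.toFinite _)]
    refine ⟨i, j, k, ?_, ?_, ?_, ne _ _ h1 (by omega), ne _ _ (by omega) h3, ne _ _ h2 h3⟩
    · show G.Adj u _
      rwa [h.hf_nat (by omega)]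
    · show G.Adj u _
      rwa [h.hf_nat (by omega)]
    · show G.Adj u _
      rwa [h.hf_nat (by omega)]
  exact this

lemma HD.nested (h : HD G n m p q) {u v : V} (hN : NestedCfg G (n + m) (hf n m p q) u v) :
    ∃ s t, s ≤ t ∧ t ≤ n + m ∧
    (((∀ i, 0 < i → i < n + m → G.Adj u (hl n m p q i) → s ≤ i ∧ i ≤ t) ∧
      (∀ i, 0 < i → i < n + m → G.Adj v (hl n m p q i) → i ≤ s ∨ t ≤ i)) ∨
    ((∀ i, 0 < i → i < n + m → G.Adj v (hl n m p q i) → s ≤ i ∧ i ≤ t) ∧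
      (∀ i, 0 < i → i < n + m → G.Adj u (hl n m p q i) → i ≤ s ∨ t ≤ i))) := by
  have n2 := h.n2
  obtain ⟨z, d, d1, d2, hu, hv⟩ := hN
  obtain ⟨a, ha, rfl⟩ := zex (by omega) z
  have hu' : ∀ i, 0 < i → i < n + m → G.Adj u (hl n m p q i) →
      ∃ e, e ≤ d ∧ (a + e = i ∨ a + e = i + (n + m)) := by
    intro i i0 i1 hi
    rw [← h.hf_nat i1.le] at hi
    obtain ⟨e, he, e1⟩ := hu _ hi
    refine ⟨e, he, zcast i1 (by omega) ?_⟩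
    rw [e1]; push_cast; rfl
  have hv' : ∀ i, 0 < i → i < n + m → G.Adj v (hl n m p q i) →
      ∃ e, e ≤ n + m - d ∧ (a + d + e = i ∨ a + d + e = i + (n + m)) := by
    intro i i0 i1 hi
    rw [← h.hf_nat i1.le] at hi
    obtain ⟨e, he, e1⟩ := hv _ hi
    refine ⟨e, he, zcast i1 (by omega) ?_⟩
    rw [e1]; push_cast; rfl
  rcases lt_or_ge (a + d) (n + m) with h1 | h1
  · refine ⟨a, a + d, by omega, by omega, Or.inl ⟨?_, ?_⟩⟩
    · intro i i0 i1 hi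
      obtain ⟨e, he, e1⟩ := hu' i i0 i1 hi
      omega
    · intro i i0 i1 hi
      obtain ⟨e, he, e1⟩ := hv' i i0 i1 hi
      omega
  · refine ⟨a + d - (n + m), a, by omega, by omega, Or.inr ⟨?_, ?_⟩⟩
    · intro i i0 i1 hi
      obtain ⟨e, he, e1⟩ := hv' i i0 i1 hi
      omega
    · intro i i0 i1 hi
      obtain ⟨e, he, e1⟩ := hu' i i0 i1 hi
      omega

/-- `u` attaches to the interiors of both paths but not to the ends -/
structure Both (G : SimpleGraph V) (n m : ℕ) (p q : ℕ → V) (u : V) : Prop where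
  x : ¬ G.Adj u (p 0)
  y : ¬ G.Adj u (p n)
  a : ∃ i, 0 < i ∧ i < n ∧ G.Adj u (p i)
  b : ∃ i, 0 < i ∧ i < m ∧ G.Adj u (q i)

lemma HD.noconsec (h : HD G n m p q) {u : V} (hu : Both G n m p q u) (z : ZMod (n + m))
    (hz : ∀ w : ZMod (n + m), G.Adj u (hf n m p q w) ↔ (w = z ∨ w = z + 1 ∨ w = z + 2)) : False := by
  have n2 := h.n2
  obtain ⟨a, ha, rfl⟩ := zex (by omega) z
  have hz0 : ((n + m : ℕ) : ZMod (n + m)) = 0 := ZMod.natCast_self _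
  have pos : ∀ e ≤ 2, ∀ i, i ≤ n + m → (i = a + e ∨ i + (n + m) = a + e) → G.Adj u (hl n m p q i) := by
    intro e he i hi hie
    rw [← h.hf_nat hi, hz]
    have : (i : ZMod (n + m)) = a + (e : ZMod (n + m)) := by
      rcases hie with r | r
      · rw [r]; push_cast; rfl
      · have : ((i + (n + m) : ℕ) : ZMod (n + m)) = ((a + e : ℕ) : ZMod (n + m)) := by rw [r]
        rw [Nat.cast_add i, hz0, add_zero] at this
        rw [this]; push_cast; rfl
    rw [this]
    interval_cases e <;> simp
  have only : ∀ i, i < n + m → G.Adj u (hl n m p q i) → ∃ e ≤ 2, a + e = i ∨ a + e = i + (n + m) := by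
    intro i hi hadj
    rw [← h.hf_nat hi.le, hz] at hadj
    rcases hadj with r | r | r
    · exact ⟨0, by omega, zcast hi (by omega) (by rw [r]; push_cast; ring)⟩
    · exact ⟨1, by omega, zcast hi (by omega) (by rw [r]; push_cast; ring)⟩
    · exact ⟨2, by omega, zcast hi (by have := h.m2; omega) (by rw [r]; push_cast; ring)⟩
  have u0 : ¬ G.Adj u (hl n m p q 0) := by rw [hl_p (by omega)]; exact hu.x
  have un : ¬ G.Adj u (hl n m p q n) := by rw [hl_p le_rfl]; exact hu.y
  have uN : ¬ G.Adj u (hl n m p q (n + m)) := by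
    rw [h.hl_q (by omega)]; simp only [Nat.sub_self]; rw [← h.e0]; exact hu.x
  obtain ⟨i, i1, i2, i3⟩ := hu.a
  obtain ⟨j, j1, j2, j3⟩ := hu.b
  rw [← hl_p (m := m) (p := p) (q := q) i2.le] at i3
  rw [← h.hl_q2 j2.le] at j3
  obtain ⟨e, he, e1⟩ := only i (by omega) i3
  obtain ⟨e', he', e2⟩ := only _ (by omega) j3
  have A : ∀ e ≤ 2, a + e ≠ n := fun e he r => un (pos e he n (by omega) (by omega))
  have B : ∀ e ≤ 2, a + e ≠ n + m := fun e he r => uN (pos e he (n + m) (by omega) (by omega))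
  have A0 := A 0 (by omega)
  have A1 := A 1 (by omega)
  have A2 := A 2 (by omega)
  have B0 := B 0 (by omega)
  have B1 := B 1 (by omega)
  have B2 := B 2 (by omega)
  omega

lemma HD.lin (h : HD G n m p q)
    (hW : ∀ (n : ℕ) (f : ZMod n → V) (u v : V), Is2WheelCfg G n f u v → ¬G.Adj u v →
    (NestedCfg G n f u v ∨ CousinCfg G n f u v)) {u v : V} (uv : u ≠ v) (nuv : ¬ G.Adj u v)
    (ur : u ∉ Set.range (hf n m p q)) (vr : v ∉ Set.range (hf n m p q))
    (hu : Both G n m p q u) (tu : Three G n m p q u) (tv : Three G n m p q v) :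
    ∃ s t, s ≤ t ∧ t ≤ n + m ∧
    (((∀ i, 0 < i → i < n + m → G.Adj u (hl n m p q i) → s ≤ i ∧ i ≤ t) ∧
      (∀ i, 0 < i → i < n + m → G.Adj v (hl n m p q i) → i ≤ s ∨ t ≤ i)) ∨
    ((∀ i, 0 < i → i < n + m → G.Adj v (hl n m p q i) → s ≤ i ∧ i ≤ t) ∧
      (∀ i, 0 < i → i < n + m → G.Adj u (hl n m p q i) → i ≤ s ∨ t ≤ i))) := by
  rcases hW _ _ u v ⟨h.hole, uv, ur, vr, h.three tu, h.three tv⟩ nuv with H | ⟨i, H, -⟩ | ⟨i, -, H⟩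
  · exact h.nested H
  · exact (h.noconsec hu i H).elim
  · refine (h.noconsec hu (i + 1) fun w => (H w).trans ?_).elim
    rw [show i + 1 + 1 = i + 2 by ring, show i + 1 + 2 = i + 3 by ring]

def Ord (G : SimpleGraph V) (n m : ℕ) (p q : ℕ → V) (u v : V) : Prop :=
  (∀ i j, i ≤ n → j ≤ n → G.Adj u (p i) → G.Adj v (p j) → i ≤ j) ∧
  (∀ i j, i ≤ m → j ≤ m → G.Adj u (q i) → G.Adj v (q j) → i ≤ j)

lemma HD.O1 (h : HD G n m p q)
    (hW : ∀ (n : ℕ) (f : ZMod n → V) (u v : V), Is2WheelCfg G n f u v → ¬G.Adj u v →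
    (NestedCfg G n f u v ∨ CousinCfg G n f u v)) {u v : V} (uv : u ≠ v) (nuv : ¬ G.Adj u v)
    (ur : u ∉ Set.range (hf n m p q)) (vr : v ∉ Set.range (hf n m p q))
    (hu : Both G n m p q u) (hv : Both G n m p q v)
    (tu : Three G n m p q u) (tv : Three G n m p q v) :
    Ord G n m p q u v ∨ Ord G n m p q v u := by
  have key : ∀ u v, Both G n m p q u → Both G n m p q v → ∀ s t,
      (∀ i, 0 < i → i < n + m → G.Adj u (hl n m p q i) → s ≤ i ∧ i ≤ t) →
      (∀ i, 0 < i → i < n + m → G.Adj v (hl n m p q i) → i ≤ s ∨ t ≤ i) → Ord G n m p q v u := by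
    intro u v hu hv s t h1 h2
    have ip : ∀ w, Both G n m p q w → ∀ i, i ≤ n → G.Adj w (p i) → 0 < i ∧ i < n := by
      intro w hw i hi ha
      have a1 : i ≠ 0 := by rintro rfl; exact hw.x ha
      have a2 : i ≠ n := by rintro rfl; exact hw.y ha
      omega
    have iq : ∀ w, Both G n m p q w → ∀ i, i ≤ m → G.Adj w (q i) → 0 < i ∧ i < m := by
      intro w hw i hi ha
      have a1 : i ≠ 0 := by rintro rfl; rw [← h.e0] at ha; exact hw.x ha
      have a2 : i ≠ m := by rintro rfl; rw [← h.e1] at ha; exact hw.y ha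
      omega
    obtain ⟨i, i1, i2, i3⟩ := hu.a
    obtain ⟨j, j1, j2, j3⟩ := hu.b
    rw [← hl_p (m := m) (p := p) (q := q) i2.le] at i3
    rw [← h.hl_q2 j2.le] at j3
    have k1 := h1 _ i1 (by omega) i3
    have k2 := h1 _ (by omega) (by omega) j3
    constructor
    · intro a b ha hb va ub
      have := ip v hv a ha va
      have := ip u hu b hb ub
      rw [← hl_p (m := m) (p := p) (q := q) ha] at va
      rw [← hl_p (m := m) (p := p) (q := q) hb] at ub
      have := h1 _ (by omega) (by omega) ub
      have := h2 _ (by omega) (by omega) va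
      omega
    · intro a b ha hb va ub
      have := iq v hv a ha va
      have := iq u hu b hb ub
      rw [← h.hl_q2 ha] at va
      rw [← h.hl_q2 hb] at ub
      have := h1 _ (by omega) (by omega) ub
      have := h2 _ (by omega) (by omega) va
      omega
  obtain ⟨s, t, -, -, ⟨h1, h2⟩ | ⟨h1, h2⟩⟩ := h.lin hW uv nuv ur vr hu tu tv
  · exact Or.inr (key u v hu hv s t h1 h2)
  · exact Or.inl (key v u hv hu s t h1 h2)

lemma HD.O2 (h : HD G n m p q)
    (hW : ∀ (n : ℕ) (f : ZMod n → V) (u v : V), Is2WheelCfg G n f u v → ¬G.Adj u v →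
    (NestedCfg G n f u v ∨ CousinCfg G n f u v)) {u v : V} (uv : u ≠ v) (nuv : ¬ G.Adj u v)
    (ur : u ∉ Set.range (hf n m p q)) (vr : v ∉ Set.range (hf n m p q))
    (hu : Both G n m p q u)
    (tu : Three G n m p q u) (tv : Three G n m p q v) {i j k : ℕ} (i0 : 0 < i) (ij : i < j) (jk : j < k)
    (hk : k < n) (vi : G.Adj v (p i)) (uj : G.Adj u (p j)) (vk : G.Adj v (p k)) : False := by
  obtain ⟨b, b1, b2, b3⟩ := hu.b
  rw [← hl_p (m := m) (p := p) (q := q) (by omega : i ≤ n)] at vi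
  rw [← hl_p (m := m) (p := p) (q := q) (by omega : j ≤ n)] at uj
  rw [← hl_p (m := m) (p := p) (q := q) (by omega : k ≤ n)] at vk
  rw [← h.hl_q2 b2.le] at b3
  obtain ⟨s, t, -, -, ⟨h1, h2⟩ | ⟨h1, h2⟩⟩ := h.lin hW uv nuv ur vr hu tu tv
  · have := h1 _ (by omega) (by omega) uj
    have := h1 _ (by omega) (by omega) b3
    have := h2 _ (by omega) (by omega) vi
    have := h2 _ (by omega) (by omega) vk
    omega
  · have := h1 _ (by omega) (by omega) vi
    have := h1 _ (by omega) (by omega) vk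
    have := h2 _ (by omega) (by omega) uj
    omega

end
end S10

namespace S10
variable {G : SimpleGraph V}

section
variable {C A B : Set V} {u v c d : V} {N : ℕ} {p : ℕ → V}

lemma pdStruct (h : Ctx G C A B) (P : PD G C A A u v c d N p) (aA : Att G C A) {z : V} (hz : z ∈ C)
    (zc : z ≠ c) (zd : z ≠ d) :
    (∃ i, 0 < i ∧ i < N ∧ Priv G A z (p i) ∧ Spider G A (p i) c d z) ∨
    (∃ i, 0 < i ∧ i + 1 < N ∧ Tri G A (p i) (p (i + 1)) z c d z) ∨
    (∃ i j, 0 < i ∧ i + 2 ≤ j ∧ j < N ∧ G.Adj z (p i) ∧ G.Adj z (p j) ∧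
      (∀ k ≤ N, G.Adj z (p k) → i ≤ k ∧ k ≤ j) ∧ Spider G A z c d z) := by
  have N2 := P.N2
  have z0 : ¬ G.Adj z (p 0) := by rw [P.p0]; exact h.ind _ hz _ P.cC
  have zN : ¬ G.Adj z (p N) := by rw [P.pN]; exact h.ind _ hz _ P.dC
  have int : ∀ i ≤ N, G.Adj z (p i) → 0 < i ∧ i < N := by
    intro i hi ha
    have a1 : i ≠ 0 := by rintro rfl; exact z0 ha
    have a2 : i ≠ N := by rintro rfl; exact zN ha
    omega
  have zp : ∀ i ≤ N, z ≠ p i := by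
    intro i hi e
    rcases (by omega : i = 0 ∨ i = N ∨ (0 < i ∧ i < N)) with r | r | r
    · subst r; exact zc (e.trans P.p0)
    · subst r; exact zd (e.trans P.pN)
    · exact h.AC _ (P.memA r.1 r.2) (e ▸ hz)
  obtain ⟨a, ha, hza⟩ := aA z hz
  obtain ⟨k, k0, k1, rfl⟩ := P.sur a ha
  have := pathStruct P.pf (D := A) (R := {z}) (s := z) (z := z) (by omega) (fun i h1 h2 => P.memA h1 h2)
    (IP.single z) (fun v hv => Or.inr hv) (fun v hv i hi => by rw [Set.mem_singleton_iff.1 hv]; exact zp i hi)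
    (fun v hv hne => absurd hv hne) ⟨k, k1.le, hza⟩
  rw [P.p0, P.pN] at this
  rcases this with ⟨i, hi, a1, a2, s⟩ | ⟨i, hi, a1, a2, a3, s⟩ | ⟨i, j, hij, hj, a1, a2, a3, s⟩
  · have := int i hi a1
    refine Or.inl ⟨i, this.1, this.2, ⟨P.memA this.1 this.2, a1, ?_⟩, s⟩
    intro b hb hzb
    obtain ⟨k, k0, k1, rfl⟩ := P.sur b hb
    rw [a2 k k1.le hzb]
  · have := int _ (by omega) a1
    have := int _ (by omega) a2
    exact Or.inr (Or.inl ⟨i, by omega, by omega, s⟩)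
  · have := int _ (by omega) a1
    have := int _ (by omega) a2
    exact Or.inr (Or.inr ⟨i, j, by omega, hij, by omega, a1, a2, a3, s⟩)

/-- an induced path with ends `x, y` whose interior is exactly `A` -/
def GP (G : SimpleGraph V) (A : Set V) (x y : V) : Prop :=
  ∃ n p, PF G n p ∧ p 0 = x ∧ p n = y ∧ 2 ≤ n ∧ (∀ i, 0 < i → i < n → p i ∈ A) ∧
    ∀ w ∈ A, ∃ i, 0 < i ∧ i < n ∧ p i = w

lemma PD.gp (P : PD G C A A u v c d N p) : GP G A c d :=
  ⟨N, p, P.pf, P.p0, P.pN, P.N2, P.mem, P.sur⟩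

lemma GP_single {a x y : V} (xy : x ≠ y) (nxy : ¬ G.Adj x y) (xa : G.Adj x a) (ya : G.Adj y a) :
    GP G {a} x y := by
  refine ⟨2, fun i => if i = 0 then x else if i = 1 then a else y, ⟨?_, ?_, ?_⟩, rfl, rfl, le_rfl, ?_, ?_⟩
  · have := xa.ne; have := ya.ne
    intro i hi j hj
    interval_cases i <;> interval_cases j <;> simp_all <;> grind
  · have := xa.ne; have := ya.ne
    have nyx : ¬ G.Adj y x := fun e => nxy e.symm
    intro i hi j hj
    interval_cases i <;> interval_cases j <;> simp_all
  · intro i hi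
    interval_cases i <;> simp [xa, ya.symm]
  · intro i h1 h2
    interval_cases i; simp
  · intro w hw
    exact ⟨1, by omega, by omega, by simp; exact (Set.mem_singleton_iff.1 hw).symm⟩

lemma use2 (h : Ctx G C A B) (aA : Att G C A) (aB : Att G C B) {u v u' v' x y w : V}
    (hx : x ∈ C) (hy : y ∈ C) (hw : w ∈ C) (xu : Priv G A x u) (xu' : Priv G B x u')
    (yv : Priv G A y v) (wv : Priv G B w v') (uv : u ≠ v) (uv' : u' ≠ v')
    (ia : IP G u v A) (ib : IP G u' v' B) :
    ∃ x ∈ C, ∃ y ∈ C, x ≠ y ∧ GP G A x y ∧ GP G B x y := by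
  obtain ⟨N, p, P⟩ := exists_PD h.ind h.AC hx hy xu yv uv subset_rfl ia
  obtain ⟨M, q, Q⟩ := exists_PD h.ind h.BC hx hw xu' wv uv' subset_rfl ib
  by_cases c1 : Priv G B y v'
  · obtain ⟨M, q, Q⟩ := exists_PD h.ind h.BC hx hy xu' c1 uv' subset_rfl ib
    exact ⟨x, hx, y, hy, P.cd, P.gp, Q.gp⟩
  by_cases c2 : Priv G A w v
  · obtain ⟨N, p, P⟩ := exists_PD h.ind h.AC hx hw xu c2 uv subset_rfl ia
    exact ⟨x, hx, w, hw, P.cd, P.gp, Q.gp⟩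
  exfalso
  have wy : w ≠ y := by rintro rfl; exact c1 wv
  have xy := P.cd
  have xw := Q.cd
  have hAC := h.AC; have hBC := h.BC; have hAB := h.AB; have hn := h.nAB
  have hi := h.ind
  rcases pdStruct h P aA hw xw.symm wy with ⟨i, i0, i1, pr, s⟩ | ⟨i, i0, i1, s⟩ | ⟨i, j, i0, ij, j1, -, -, -, s⟩ <;>
  rcases pdStruct h.symm Q aB hy xy.symm wy.symm with
    ⟨i', i0', i1', pr', t⟩ | ⟨i', i0', i1', t⟩ | ⟨i', j', i0', ij', j1', -, -, -, t⟩ <;>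
  replace t := t.swap23
  · have := SS h hx hy hw xy xw wy.symm s t
    have := P.memA i0 i1; have := Q.memA i0' i1'
    grind
  · have := ST h hx hy hw xy xw wy.symm s t
    have := P.memA i0 i1; have := Q.memA i0' (by omega : i' < M); have := Q.memA (by omega : 0 < i' + 1) i1'
    grind
  · have kk := SS h hx hy hw xy xw wy.symm s t
    have := P.memA i0 i1
    have h3 : G.Adj y (p i) := by
      rcases kk with e | e
      · grind
      · exact e.symm
    have := yv.2.2 _ (by assumption) h3
    grind
  · have := ST h.symm hx hy hw xy xw wy.symm t s
    have := P.memA i0 (by omega : i < N); have := P.memA (by omega : 0 < i + 1) i1; have := Q.memA i0' i1'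
    grind
  · have := TT h hx hy hw xy xw wy.symm s t
    have := P.memA i0 (by omega : i < N); have := P.memA (by omega : 0 < i + 1) i1
    have := Q.memA i0' (by omega : i' < M); have := Q.memA (by omega : 0 < i' + 1) i1'
    grind
  · have := ST h.symm hx hy hw xy xw wy.symm t s
    have := P.memA i0 (by omega : i < N); have := P.memA (by omega : 0 < i + 1) i1
    grind
  · have kk := SS h hx hy hw xy xw wy.symm s t
    have := Q.memA i0' i1'
    have h3 : G.Adj w (q i') := by
      rcases kk with e | e
      · grind
      · exact e
    have := wv.2.2 _ (by assumption) h3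
    grind
  · have := ST h hx hy hw xy xw wy.symm s t
    have := Q.memA i0' (by omega : i' < M); have := Q.memA (by omega : 0 < i' + 1) i1'
    grind
  · have := SS h hx hy hw xy xw wy.symm s t
    grind

lemma LemF (h : Ctx G C A B) (aA : Att G C A) (cB : Conn G B) (aB : Att G C B)
    (P : PD G C A A u v c d N p) {z u' : V} (hz : z ∈ C)
    (zc : z ≠ c) (zd : z ≠ d) (zu' : Priv G B z u') (zu : ¬ Priv G A z u) (zv : ¬ Priv G A z v) :
    (∃ i j, 0 < i ∧ i + 2 ≤ j ∧ j < N ∧ G.Adj z (p i) ∧ G.Adj z (p j) ∧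
      (∀ k ≤ N, G.Adj z (p k) → i ≤ k ∧ k ≤ j)) ∧ Spider G A z c d z ∧
      ∃ T, IP G c d T ∧ u' ∈ T ∧ ∀ v ∈ T, v ∈ B ∨ v = c ∨ v = d := by
  have hc := P.cC; have hd := P.dC; have cd := P.cd
  have hAC := h.AC; have hBC := h.BC; have hAB := h.AB; have hn := h.nAB
  have hi := h.ind
  have nS : ¬ Spider G B z c d z := fun s => s.not_priv zc zd (hi _ hz _ hc) (hi _ hz _ hd) zu'
  have nT : ∀ a b, ¬ Tri G B a b z c d z := fun a b s => s.not_priv (hi _ hz _ hc) (hi _ hz _ hd) zu'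
  have pc := P.pc; have pd := P.pd
  rcases pdStruct h P aA hz zc zd with ⟨i, i0, i1, pr, s⟩ | ⟨i, i0, i1, s⟩ | ⟨i, j, i0, ij, j1, b1, b2, b3, s⟩ <;>
  rcases exist3 cB cd zc.symm zd.symm (hi _ hc _ hd) (fun hh => hBC _ hh hz) (aB _ hc) (aB _ hd) (aB _ hz)
    with ⟨b', t⟩ | ⟨a', b', c', t⟩
  · exfalso
    have k := SS h hc hd hz cd zc.symm zd.symm s t
    have hpA := P.memA i0 i1
    have e1 : G.Adj c (p i) → p i = u := pc.2.2 _ hpA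
    have e2 : G.Adj d (p i) → p i = v := pd.2.2 _ hpA
    rcases t.mem' with r | r | r | r
    · grind
    · subst r
      rcases k with k | k
      · grind
      · exact zu (e1 k.symm ▸ pr)
    · subst r
      rcases k with k | k
      · grind
      · exact zv (e2 k.symm ▸ pr)
    · subst r; exact nS t
  · exfalso
    have k := ST h hc hd hz cd zc.symm zd.symm s t
    have hpA := P.memA i0 i1
    have := t.mem'
    grind
  · exfalso
    have k := ST h.symm hc hd hz cd zc.symm zd.symm t s
    have := P.memA i0 (by omega : i < N); have := P.memA (by omega : 0 < i + 1) i1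
    have := t.mem'
    grind
  · exfalso
    have k := TT h hc hd hz cd zc.symm zd.symm s t
    have := P.memA i0 (by omega : i < N); have := P.memA (by omega : 0 < i + 1) i1
    have := t.mem'
    grind
  · have k := SS h hc hd hz cd zc.symm zd.symm s t
    have hb : b' ∈ B := by
      have := t.mem'
      grind
    have hb2 : b' = u' := by
      rcases k with k | k
      · grind
      · exact zu'.2.2 _ hb k
    subst hb2
    exact ⟨⟨i, j, i0, ij, j1, b1, b2, b3⟩, s, t.path hb⟩
  · exfalso
    have k := ST h hc hd hz cd zc.symm zd.symm s t
    have := t.mem'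
    grind

/-- if the attachment of `z` precedes that of `w`, `z` is the center of a spider -/
lemma ordSpider (h : Ctx G C A B) (P : PD G C A A u v c d N p) {z w : V} (hz : z ∈ C) (hw : w ∈ C)
    (zc : z ≠ c) (wc : w ≠ c) (zw : z ≠ w) {a a' k : ℕ} (a0 : 0 < a) (aa : a + 2 ≤ a')
    (ak : a' ≤ k) (kN : k < N) (za : G.Adj z (p a)) (za' : G.Adj z (p a')) (wk : G.Adj w (p k))
    (wm : ∀ i ≤ N, G.Adj w (p i) → k ≤ i) : Spider G A z c w z := by
  have hAC := h.AC
  have hi := h.ind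
  have hp : ∀ i ≤ k, p i ∈ A ∨ p i = c := by
    intro i hi
    rcases Nat.eq_zero_or_pos i with r | r
    · right; rw [r, P.p0]
    · left; exact P.memA r (by omega)
  have hc := P.cC
  have S := (IP.cons (P.pf.sub (i := 0) (j := k) (by omega) (by omega)).symm wk (by
    rintro ⟨i, ⟨-, hi⟩, e⟩
    have := hp i hi
    grind) (by
    rintro _ ⟨i, ⟨-, hi⟩, rfl⟩ hne hadj
    have := wm i (by omega) hadj
    have : i = k := by omega
    exact hne (by rw [this]))).symm
  obtain ⟨n, q, qf, q0, qn, hS⟩ := S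
  rw [P.p0] at q0
  have mem : ∀ i ≤ n, q i = w ∨ ∃ j ≤ k, p j = q i := by
    intro i hi
    rcases (hS (q i)).2 ⟨i, hi, rfl⟩ with r | ⟨j, ⟨-, hj⟩, e⟩
    · exact Or.inl r
    · exact Or.inr ⟨j, hj, e⟩
  have inA : ∀ i, 0 < i → i < n → q i ∈ A := by
    intro i h1 h2
    rcases mem i h2.le with r | ⟨j, hj, e⟩
    · have := qf.1 i (by omega) n le_rfl (r.trans qn.symm); omega
    · rcases hp j hj with r | r
      · rwa [← e]
      · have := qf.1 i (by omega) 0 (by omega) (e.symm.trans (r.trans q0.symm)); omega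
  obtain ⟨i, hi1, ei⟩ := (hS (p a)).1 (Or.inr ⟨a, ⟨by omega, by omega⟩, rfl⟩)
  obtain ⟨j, hj1, ej⟩ := (hS (p a')).1 (Or.inr ⟨a', ⟨by omega, by omega⟩, rfl⟩)
  have ij : i ≠ j := by
    rintro rfl
    have := P.pf.1 a (by omega) a' (by omega) (ei.symm.trans ej); omega
  have nij : ¬ G.Adj (q i) (q j) := by
    rw [ei, ej]
    intro e
    have := P.pf.2.1 a (by omega) a' (by omega) e; omega
  have n0 : 0 < n := by omega
  have := pathStruct qf (D := A) (R := {z}) (s := z) (z := z) n0 inA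
    (IP.single z) (fun v hv => Or.inr hv) (fun v hv i hi e => by
      rw [Set.mem_singleton_iff.1 hv] at e
      rcases mem i hi with r | ⟨j, hj, e'⟩
      · exact zw (e.trans r)
      · have := hp j hj
        grind)
    (fun v hv hne => absurd hv hne) ⟨i, hi1, by rwa [ei]⟩
  rw [q0, qn] at this
  rw [← ei] at za
  rw [← ej] at za'
  rcases this with ⟨e, he, b1, b2, s⟩ | ⟨e, he, b1, b2, b3, s⟩ | ⟨_, _, _, _, _, _, _, s⟩
  · exact (ij ((b2 i hi1 za).trans (b2 j hj1 za').symm)).elim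
  · exfalso
    have h1 := qf.2.2 e (by omega)
    rcases b3 i hi1 za with r | r <;> rcases b3 j hj1 za' with r' | r'
    · omega
    · subst r; subst r'; exact nij h1
    · subst r; subst r'; exact nij h1.symm
    · omega
  · exact s

lemma mkHD (h : Ctx G C A B) {n m : ℕ} {p q : ℕ → V} (pf : PF G n p) (qf : PF G m q) (n2 : 2 ≤ n) (m2 : 2 ≤ m)
    (e0 : p 0 = q 0) (e1 : p n = q m) (pA : ∀ i, 0 < i → i < n → p i ∈ A)
    (qB : ∀ i, 0 < i → i < m → q i ∈ B) : HD G n m p q :=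
  ⟨pf, qf, n2, m2, e0, e1, fun i j h1 h2 h3 h4 e => h.AB _ (pA i h1 h2) (e ▸ qB j h3 h4),
    fun i j h1 h2 h3 h4 => h.nAB _ (pA i h1 h2) _ (qB j h3 h4)⟩

lemma notRange (h : Ctx G C A B) {n m : ℕ} {p q : ℕ → V} (H : HD G n m p q)
    (pA : ∀ i, 0 < i → i < n → p i ∈ A) (qB : ∀ i, 0 < i → i < m → q i ∈ B) {z : V} (hz : z ∈ C)
    (z0 : z ≠ p 0) (z1 : z ≠ p n) : z ∉ Set.range (hf n m p q) := by
  have hAC := h.AC; have hBC := h.BC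
  rw [H.range]
  rintro (⟨i, hi, e⟩ | ⟨i, hi, e⟩)
  · rcases (by omega : i = 0 ∨ i = n ∨ (0 < i ∧ i < n)) with r | r | r
    · subst r; exact z0 e.symm
    · subst r; exact z1 e.symm
    · exact hAC _ (pA i r.1 r.2) (e ▸ hz)
  · rcases (by omega : i = 0 ∨ i = m ∨ (0 < i ∧ i < m)) with r | r | r
    · subst r; rw [← H.e0] at e; exact z0 e.symm
    · subst r; rw [← H.e1] at e; exact z1 e.symm
    · exact hBC _ (qB i r.1 r.2) (e ▸ hz)

/-- the hole through `T` : two unordered centers -/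
lemma holeT (h : Ctx G C A B) (P : PD G C A A u v c d N p) {z w u' : V} (hz : z ∈ C) (hw : w ∈ C)
    (zc : z ≠ c) (zd : z ≠ d) (wc : w ≠ c) (wd : w ≠ d) (zw : z ≠ w)
    {a a' k k' : ℕ} (a0 : 0 < a) (aa : a + 2 ≤ a') (aN : a' < N) (za : G.Adj z (p a)) (za' : G.Adj z (p a'))
    (k0 : 0 < k) (kk : k + 2 ≤ k') (kN : k' < N) (wk : G.Adj w (p k)) (wk' : G.Adj w (p k'))
    (wm : ∀ i ≤ N, G.Adj w (p i) → k ≤ i ∧ i ≤ k')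
    (zu' : Priv G B z u') {T : Set V} (hT : IP G c d T) (uT : u' ∈ T) (TB : ∀ v ∈ T, v ∈ B ∨ v = c ∨ v = d)
    (o1 : ¬ a' ≤ k) (o2 : ¬ k' ≤ a) :
    (∃ e, k < e ∧ e < k' ∧ G.Adj w (p e)) ∧ ∀ j, k < j → j < k' → ¬ G.Adj z (p j) := by
  have hAC := h.AC; have hBC := h.BC; have hAB := h.AB; have hn := h.nAB
  have hi := h.ind
  have hc := P.cC; have hd := P.dC; have cd := P.cd
  have hT' := hT
  obtain ⟨m, q, qf, q0, qm, hS⟩ := hT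
  obtain ⟨j, hj, ej⟩ := (hS u').1 uT
  have uB := zu'.1
  have j0 : j ≠ 0 := by rintro rfl; grind
  have jm : j ≠ m := by rintro rfl; grind
  have qB : ∀ i, 0 < i → i < m → q i ∈ B := by
    intro i h1 h2
    rcases TB _ ((hS (q i)).2 ⟨i, h2.le, rfl⟩) with r | r | r
    · exact r
    · have := qf.1 i (by omega) 0 (by omega) (r.trans q0.symm); omega
    · have := qf.1 i (by omega) m (by omega) (r.trans qm.symm); omega
  have H : HD G N m p q := mkHD h P.pf qf P.N2 (by omega) (P.p0.trans q0.symm) (P.pN.trans qm.symm)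
    (fun i => P.memA) qB
  have zr := notRange h H (fun i => P.memA) qB hz (P.p0 ▸ zc) (P.pN ▸ zd)
  have wr := notRange h H (fun i => P.memA) qB hw (P.p0 ▸ wc) (P.pN ▸ wd)
  have Bz : Both G N m p q z := ⟨by rw [P.p0]; exact hi _ hz _ hc, by rw [P.pN]; exact hi _ hz _ hd,
    ⟨a, a0, by omega, za⟩, ⟨j, by omega, by omega, by rw [ej]; exact zu'.2.1⟩⟩
  have Tz : Three G N m p q z := ⟨a, a', N + m - j, by omega, by omega, by omega, by rwa [hl_p (by omega)],
    by rwa [hl_p (by omega)], by rw [H.hl_q2 (by omega), ej]; exact zu'.2.1⟩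
  have hw0 : ¬ G.Adj w (p 0) := by rw [P.p0]; exact hi _ hw _ hc
  have hwN : ¬ G.Adj w (p N) := by rw [P.pN]; exact hi _ hw _ hd
  have natt : ¬ ∃ i, 0 < i ∧ i < m ∧ G.Adj w (q i) := by
    intro hb
    have Bw : Both G N m p q w := ⟨hw0, hwN, ⟨k, k0, by omega, wk⟩, hb⟩
    obtain ⟨i, i0, i1, wi⟩ := hb
    have Tw : Three G N m p q w := ⟨k, k', N + m - i, by omega, by omega, by omega, by rwa [hl_p (by omega)],
      by rwa [hl_p (by omega)], by rwa [H.hl_q2 (by omega)]⟩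
    rcases H.O1 h.hW zw (hi _ hz _ hw) zr wr Bz Bw Tz Tw with r | r
    · exact o1 (r.1 a' k (by omega) (by omega) za' wk)
    · exact o2 (r.1 k' a (by omega) (by omega) wk' za)
  have mid : ∃ e, k < e ∧ e < k' ∧ G.Adj w (p e) := by
    by_contra hno
    push Not at hno
    refine h.hT (theta2 P.pf (T := T) (v := w) (i := k) (j := k') (by rw [P.p0, P.pN]; exact hT') ?_ ?_ ?_ ?_ ?_ k0 kk kN wk wk' ?_)
    · intro i h1 h2 hh
      have := P.memA h1 h2
      have := TB _ hh
      grind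
    · intro i h1 h2 b hb n1 n2
      have := TB _ hb
      rw [P.p0] at n1; rw [P.pN] at n2
      exact hn _ (P.memA h1 h2) _ (by tauto)
    · intro i hi e
      exact wr ((H.range _).2 (Or.inl ⟨i, hi, e.symm⟩))
    · intro hh
      have := TB _ hh
      grind
    · intro b hb hadj
      obtain ⟨i, h1, rfl⟩ := (hS b).1 hb
      rcases (by omega : i = 0 ∨ i = m ∨ (0 < i ∧ i < m)) with r | r | r
      · subst r; rw [q0] at hadj; exact hi _ hw _ hc hadj
      · subst r; rw [qm] at hadj; exact hi _ hw _ hd hadj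
      · exact natt ⟨i, r.1, r.2, hadj⟩
    · intro i h1 h2
      have := wm i h1 h2
      by_contra hh
      exact hno i (by omega) (by omega) h2
  refine ⟨mid, ?_⟩
  obtain ⟨e, e1, e2, we⟩ := mid
  have Tw : Three G N m p q w := ⟨k, e, k', by omega, by omega, by omega, by rwa [hl_p (by omega)],
      by rwa [hl_p (by omega)], by rwa [hl_p (by omega)]⟩
  intro j h1 h2 zj
  exact H.O2 h.hW zw (hi _ hz _ hw) zr wr Bz Tz Tw k0 h1 h2 kN wk zj wk'

lemma use3 (h : Ctx G C A B) (cA : Conn G A) (aA : Att G C A) (cB : Conn G B) (aB : Att G C B)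
    (P : PD G C A A u v c d N p) {u' v' z w : V} {M : ℕ} {q : ℕ → V} (Q : PD G C B B u' v' z w M q) :
    (Priv G B c u' ∨ Priv G B c v' ∨ Priv G B d u' ∨ Priv G B d v') ∨
    (Priv G A z u ∨ Priv G A z v ∨ Priv G A w u ∨ Priv G A w v) := by
  by_contra hno
  push Not at hno
  obtain ⟨⟨b1, b2, b3, b4⟩, a1, a2, a3, a4⟩ := hno
  have hc := P.cC; have hd := P.dC; have cd := P.cd
  have hz := Q.cC; have hw := Q.dC; have zw := Q.cd
  have hi := h.ind
  have zc : z ≠ c := by rintro rfl; exact b1 Q.pc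
  have zd : z ≠ d := by rintro rfl; exact b3 Q.pc
  have wc : w ≠ c := by rintro rfl; exact b2 Q.pd
  have wd : w ≠ d := by rintro rfl; exact b4 Q.pd
  obtain ⟨⟨a, a', a0, aa, aN, za, za', zm⟩, sz, T, hT, uT, TB⟩ := LemF h aA cB aB P hz zc zd Q.pc a1 a2
  obtain ⟨⟨k, k', k0, kk, kN, wk, wk', wm⟩, sw, T', hT', uT', TB'⟩ := LemF h aA cB aB P hw wc wd Q.pd a3 a4
  obtain ⟨-, sc, -⟩ := LemF h.symm aB cA aA Q hc zc.symm wc.symm P.pc b1 b2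
  have o1 : ¬ a' ≤ k := by
    intro hh
    have s := ordSpider h P hz hw zc wc zw a0 aa hh (by omega) za za' wk (fun i h1 h2 => (wm i h1 h2).1)
    have := SS h hc hw hz wc.symm zc.symm zw.symm s (sc.swap12.swap23.swap12)
    grind
  have o2 : ¬ k' ≤ a := by
    intro hh
    have s := ordSpider h P hw hz wc zc zw.symm k0 kk hh (by omega) wk wk' za (fun i h1 h2 => (zm i h1 h2).1)
    have := SS h hc hz hw zc.symm wc.symm zw s (sc.swap23.swap12)
    grind
  obtain ⟨⟨e, e1, e2, we⟩, n1⟩ := holeT h P hz hw zc zd wc wd zw a0 aa aN za za' k0 kk kN wk wk' wm Q.pc hT uT TB o1 o2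
  obtain ⟨⟨f, f1, f2, zf⟩, n2⟩ := holeT h P hw hz wc wd zc zd zw.symm k0 kk kN wk wk' a0 aa aN za za' zm Q.pd hT' uT' TB' o2 o1
  have x1 : ¬ (k < a ∧ a < k') := fun hh => n1 a hh.1 hh.2 za
  have x2 : ¬ (k < a' ∧ a' < k') := fun hh => n1 a' hh.1 hh.2 za'
  have x3 : ¬ (k < f ∧ f < k') := fun hh => n1 f hh.1 hh.2 zf
  have x4 : ¬ (a < k ∧ k < a') := fun hh => n2 k hh.1 hh.2 wk
  have x5 : ¬ (a < k' ∧ k' < a') := fun hh => n2 k' hh.1 hh.2 wk'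
  omega

lemma chooseEnds (h : Ctx G C A B) (mA : MinA G C A) (mB : MinA G C B) (hcard : 2 ≤ C.ncard) :
    ∃ x ∈ C, ∃ y ∈ C, x ≠ y ∧ GP G A x y ∧ GP G B x y := by
  have gs : ∀ D : Set V, Att G C D → ∀ a, D = {a} → ∀ x ∈ C, ∀ y ∈ C, x ≠ y → GP G D x y := by
    rintro D hD a rfl x hx y hy xy
    obtain ⟨_, r, e1⟩ := hD x hx
    obtain ⟨_, r', e2⟩ := hD y hy
    rw [Set.mem_singleton_iff.1 r] at e1
    rw [Set.mem_singleton_iff.1 r'] at e2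
    exact GP_single xy (h.ind _ hx _ hy) e1 e2
  rcases apath h mA mB.conn mB.att with ⟨a, ha⟩ | ⟨u, v, c, d, N, p, P⟩ <;>
  rcases apath h.symm mB mA.conn mA.att with ⟨b, hb⟩ | ⟨u', v', z, w, M, q, Q⟩
  · obtain ⟨x, y, hx, hy, xy⟩ := (Set.one_lt_ncard_iff (Set.toFinite _)).1 (by omega : 1 < C.ncard)
    exact ⟨x, hx, y, hy, xy, gs A mA.att a ha x hx y hy xy, gs B mB.att b hb x hx y hy xy⟩
  · exact ⟨z, Q.cC, w, Q.dC, Q.cd, gs A mA.att a ha _ Q.cC _ Q.dC Q.cd, Q.gp⟩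
  · exact ⟨c, P.cC, d, P.dC, P.cd, P.gp, gs B mB.att b hb _ P.cC _ P.dC P.cd⟩
  · have aA := mA.att; have aB := mB.att
    have Pi := P.ip; have Qi := Q.ip
    have Pu := P.uv; have Qu := Q.uv
    rcases use3 h mA.conn aA mB.conn aB P Q with (r | r | r | r) | r | r | r | r
    · exact use2 h aA aB P.cC P.dC Q.dC P.pc r P.pd Q.pd Pu Qu Pi Qi
    · exact use2 h aA aB P.cC P.dC Q.cC P.pc r P.pd Q.pc Pu Qu.symm Pi Qi.symm
    · exact use2 h aA aB P.dC P.cC Q.dC P.pd r P.pc Q.pd Pu.symm Qu Pi.symm Qi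
    · exact use2 h aA aB P.dC P.cC Q.cC P.pd r P.pc Q.pc Pu.symm Qu.symm Pi.symm Qi.symm
    · exact use2 h aA aB Q.cC P.dC Q.dC r Q.pc P.pd Q.pd Pu Qu Pi Qi
    · exact use2 h aA aB Q.cC P.cC Q.dC r Q.pc P.pc Q.pd Pu.symm Qu Pi.symm Qi
    · exact use2 h aA aB Q.dC P.dC Q.cC r Q.pd P.pd Q.pc Pu Qu.symm Pi Qi.symm
    · exact use2 h aA aB Q.dC P.cC Q.cC r Q.pd P.pc Q.pc Pu.symm Qu.symm Pi.symm Qi.symm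

end
end S10

namespace S10
variable {G : SimpleGraph V}

section
variable {C A B : Set V}

lemma two_of (h : Ctx G C A B) {n : ℕ} {p : ℕ → V} (pf : PF G n p) (n2 : 2 ≤ n)
    (pA : ∀ i, 0 < i → i < n → p i ∈ A) {z : V} (hz : z ∈ C) (z0 : z ≠ p 0) (z1 : z ≠ p n)
    (za : ∃ i, 0 < i ∧ i < n ∧ G.Adj z (p i)) :
    (∃ i j, i < j ∧ j ≤ n ∧ G.Adj z (p i) ∧ G.Adj z (p j)) ∨
    ∃ i, i ≤ n ∧ G.Adj z (p i) ∧ Spider G A (p i) (p 0) (p n) z := by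
  obtain ⟨k, k0, k1, zk⟩ := za
  have zp : ∀ i ≤ n, z ≠ p i := by
    intro i hi e
    rcases (by omega : i = 0 ∨ i = n ∨ (0 < i ∧ i < n)) with r | r | r
    · subst r; exact z0 e
    · subst r; exact z1 e
    · exact h.AC _ (pA i r.1 r.2) (e ▸ hz)
  rcases pathStruct pf (D := A) (R := {z}) (s := z) (z := z) (by omega) pA
    (IP.single z) (fun v hv => Or.inr hv) (fun v hv i hi => by rw [Set.mem_singleton_iff.1 hv]; exact zp i hi)
    (fun v hv hne => absurd hv hne) ⟨k, k1.le, zk⟩ with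
    ⟨i, hi, a1, a2, s⟩ | ⟨i, hi, a1, a2, a3, s⟩ | ⟨i, j, hij, hj, a1, a2, a3, s⟩
  · exact Or.inr ⟨i, hi, a1, s⟩
  · exact Or.inl ⟨i, i + 1, by omega, hi, a1, a2⟩
  · exact Or.inl ⟨i, j, by omega, hj, a1, a2⟩

lemma three_of (h : Ctx G C A B) {n m : ℕ} {p q : ℕ → V} (H : HD G n m p q)
    (pA : ∀ i, 0 < i → i < n → p i ∈ A) (qB : ∀ i, 0 < i → i < m → q i ∈ B) {z : V} (hz : z ∈ C)
    (hx : p 0 ∈ C) (hy : p n ∈ C) (xy : p 0 ≠ p n)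
    (z0 : z ≠ p 0) (z1 : z ≠ p n) (b : Both G n m p q z) : Three G n m p q z := by
  have hi := h.ind
  have n2 := H.n2
  have ip : ∀ i ≤ n, G.Adj z (p i) → 0 < i ∧ i < n := by
    intro i hi ha
    have a1 : i ≠ 0 := by rintro rfl; exact b.x ha
    have a2 : i ≠ n := by rintro rfl; exact b.y ha
    omega
  have iq : ∀ i ≤ m, G.Adj z (q i) → 0 < i ∧ i < m := by
    intro i hi ha
    have a1 : i ≠ 0 := by rintro rfl; rw [← H.e0] at ha; exact b.x ha
    have a2 : i ≠ m := by rintro rfl; rw [← H.e1] at ha; exact b.y ha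
    omega
  rcases two_of h H.pf H.n2 pA hz z0 z1 b.a with ⟨i, j, ij, jn, zi, zj⟩ | ⟨i, hin, zi, s⟩
  · obtain ⟨k, k0, k1, zk⟩ := b.b
    have := ip j jn zj
    exact ⟨i, j, n + m - k, ij, by omega, by omega, by rwa [hl_p (by omega)], by rwa [hl_p (by omega)],
      by rwa [H.hl_q2 (by omega)]⟩
  rcases two_of h.symm H.qf H.m2 qB hz (H.e0 ▸ z0) (H.e1 ▸ z1) b.b with ⟨j, k, jk, km, zj, zk⟩ | ⟨j, hjm, zj, t⟩
  · have := ip i hin zi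
    have := iq j (by omega) zj
    have := iq k (by omega) zk
    exact ⟨i, n + m - k, n + m - j, by omega, by omega, by omega, by rwa [hl_p (by omega)],
      by rwa [H.hl_q2 (by omega)], by rwa [H.hl_q2 (by omega)]⟩
  · exfalso
    have h1 := ip i hin zi
    have h2 := iq j hjm zj
    rw [← H.e0, ← H.e1] at t
    have := SS h hx hy hz xy z0.symm z1.symm s t
    have := h.AB _ (pA i h1.1 h1.2)
    have := h.nAB _ (pA i h1.1 h1.2) _ (qB j h2.1 h2.2)
    have := qB j h2.1 h2.2
    grind

lemma Ord.antisymm {n m : ℕ} {p q : ℕ → V} (H : HD G n m p q) {u v : V} (bu : Both G n m p q u)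
    (bv : Both G n m p q v) (tu : Three G n m p q u) (o1 : Ord G n m p q u v) (o2 : Ord G n m p q v u) :
    False := by
  obtain ⟨a, a0, a1, va⟩ := bv.a
  obtain ⟨b, b0, b1, vb⟩ := bv.b
  have hp : ∀ i ≤ n, G.Adj u (p i) → i = a := fun i hi hu =>
    le_antisymm (o1.1 i a hi a1.le hu va) (o2.1 a i a1.le hi va hu)
  have hq : ∀ i ≤ m, G.Adj u (q i) → i = b := fun i hi hu =>
    le_antisymm (o1.2 i b hi b1.le hu vb) (o2.2 b i b1.le hi vb hu)
  have hl' : ∀ i < n + m, G.Adj u (hl n m p q i) → i = a ∨ i = n + m - b := by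
    intro i hi hu
    rcases le_total i n with r | r
    · rw [hl_p r] at hu
      exact Or.inl (hp i r hu)
    · rw [H.hl_q r] at hu
      have := hq _ (by omega) hu
      omega
  obtain ⟨i, j, k, h1, h2, h3, u1, u2, u3⟩ := tu
  have := hl' i (by omega) u1
  have := hl' j (by omega) u2
  have := hl' k (by omega) u3
  omega

lemma Ord.trans {n m : ℕ} {p q : ℕ → V} {u v w : V} (bv : Both G n m p q v)
    (o1 : Ord G n m p q u v) (o2 : Ord G n m p q v w) : Ord G n m p q u w := by
  obtain ⟨a, a0, a1, va⟩ := bv.a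
  obtain ⟨b, b0, b1, vb⟩ := bv.b
  exact ⟨fun i j hi hj hu hw => (o1.1 i a hi a1.le hu va).trans (o2.1 a j a1.le hj va hw),
    fun i j hi hj hu hw => (o1.2 i b hi b1.le hu vb).trans (o2.2 b j b1.le hj vb hw)⟩

lemma enum (S : Set V) (R : V → V → Prop) (tr : ∀ u ∈ S, ∀ v ∈ S, ∀ w ∈ S, R u v → R v w → R u w)
    (as : ∀ u ∈ S, ∀ v ∈ S, u ≠ v → R u v → R v u → False)
    (tot : ∀ u ∈ S, ∀ v ∈ S, u ≠ v → R u v ∨ R v u) {k : ℕ} (hk : S.ncard = k) :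
    ∃ c : Fin k → V, Function.Injective c ∧ Set.range c = S ∧ ∀ i j, i < j → R (c i) (c j) := by
  classical
  letI : LinearOrder S :=
    { le := fun u v => u = v ∨ R u.1 v.1
      le_refl := fun u => Or.inl rfl
      le_trans := by
        rintro u v w (rfl | h1) (rfl | h2)
        · exact Or.inl rfl
        · exact Or.inr h2
        · exact Or.inr h1
        · exact Or.inr (tr _ u.2 _ v.2 _ w.2 h1 h2)
      le_antisymm := by
        rintro u v (rfl | h1) (h2 | h2)
        · rfl
        · rfl
        · exact h2.symm
        · by_contra hne
          exact as _ u.2 _ v.2 (fun e => hne (Subtype.ext e)) h1 h2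
      le_total := by
        intro u v
        by_cases e : u = v
        · exact Or.inl (Or.inl e)
        · exact (tot _ u.2 _ v.2 (fun e' => e (Subtype.ext e'))).imp Or.inr Or.inr
      toDecidableLE := Classical.decRel _ }
  have hcard : Fintype.card S = k := by
    rw [← hk, Set.ncard_eq_toFinset_card', Set.toFinset_card]
  let e := Fintype.orderIsoFinOfCardEq S hcard
  refine ⟨fun i => (e i).1, ?_, ?_, ?_⟩
  · intro i j hij
    exact e.injective (Subtype.ext hij)
  · ext v
    constructor
    · rintro ⟨i, rfl⟩; exact (e i).2
    · intro hv
      exact ⟨e.symm ⟨v, hv⟩, by simp⟩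
  · intro i j hij
    have h1 : e i < e j := e.strictMono hij
    rcases h1.le with r | r
    · exact (h1.ne r).elim
    · exact r

lemma full_sub {A B : Set V} (hA : IsFullComponent G C A) (hB : IsFullComponent G C B)
    {v : V} (vA : v ∈ A) (vB : v ∈ B) : A ⊆ B := by
  intro w hw
  have := (Conn.of_connected hA.2.2.1) v vA w hw
  clear hw
  induction this with
  | refl => exact vB
  | tail _ h2 ih =>
    rcases hB.2.2.2.1 _ ih _ h2.1 with r | r
    · exact r
    · exact (Set.disjoint_left.1 hA.2.1 h2.2.2 r).elim

lemma mkCtx (hG : InClassC G) (hind : ∀ x ∈ C, ∀ y ∈ C, ¬G.Adj x y)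
    (hA : IsFullComponent G C A) (hB : IsFullComponent G C B) (hAB : A ≠ B) : Ctx G C A B := by
  obtain ⟨h1, h2, h3, -, h5⟩ := hG
  have dis : ∀ v ∈ A, v ∉ B := fun v hv hv' =>
    hAB (Set.Subset.antisymm (full_sub hA hB hv hv') (full_sub hB hA hv' hv))
  refine ⟨h1, h2, h3, h5, hind, fun v hv => Set.disjoint_left.1 hA.2.1 hv,
    fun v hv => Set.disjoint_left.1 hB.2.1 hv, dis, ?_⟩
  intro u hu v hv huv
  rcases hA.2.2.2.1 u hu v huv with r | r
  · exact dis v r hv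
  · exact Set.disjoint_left.1 hB.2.1 hv r

theorem main (G : SimpleGraph V) (hG : InClassC G)
    (C : Set V) (hcard : 2 ≤ C.ncard)
    (hind : ∀ x ∈ C, ∀ y ∈ C, ¬G.Adj x y)
    (A B : Set V) (hA : IsFullComponent G C A) (hB : IsFullComponent G C B) (hAB : A ≠ B) :
    ∃ x ∈ C, ∃ y ∈ C, x ≠ y ∧ ∃ (pA pB : G.Walk x y),
      IsInducedPathW G pA ∧ IsInducedPathW G pB ∧
      (∀ w ∈ pA.support, w ≠ x → w ≠ y → w ∈ A) ∧
      (∀ w ∈ pB.support, w ≠ x → w ≠ y → w ∈ B) ∧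
      (∀ c ∈ C, c ≠ x → c ≠ y →
        (∃ w ∈ pA.support, w ≠ x ∧ w ≠ y ∧ G.Adj c w) ∧
        (∃ w ∈ pB.support, w ≠ x ∧ w ≠ y ∧ G.Adj c w)) ∧
      (∃ (m q : ℕ) (g : ZMod m → V) (c : Fin (C.ncard - 2) → V),
        IsSpanWheel G (C.ncard - 2) m q g c ∧
        Set.range g = {w : V | w ∈ pA.support ∨ w ∈ pB.support} ∧
        g 0 = x ∧ g (q : ZMod m) = y ∧
        Set.range c = C \ {x, y}) := by
  have h0 := mkCtx hG hind hA hB hAB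
  obtain ⟨A', hA', mA⟩ := exists_minA hA.1 (Conn.of_connected hA.2.2.1) hA.2.2.2.2
  obtain ⟨B', hB', mB⟩ := exists_minA hB.1 (Conn.of_connected hB.2.2.1) hB.2.2.2.2
  have h := h0.mono hA' hB'
  obtain ⟨x, hx, y, hy, xy, ⟨n, p, pf, p0, pn, n2, pA, pS⟩, ⟨m, q, qf, q0, qm, m2, qB, qS⟩⟩ :=
    chooseEnds h mA mB hcard
  have H : HD G n m p q := mkHD h pf qf n2 m2 (p0.trans q0.symm) (pn.trans qm.symm) pA qB
  have bo : ∀ c ∈ C, c ≠ x → c ≠ y → Both G n m p q c := by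
    intro c hc cx cy
    refine ⟨by rw [p0]; exact hind _ hc _ hx, by rw [pn]; exact hind _ hc _ hy, ?_, ?_⟩
    · obtain ⟨a, ha, ca⟩ := mA.att c hc
      obtain ⟨i, i0, i1, rfl⟩ := pS a ha
      exact ⟨i, i0, i1, ca⟩
    · obtain ⟨a, ha, ca⟩ := mB.att c hc
      obtain ⟨i, i0, i1, rfl⟩ := qS a ha
      exact ⟨i, i0, i1, ca⟩
  have th : ∀ c ∈ C, c ≠ x → c ≠ y → Three G n m p q c := fun c hc cx cy =>
    three_of h H pA qB hc (p0 ▸ hx) (pn ▸ hy) (by rw [p0, pn]; exact xy) (p0 ▸ cx) (pn ▸ cy) (bo c hc cx cy)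
  have nr : ∀ c ∈ C, c ≠ x → c ≠ y → c ∉ Set.range (hf n m p q) := fun c hc cx cy =>
    notRange h H pA qB hc (p0 ▸ cx) (pn ▸ cy)
  have hS : ∀ c ∈ C \ {x, y}, c ∈ C ∧ c ≠ x ∧ c ≠ y := by
    rintro c ⟨h1, h2⟩
    simp only [Set.mem_insert_iff, Set.mem_singleton_iff, not_or] at h2
    exact ⟨h1, h2⟩
  have hk : (C \ {x, y}).ncard = C.ncard - 2 := by
    rw [Set.ncard_sdiff (by rintro w (rfl | rfl) <;> assumption) (Set.toFinite _), Set.ncard_pair xy]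
  obtain ⟨c, cinj, crange, cord⟩ := enum (C \ {x, y}) (Ord G n m p q)
    (fun u hu v hv w hw o1 o2 => by
      obtain ⟨v1, v2, v3⟩ := hS v hv
      exact Ord.trans (bo v v1 v2 v3) o1 o2)
    (fun u hu v hv uv o1 o2 => by
      obtain ⟨u1, u2, u3⟩ := hS u hu
      obtain ⟨v1, v2, v3⟩ := hS v hv
      exact Ord.antisymm H (bo u u1 u2 u3) (bo v v1 v2 v3) (th u u1 u2 u3) o1 o2)
    (fun u hu v hv uv => by
      obtain ⟨u1, u2, u3⟩ := hS u hu
      obtain ⟨v1, v2, v3⟩ := hS v hv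
      exact H.O1 h.hW uv (hind _ u1 _ v1) (nr u u1 u2 u3) (nr v v1 v2 v3) (bo u u1 u2 u3) (bo v v1 v2 v3)
        (th u u1 u2 u3) (th v v1 v2 v3)) hk
  have hc : ∀ i, c i ∈ C ∧ c i ≠ x ∧ c i ≠ y := fun i => hS _ (crange ▸ Set.mem_range_self i)
  have IA : IP G x y {v | ∃ i ≤ n, p i = v} := ⟨n, p, pf, p0, pn, fun v => Iff.rfl⟩
  have IB : IP G x y {v | ∃ i ≤ m, q i = v} := ⟨m, q, qf, q0, qm, fun v => Iff.rfl⟩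
  obtain ⟨wA, wA1, wA2⟩ := IA.walk
  obtain ⟨wB, wB1, wB2⟩ := IB.walk
  have f0 : hf n m p q 0 = x := by
    have := H.hf_nat (i := 0) (by omega)
    rw [hl_p (by omega), p0] at this
    simpa using this
  have fn : hf n m p q (n : ZMod (n + m)) = y := by
    rw [H.hf_nat (by omega), hl_p le_rfl, pn]
  refine ⟨x, hx, y, hy, xy, wA, wB, wA1, wB1, ?_, ?_, ?_, n + m, n, hf n m p q, c, ?_, ?_, f0, fn, crange⟩
  · intro w hw wx wy
    obtain ⟨i, hi, rfl⟩ := (wA2 w).1 hw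
    have a1 : i ≠ 0 := by rintro rfl; exact wx p0
    have a2 : i ≠ n := by rintro rfl; exact wy pn
    exact hA' (pA i (by omega) (by omega))
  · intro w hw wx wy
    obtain ⟨i, hi, rfl⟩ := (wB2 w).1 hw
    have a1 : i ≠ 0 := by rintro rfl; exact wx q0
    have a2 : i ≠ m := by rintro rfl; exact wy qm
    exact hB' (qB i (by omega) (by omega))
  · intro z hz zx zy
    have b := bo z hz zx zy
    constructor
    · obtain ⟨i, i0, i1, zi⟩ := b.a
      have := h.AC _ (pA i i0 i1)
      exact ⟨p i, (wA2 _).2 ⟨i, i1.le, rfl⟩, fun e => this (e ▸ hx), fun e => this (e ▸ hy), zi⟩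
    · obtain ⟨i, i0, i1, zi⟩ := b.b
      have := h.BC _ (qB i i0 i1)
      exact ⟨q i, (wB2 _).2 ⟨i, i1.le, rfl⟩, fun e => this (e ▸ hx), fun e => this (e ▸ hy), zi⟩
  · refine ⟨H.hole, n2, by omega, ?_, cinj, ?_, ?_, ?_, ?_, ?_, ?_, ?_, ?_, ?_⟩
    · rw [f0, fn]; exact hind _ hx _ hy
    · intro i; exact nr _ (hc i).1 (hc i).2.1 (hc i).2.2
    · intro i j _; exact hind _ (hc i).1 _ (hc j).1
    · intro i; rw [f0]; exact hind _ (hc i).1 _ hx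
    · intro i; rw [fn]; exact hind _ (hc i).1 _ hy
    · intro i; exact H.three (th _ (hc i).1 (hc i).2.1 (hc i).2.2)
    · intro i
      obtain ⟨a, a0, a1, ha⟩ := (bo _ (hc i).1 (hc i).2.1 (hc i).2.2).a
      exact ⟨a, a0, a1, by rwa [H.hf_nat (by omega), hl_p a1.le]⟩
    · intro i
      obtain ⟨a, a0, a1, ha⟩ := (bo _ (hc i).1 (hc i).2.1 (hc i).2.2).b
      exact ⟨n + m - a, by omega, by omega, by rwa [H.hf_nat (by omega), H.hl_q2 a1.le]⟩
    · intro i j hij a b ha hb u1 u2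
      rw [H.hf_nat (by omega), hl_p (by omega)] at u1 u2
      exact (cord i j hij).1 a b ha hb u1 u2
    · intro i j hij a b ha ha' hb hb' u1 u2
      rw [H.hf_nat (by omega), H.hl_q (by omega)] at u1 u2
      have := (cord i j hij).2 _ _ (by omega) (by omega) u1 u2
      omega
  · ext w
    rw [H.range]
    exact ((wA2 w).symm.or (wB2 w).symm)

end
end S10

/-- Let `G ∈ 𝒞`, let `C` be a minimal separator of size at least 2 that is
an independent set and let `A, B` be distinct components of `G ∖ C` full to `C`. Then there
are `x, y ∈ C` and chordless paths `P_A`, `P_B` as in Statement 9 such that moreover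
`V(P_A) ∪ V(P_B)` induces a hole `H` and `(H, C ∖ {x,y})` is a `(|C|-2)`-span-wheel. -/
theorem statement10 (G : SimpleGraph V) (hG : InClassC G)
    (C : Set V) (hmin : MinSeparator G C) (hcard : 2 ≤ C.ncard)
    (hind : ∀ x ∈ C, ∀ y ∈ C, ¬G.Adj x y)
    (A B : Set V) (hA : IsFullComponent G C A) (hB : IsFullComponent G C B) (hAB : A ≠ B) :
    ∃ x ∈ C, ∃ y ∈ C, x ≠ y ∧ ∃ (pA pB : G.Walk x y),
      IsInducedPathW G pA ∧ IsInducedPathW G pB ∧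
      (∀ w ∈ pA.support, w ≠ x → w ≠ y → w ∈ A) ∧
      (∀ w ∈ pB.support, w ≠ x → w ≠ y → w ∈ B) ∧
      (∀ c ∈ C, c ≠ x → c ≠ y →
        (∃ w ∈ pA.support, w ≠ x ∧ w ≠ y ∧ G.Adj c w) ∧
        (∃ w ∈ pB.support, w ≠ x ∧ w ≠ y ∧ G.Adj c w)) ∧
      (∃ (m q : ℕ) (g : ZMod m → V) (c : Fin (C.ncard - 2) → V),
        IsSpanWheel G (C.ncard - 2) m q g c ∧
        Set.range g = {w : V | w ∈ pA.support ∨ w ∈ pB.support} ∧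
        g 0 = x ∧ g (q : ZMod m) = y ∧
        Set.range c = C \ {x, y}) := by
  exact S10.main G hG C hcard hind A B hA hB hAB
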